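/- arXiv:2003.13125 — 2 statements merged into one kernel-verified Lean document; each statement's English description precedes it below -/
import Mathlib

section
/- For every n ≥ 1, the covering type of the n-torus T^n satisfies ct(T^n) ≥ (n+1)(n+2)/2; that is, for every topological space Y homotopy equivalent to T^n and every good cover U of Y, U has at least (n+1)(n+2)/2 members. -/
/-- A good cover of `Y`: a finite family of open subsets covering `Y` such that every
nonempty intersection of (finitely many) members is contractible. -/
def IsGoodCover {Y : Type*} [TopologicalSpace Y] (U : Finset (Set Y)) : Prop :=
  (∀ s ∈ U, IsOpen s) ∧ (⋃₀ (U : Set (Set Y)) = Set.univ) ∧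
    ∀ T ⊆ U, T.Nonempty → (⋂₀ (T : Set (Set Y))).Nonempty →
      ContractibleSpace ↥(⋂₀ (T : Set (Set Y)))

/-
Let `U` be a good cover of `Y` and let `φ : T ^ n → Y` be a homotopy equivalence. Each coordinate
`T ^ n → S ^ 1`, viewed as a map on `Y`, has a continuous logarithm on every member of `U`, and also
on the union of the members through a given point. If `U` had fewer than `(n + 1) (n + 2) / 2`
members, then by induction on `n` one could cover `Y` by `n` open sets, the `i`-th of which carries
a logarithm of the `i`-th coordinate: either `n + 1` members have a common point, and their union is
split off, or no `n + 1` members do, and grouping the vertices of the barycentric subdivision of the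
nerve by dimension gives `n` open sets, each a disjoint union of subsets of members.

Pull these sets back to the torus and divide the `i`-th coordinate by the exponential of a global
extension of its logarithm. The resulting self-map of the torus is homotopic to the identity, but
its lift to `ℝ ^ n` has a locally constant component near every point. A smoothing of the lift then
has Jacobian `0` everywhere, although the Jacobian of the lift of a map homotopic to the identity
integrates to the volume of a fundamental domain.
-/

open Set

section Logarithms

variable {X Y : Type*} [TopologicalSpace X] [TopologicalSpace Y]

/-- `f` has a continuous real logarithm on `A`. The logarithm is encoded as a total function whose
values outside `A` are irrelevant. -/
def HasLogOn (f : X → Circle) (A : Set X) : Prop :=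
  ∃ g : X → ℝ, ContinuousOn g A ∧ EqOn (Circle.exp ∘ g) f A

theorem hasLogOn_iff_exists_continuousMap {f : X → Circle} {A : Set X} :
    HasLogOn f A ↔ ∃ g : C(A, ℝ), ∀ x, Circle.exp (g x) = f x := by
  constructor
  · rintro ⟨g, hg, hgf⟩
    exact ⟨⟨A.domRestrict g, hg.domRestrict⟩, fun x => hgf x.2⟩
  · rintro ⟨g, hgf⟩
    have hext (x : A) : Subtype.val.extend g 0 x.1 = g x := Subtype.val_injective.extend_apply g 0 x
    refine ⟨Subtype.val.extend g 0, ?_, fun x hx => ?_⟩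
    · exact continuousOn_iff_continuous_domRestrict.2 (g.continuous.congr fun x => (hext x).symm)
    · rw [Function.comp_apply, hext ⟨x, hx⟩, hgf]

theorem exists_eq_mul_circleExp_of_homotopic {f₀ f₁ : C(X, Circle)} (h : f₀.Homotopic f₁) :
    ∃ u : C(X, ℝ), ∀ x, f₁ x = f₀ x * Circle.exp (u x) := by
  obtain ⟨H⟩ := h
  let K : C(unitInterval × X, Circle) := ⟨fun p => (f₀ p.2)⁻¹ * H p, by fun_prop⟩
  have hK (x : X) : K (0, x) = Circle.exp (ContinuousMap.const X (0 : ℝ) x) := by simp [K]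
  let G := Circle.isCoveringMap_exp.liftHomotopy K (ContinuousMap.const X 0) hK
  have hG (x : X) : Circle.exp (G (1, x)) = (f₀ x)⁻¹ * f₁ x :=
    (congrFun (Circle.isCoveringMap_exp.liftHomotopy_lifts K _ hK) (1, x)).trans (by simp [K])
  exact ⟨⟨fun x => G (1, x), by fun_prop⟩, fun x => by simp [hG]⟩

theorem hasLogOn_of_nullhomotopic {A : Set X}
    (hA : ((ContinuousMap.id X).restrict A).Nullhomotopic) (f : C(X, Circle)) : HasLogOn f A := by
  obtain ⟨z, hz⟩ := hA.comp_right f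
  obtain ⟨u, hu⟩ := exists_eq_mul_circleExp_of_homotopic hz.symm
  refine hasLogOn_iff_exists_continuousMap.2 ⟨.const A (Complex.arg z) + u, fun x => ?_⟩
  simpa [Circle.exp_add] using (hu x).symm

theorem hasLogOn_iUnion {ι : Type*} {f : X → Circle} {A : ι → Set X} (hA : ∀ i, IsOpen (A i))
    {g : ι → X → ℝ} (hg : ∀ i, ContinuousOn (g i) (A i))
    (hgf : ∀ i, EqOn (Circle.exp ∘ g i) f (A i))
    (hgg : ∀ i j, EqOn (g i) (g j) (A i ∩ A j)) : HasLogOn f (⋃ i, A i) := by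
  classical
  let G : X → ℝ := fun x => if h : ∃ i, x ∈ A i then g h.choose x else 0
  have hG (i : ι) : EqOn G (g i) (A i) := fun x hx => by
    have h : ∃ j, x ∈ A j := ⟨i, hx⟩
    simpa only [G, dif_pos h] using hgg _ _ ⟨h.choose_spec, hx⟩
  refine ⟨G, .iUnion_of_isOpen (fun i => (hg i).congr (hG i)) hA, fun x hx => ?_⟩
  obtain ⟨i, hi⟩ := mem_iUnion.1 hx
  rw [Function.comp_apply, hG i hi]
  exact hgf i hi

namespace HasLogOn

theorem comp {f : Y → Circle} {A : Set Y} (hf : HasLogOn f A) {φ : X → Y} {B : Set X}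
    (hφ : ContinuousOn φ B) (hBA : MapsTo φ B A) : HasLogOn (f ∘ φ) B := by
  obtain ⟨g, hg, hgf⟩ := hf
  exact ⟨g ∘ φ, hg.comp hφ hBA, hgf.comp_right hBA⟩

theorem mono {f : X → Circle} {A B : Set X} (hf : HasLogOn f A) (hBA : B ⊆ A) : HasLogOn f B :=
  hf.comp continuousOn_id hBA

theorem of_homotopic {f₀ f₁ : C(X, Circle)} {A : Set X} (hf : HasLogOn f₀ A)
    (h : f₀.Homotopic f₁) : HasLogOn f₁ A := by
  obtain ⟨g, hg, hgf⟩ := hf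
  obtain ⟨u, hu⟩ := exists_eq_mul_circleExp_of_homotopic h
  refine ⟨g + u, hg.add u.continuous.continuousOn, fun x hx => ?_⟩
  rw [hu, ← hgf hx]
  exact Circle.exp_add _ _

theorem exists_continuousMap_of_isClosed [NormalSpace X] {f : X → Circle} {A : Set X}
    (hf : HasLogOn f A) (hA : IsClosed A) : ∃ g : C(X, ℝ), EqOn (Circle.exp ∘ g) f A := by
  obtain ⟨g, hg⟩ := hasLogOn_iff_exists_continuousMap.1 hf
  obtain ⟨G, hG⟩ := g.exists_restrict_eq hA
  exact ⟨G, fun x hx => (congrArg Circle.exp (DFunLike.congr_fun hG ⟨x, hx⟩)).trans (hg _)⟩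

theorem exists_log_apply_eq {f : X → Circle} {A : Set X} (hf : HasLogOn f A) {p : X} (hp : p ∈ A)
    {r : ℝ} (hr : Circle.exp r = f p) :
    ∃ g : X → ℝ, ContinuousOn g A ∧ EqOn (Circle.exp ∘ g) f A ∧ g p = r := by
  obtain ⟨g, hg, hgf⟩ := hf
  refine ⟨fun x => g x + (r - g p), hg.add continuousOn_const, fun x hx => ?_, by ring⟩
  have hx' : Circle.exp (g x) = f x := hgf hx
  have hp' : Circle.exp (g p) = f p := hgf hp
  simp [Circle.exp_add, Circle.exp_sub, hx', hp', hr]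

theorem iUnion_of_disjoint {ι : Type*} {f : X → Circle} {A : ι → Set X} (hA : ∀ i, IsOpen (A i))
    (hdisj : Pairwise (Function.onFun Disjoint A)) (hf : ∀ i, HasLogOn f (A i)) :
    HasLogOn f (⋃ i, A i) := by
  choose g hg hgf using hf
  refine hasLogOn_iUnion hA hg hgf fun i j x ⟨hi, hj⟩ => ?_
  rw [hdisj.eq (not_disjoint_iff.2 ⟨x, hi, hj⟩)]

-- Logarithms that agree at the common point agree on every (connected) pairwise intersection.
theorem iUnion_of_mem {ι : Type*} {f : X → Circle} {A : ι → Set X} (hA : ∀ i, IsOpen (A i))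
    {p : X} (hp : ∀ i, p ∈ A i) (hconn : ∀ i j, IsPreconnected (A i ∩ A j))
    (hf : ∀ i, HasLogOn f (A i)) : HasLogOn f (⋃ i, A i) := by
  choose g hg hgf hgp using fun i => (hf i).exists_log_apply_eq (hp i) (Circle.exp_arg (f p))
  refine hasLogOn_iUnion hA hg hgf fun i j => ?_
  exact Circle.isCoveringMap_exp.eqOn_of_comp_eqOn (hconn i j) ((hg i).mono inter_subset_left)
    ((hg j).mono inter_subset_right) (fun x hx => (hgf i hx.1).trans (hgf j hx.2).symm)
    ⟨hp i, hp j⟩ ((hgp i).trans (hgp j).symm)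

end HasLogOn

end Logarithms

section CoverRefinement

open scoped Finset

variable {ι X R : Type*} [LinearOrder R] [Zero R]

/-- The open star of the vertex `τ` in the barycentric subdivision: where the functions `ψ s`,
`s ∈ S`, are the (unnormalized) barycentric coordinates of `X`, the points at which those with
`s ∈ τ` are positive and exceed all the others. -/
def barycentricStar (ψ : ι → X → R) (S τ : Finset ι) : Set X :=
  {x | ∀ s ∈ τ, 0 < ψ s x ∧ ∀ t ∈ S, t ∉ τ → ψ t x < ψ s x}

theorem isOpen_barycentricStar [TopologicalSpace X] [TopologicalSpace R] [OrderTopology R]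
    {ψ : ι → X → R} (hψ : ∀ s, Continuous (ψ s)) (S τ : Finset ι) :
    IsOpen (barycentricStar ψ S τ) := by
  simp only [barycentricStar, ofPred_forall, ofPred_and]
  refine isOpen_biInter_finset fun s _ => (isOpen_lt continuous_const (hψ s)).inter ?_
  exact isOpen_biInter_finset fun t _ => isOpen_iInter_of_finite fun _ => isOpen_lt (hψ t) (hψ s)

theorem disjoint_barycentricStar (ψ : ι → X → R) {S τ τ' : Finset ι} (hτ : τ ⊆ S) (hτ' : τ' ⊆ S)
    (hcard : #τ = #τ') (hne : τ ≠ τ') :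
    Disjoint (barycentricStar ψ S τ) (barycentricStar ψ S τ') := by
  obtain ⟨s, hs, hs'⟩ := Finset.not_subset.1 fun h =>
    hne (Finset.eq_of_subset_of_card_le h hcard.ge)
  obtain ⟨t, ht, ht'⟩ := Finset.not_subset.1 fun h =>
    hne (Finset.eq_of_subset_of_card_le h hcard.le).symm
  refine disjoint_left.2 fun x hx hx' => lt_asymm ?_ ((hx s hs).2 t (hτ' ht) ht')
  exact (hx' t ht).2 s (hτ hs) hs'

theorem exists_mem_barycentricStar (ψ : ι → X → R) {S : Finset ι} {s : ι} (hs : s ∈ S) {x : X}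
    (hx : 0 < ψ s x) : ∃ τ ⊆ S, τ.Nonempty ∧ x ∈ barycentricStar ψ S τ := by
  obtain ⟨m, hmS, hmax⟩ := S.exists_max_image (ψ · x) ⟨s, hs⟩
  refine ⟨{t ∈ S | ψ t x = ψ m x}, S.filter_subset _, ⟨m, by simp [hmS]⟩, fun t ht => ?_⟩
  rw [(Finset.mem_filter.1 ht).2]
  refine ⟨hx.trans_le (hmax s hs), fun r hr hrm => (hmax r hr).lt_of_ne fun h => hrm ?_⟩
  exact Finset.mem_filter.2 ⟨hr, h⟩

end CoverRefinement

section CoverByLogarithmDomains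

open scoped Finset ENNReal

variable {ι X : Type*} [PseudoEMetricSpace X] {A : ι → Set X}

theorem exists_cover_hasLogOn_of_card_le (hA : ∀ s, IsOpen (A s)) {S : Finset ι} {k : ℕ}
    (hk : ∀ τ ⊆ S, (⋂ s ∈ τ, A s).Nonempty → #τ ≤ k) {f : Fin k → X → Circle}
    (hf : ∀ i s, HasLogOn (f i) (A s)) :
    ∃ O : Fin k → Set X, (∀ i, IsOpen (O i)) ∧ ⋃ s ∈ S, A s ⊆ ⋃ i, O i ∧
      ∀ i, HasLogOn (f i) (O i) := by
  let ψ : ι → X → ℝ≥0∞ := fun s x => Metric.infEDist x (A s)ᶜ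
  have hψ (s x) : 0 < ψ s x ↔ x ∈ A s := by
    rw [Metric.infEDist_pos_iff_notMem_closure, (hA s).isClosed_compl.closure_eq, notMem_compl_iff]
  let W : Finset ι → Set X := barycentricStar ψ S
  have hW (τ) : IsOpen (W τ) := isOpen_barycentricStar (fun _ => Metric.continuous_infEDist) S τ
  have hWA {τ : Finset ι} {s} (hs : s ∈ τ) : W τ ⊆ A s := fun x hx => (hψ s x).1 (hx s hs).1
  refine ⟨fun i => ⋃ τ : {τ : Finset ι // τ ⊆ S ∧ #τ = i + 1}, W τ,
    fun i => isOpen_iUnion fun τ => hW τ, fun x hx => ?_, fun i => ?_⟩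
  · obtain ⟨s, hs, hxs⟩ := mem_iUnion₂.1 hx
    obtain ⟨τ, hτS, hτ, hxτ⟩ := exists_mem_barycentricStar ψ hs ((hψ s x).2 hxs)
    have hτk : #τ ≤ k := hk τ hτS ⟨x, mem_iInter₂.2 fun s hs => hWA hs hxτ⟩
    have hτ0 : 0 < #τ := hτ.card_pos
    exact mem_iUnion.2 ⟨⟨#τ - 1, by lia⟩, mem_iUnion.2 ⟨⟨τ, hτS, by simp only; lia⟩, hxτ⟩⟩
  · refine HasLogOn.iUnion_of_disjoint (fun τ => hW τ) (fun τ τ' hne => ?_) fun ⟨τ, hτS, hτ⟩ => ?_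
    · exact disjoint_barycentricStar ψ τ.2.1 τ'.2.1 (τ.2.2.trans τ'.2.2.symm)
        (Subtype.coe_injective.ne hne)
    · obtain ⟨s, hs⟩ : τ.Nonempty := Finset.card_pos.1 (by lia)
      exact (hf i s).mono (hWA hs)

/- Induction on `k`: either some `k + 2` members have a common point, and their union is the last
set, or every point lies in at most `k + 1` members, and the cover is refined by dimension. -/
theorem exists_cover_hasLogOn_of_two_mul_card_lt (hA : ∀ s, IsOpen (A s)) {k : ℕ} {S : Finset ι}
    (hS : 2 * #S < (k + 1) * (k + 2)) {f : Fin k → X → Circle}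
    (hf : ∀ i s, HasLogOn (f i) (A s))
    (hf' : ∀ i (σ : Finset ι), (⋂ s ∈ σ, A s).Nonempty → HasLogOn (f i) (⋃ s ∈ σ, A s)) :
    ∃ O : Fin k → Set X, (∀ i, IsOpen (O i)) ∧ ⋃ s ∈ S, A s ⊆ ⋃ i, O i ∧
      ∀ i, HasLogOn (f i) (O i) := by
  classical
  induction k generalizing S with
  | zero =>
    obtain rfl : S = ∅ := Finset.card_eq_zero.1 (by lia)
    exact ⟨fun _ => ∅, nofun, by simp, nofun⟩
  | succ k ih =>
    by_cases hσ : ∃ σ ⊆ S, (⋂ s ∈ σ, A s).Nonempty ∧ k + 2 ≤ #σ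
    · obtain ⟨σ, hσS, hσne, hσk⟩ := hσ
      have hcard : 2 * #(S \ σ) < (k + 1) * (k + 2) := by
        have := Finset.card_sdiff_add_card_eq_card hσS
        linarith
      obtain ⟨O, hO, hcov, hlog⟩ := ih hcard (fun i => hf i.castSucc) fun i => hf' i.castSucc
      refine ⟨Fin.snoc O (⋃ s ∈ σ, A s), Fin.forall_fin_succ'.2 ⟨?_, ?_⟩, fun x hx => ?_,
        Fin.forall_fin_succ'.2 ⟨?_, ?_⟩⟩
      · simpa using hO
      · rw [Fin.snoc_last]
        exact isOpen_biUnion fun s (_ : s ∈ (σ : Set ι)) => hA s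
      · obtain ⟨s, hs, hxs⟩ := mem_iUnion₂.1 hx
        by_cases hsσ : s ∈ σ
        · exact mem_iUnion.2 ⟨Fin.last k, by simpa using ⟨s, hsσ, hxs⟩⟩
        · obtain ⟨i, hi⟩ := mem_iUnion.1 <|
            hcov (mem_biUnion (Finset.mem_sdiff.2 ⟨hs, hsσ⟩) hxs)
          exact mem_iUnion.2 ⟨i.castSucc, by simpa using hi⟩
      · simpa using hlog
      · simpa using hf' (Fin.last k) σ hσne
    · push Not at hσ
      exact exists_cover_hasLogOn_of_card_le hA (fun τ hτ hne => Nat.lt_succ_iff.1 (hσ τ hτ hne)) hf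

end CoverByLogarithmDomains

section PolynomialFamilies

open Polynomial
open scoped Finset

theorem exists_polynomial_eval_eq_det_add_smul {K V : Type*} [Field K] [AddCommGroup V]
    [Module K V] [FiniteDimensional K V] (f g : V →ₗ[K] V) :
    ∃ p : K[X], p.natDegree ≤ Module.finrank K V ∧ ∀ t, p.eval t = LinearMap.det (f + t • g) := by
  let B := Module.finBasis K V
  let F := LinearMap.toMatrix B B f
  let G := LinearMap.toMatrix B B g
  refine ⟨((X : K[X]) • G.map C + F.map C).det, ?_, fun t => ?_⟩
  · simpa using natDegree_det_X_add_C_le G F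
  · rw [← coe_evalRingHom, RingHom.map_det, ← LinearMap.det_toMatrix B]
    congr 1
    ext i j
    simp [F, G, add_comm, mul_comm t]

theorem integral_eval_eq_of_forall_mem {α : Type*} [MeasurableSpace α] {μ : MeasureTheory.Measure α}
    {P : α → ℝ[X]} {s : Finset ℝ} (hs : s.Nonempty) (hdeg : ∀ y, (P y).degree < #s) {c : ℝ}
    (hint : ∀ t ∈ s, MeasureTheory.Integrable (fun y => (P y).eval t) μ)
    (hc : ∀ t ∈ s, ∫ y, (P y).eval t ∂μ = c) (t : ℝ) : ∫ y, (P y).eval t ∂μ = c := by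
  have hinj : InjOn (id : ℝ → ℝ) s := injOn_id _
  have hinterp (y) : (P y).eval t = ∑ r ∈ s, (P y).eval r * (Lagrange.basis s id r).eval t := by
    conv_lhs => rw [Lagrange.eq_interpolate hinj (hdeg y), Lagrange.interpolate_apply]
    simp [eval_finsetSum]
  calc ∫ y, (P y).eval t ∂μ
      = ∑ r ∈ s, (∫ y, (P y).eval r ∂μ) * (Lagrange.basis s id r).eval t := by
        simp_rw [hinterp]
        rw [MeasureTheory.integral_finsetSum _ fun r hr => (hint r hr).mul_const _]
        simp_rw [MeasureTheory.integral_mul_const]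
    _ = c * (∑ r ∈ s, Lagrange.basis s id r).eval t := by
        rw [eval_finsetSum, Finset.mul_sum]
        exact Finset.sum_congr rfl fun r hr => by rw [hc r hr]
    _ = c := by rw [Lagrange.sum_basis hinj hs, eval_one, mul_one]

end PolynomialFamilies

section PeriodicPerturbations

open MeasureTheory Module Submodule Filter
open scoped NNReal Topology Finset

theorem measure_image_eq_of_vadd_equivariant {G α : Type*} [AddGroup G] [Countable G]
    [AddAction G α] [MeasurableSpace α] [MeasurableConstVAdd G α] {μ : Measure α}
    [VAddInvariantMeasure G α μ] {s : Set α} (hs : MeasurableSet s)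
    (hs_unique : ∀ x, ∃! g : G, g +ᵥ x ∈ s) (e : α ≃ᵐ α)
    (he : ∀ (g : G) (x : α), e (g +ᵥ x) = g +ᵥ e x) : μ (e '' s) = μ s := by
  have hs_dom : IsAddFundamentalDomain G s μ := .mk' hs.nullMeasurableSet hs_unique
  have hes_dom : IsAddFundamentalDomain G (e '' s) μ := by
    refine .mk' (e.measurableSet_image.2 hs).nullMeasurableSet fun x => ?_
    have hmem (g : G) : g +ᵥ x ∈ e '' s ↔ g +ᵥ e.symm x ∈ s := by
      rw [← e.injective.mem_set_image (s := s), he, e.apply_symm_apply]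
    simpa only [hmem] using hs_unique (e.symm x)
  exact hes_dom.measure_eq hs_dom

theorem det_one_add_pos_of_norm_lt_one {E : Type*} [NormedAddCommGroup E] [NormedSpace ℝ E]
    [FiniteDimensional ℝ E] {B : E →L[ℝ] E} (hB : ‖B‖ < 1) : 0 < (1 + B).det := by
  have : CompleteSpace E := FiniteDimensional.complete ℝ E
  let d : ℝ → ℝ := fun t => (1 + t • B).det
  have hd : Continuous d := ContinuousLinearMap.continuous_det.comp (by fun_prop)
  have hd_ne : ∀ t ∈ Icc (0 : ℝ) 1, d t ≠ 0 := fun t ht => by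
    have hunit : IsUnit (1 + t • B) := by
      rw [← sub_neg_eq_add]
      refine isUnit_one_sub_of_norm_lt_one ?_
      rw [norm_neg, norm_smul, Real.norm_of_nonneg ht.1]
      exact (mul_le_of_le_one_left (norm_nonneg B) ht.2).trans_lt hB
    exact ((hunit.map ContinuousLinearMap.toLinearMapRingHom).map LinearMap.det).ne_zero
  have hd0 : d 0 = 1 := by simp [d, ContinuousLinearMap.det]
  have hd1 : d 1 = (1 + B).det := by simp [d]
  by_contra! hneg
  obtain ⟨t, ht, hdt⟩ := intermediate_value_Icc' zero_le_one hd.continuousOn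
    (show (0 : ℝ) ∈ Icc (d 1) (d 0) from ⟨hd1 ▸ hneg, hd0 ▸ zero_le_one⟩)
  exact hd_ne t ht hdt

theorem exists_homeomorph_eq_add_of_lipschitzWith_lt_one {E : Type*} [NormedAddCommGroup E]
    [NormedSpace ℝ E] [CompleteSpace E] {u : E → E} {K : ℝ≥0} (hK : K < 1)
    (hu : LipschitzWith K u) : ∃ H : E ≃ₜ E, ∀ y, H y = y + u y := by
  have happrox : ApproximatesLinearOn (fun y => y + u y)
      (ContinuousLinearEquiv.refl ℝ E : E →L[ℝ] E) univ K := fun x _ y _ => by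
    simpa [add_sub_add_comm] using hu.norm_sub_le x y
  refine ⟨happrox.toHomeomorph _ ?_, fun y => rfl⟩
  refine (subsingleton_or_nontrivial E).imp_right fun (_ : Nontrivial E) => ?_
  have : ‖((ContinuousLinearEquiv.refl ℝ E).symm : E →L[ℝ] E)‖₊ = 1 :=
    ContinuousLinearMap.nnnorm_id
  rwa [this, inv_one]

theorem periodic_of_mem_span_int {E F : Type*} [AddCommGroup E] {s : Set E} {f : E → F}
    (hf : ∀ v ∈ s, Function.Periodic f v) {v : E} (hv : v ∈ span ℤ s) : Function.Periodic f v := by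
  induction hv using span_induction with
  | mem v hv => exact hf v hv
  | zero => exact Function.periodic_with_period_zero f
  | add v w _ _ hv hw => exact hv.add_period hw
  | smul n v _ hv => exact hv.zsmul n

variable {ι E F : Type*} [Finite ι] [NormedAddCommGroup E] [NormedSpace ℝ E] (b : Basis ι ℝ E)

theorem exists_forall_norm_le_of_periodic [SeminormedAddCommGroup F] {f : E → F}
    (hf : Continuous f) (hper : ∀ i, Function.Periodic f (b i)) : ∃ C, ∀ y, ‖f y‖ ≤ C := by
  cases nonempty_fintype ι
  have : FiniteDimensional ℝ E := b.finiteDimensional_of_finite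
  have : ProperSpace E := FiniteDimensional.proper ℝ E
  obtain ⟨C, hC⟩ := (ZSpan.fundamentalDomain_isBounded b).isCompact_closure
    |>.exists_bound_of_continuousOn hf.continuousOn
  refine ⟨C, fun y => ?_⟩
  have hfract : f (ZSpan.fract b y) = f y :=
    (periodic_of_mem_span_int (forall_mem_range.2 hper) (ZSpan.floor b y).2).sub_eq y
  exact hfract ▸ hC _ (subset_closure (ZSpan.fract_mem_fundamentalDomain b y))

theorem exists_lipschitzWith_of_periodic [NormedAddCommGroup F] [NormedSpace ℝ F] {u : E → F}
    (hu : ContDiff ℝ 1 u) (hper : ∀ i, Function.Periodic u (b i)) : ∃ K, LipschitzWith K u := by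
  have hper' (i) : Function.Periodic (fderiv ℝ u) (b i) := fun y => by
    rw [← fderiv_comp_add_right, (hper i).funext]
  obtain ⟨C, hC⟩ :=
    exists_forall_norm_le_of_periodic b (hu.continuous_fderiv one_ne_zero) hper'
  refine ⟨C.toNNReal, lipschitzWith_of_nnnorm_fderiv_le (hu.differentiable one_ne_zero) fun y => ?_⟩
  exact NNReal.le_toNNReal_of_coe_le (hC y)

section Integration

variable [MeasurableSpace E] [BorelSpace E] (μ : Measure E) [μ.IsAddHaarMeasure]

theorem measureReal_fundamentalDomain_ne_zero : μ.real (ZSpan.fundamentalDomain b) ≠ 0 := by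
  cases nonempty_fintype ι
  have : FiniteDimensional ℝ E := b.finiteDimensional_of_finite
  have : ProperSpace E := FiniteDimensional.proper ℝ E
  exact (measureReal_ne_zero_iff (ZSpan.fundamentalDomain_isBounded b).measure_lt_top.ne).2
    (ZSpan.measure_fundamentalDomain_ne_zero b)

theorem setIntegral_det_one_add_fderiv_of_lipschitzWith_lt_one {u : E → E} {K : ℝ≥0} (hK : K < 1)
    (hu : Differentiable ℝ u) (hlip : LipschitzWith K u)
    (hper : ∀ i, Function.Periodic u (b i)) :
    ∫ y in ZSpan.fundamentalDomain b, (1 + fderiv ℝ u y).det ∂μ =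
      μ.real (ZSpan.fundamentalDomain b) := by
  have : FiniteDimensional ℝ E := b.finiteDimensional_of_finite
  have : CompleteSpace E := FiniteDimensional.complete ℝ E
  set D := ZSpan.fundamentalDomain b
  have hD : MeasurableSet D := ZSpan.fundamentalDomain_measurableSet b
  obtain ⟨H, hH⟩ := exists_homeomorph_eq_add_of_lipschitzWith_lt_one hK hlip
  have hvol : μ (H '' D) = μ D := by
    have : VAddInvariantMeasure (span ℤ (range b)) E μ :=
      inferInstanceAs (VAddInvariantMeasure (span ℤ (range b)).toAddSubgroup E μ)
    refine measure_image_eq_of_vadd_equivariant hD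
      (ZSpan.exist_unique_vadd_mem_fundamentalDomain b) H.toMeasurableEquiv fun v y => ?_
    have hv := periodic_of_mem_span_int (forall_mem_range.2 hper) v.2 y
    simp only [Homeomorph.toMeasurableEquiv_coe, hH, Submodule.vadd_def, vadd_eq_add]
    rw [add_comm (v : E) y, hv]
    abel
  have hderiv (y : E) : HasFDerivAt H (1 + fderiv ℝ u y) y := by
    rw [show ⇑H = fun y => y + u y from funext hH]
    exact (hasFDerivAt_id y).add (hu y).hasFDerivAt
  have hpos (y : E) : 0 < (1 + fderiv ℝ u y).det :=
    det_one_add_pos_of_norm_lt_one ((norm_fderiv_le_of_lipschitz ℝ hlip).trans_lt hK)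
  have hcov := integral_image_eq_integral_abs_det_fderiv_smul μ hD
    (fun y _ => (hderiv y).hasFDerivWithinAt) H.injective.injOn fun _ => (1 : ℝ)
  simp only [abs_of_pos (hpos _), smul_eq_mul, mul_one, setIntegral_const] at hcov
  rw [← hcov, Measure.real, hvol, Measure.real]

/- The degree of `id + u` on the torus `E / ⟨b⟩` is `1`: for `t • u` in place of `u` the integral is
a polynomial in `t`, and for small `t` the map `id + t • u` is a homeomorphism. -/
theorem setIntegral_det_one_add_fderiv {u : E → E} {K : ℝ≥0} (hu : Differentiable ℝ u)
    (hlip : LipschitzWith K u) (hper : ∀ i, Function.Periodic u (b i)) :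
    ∫ y in ZSpan.fundamentalDomain b, (1 + fderiv ℝ u y).det ∂μ =
      μ.real (ZSpan.fundamentalDomain b) := by
  have : FiniteDimensional ℝ E := b.finiteDimensional_of_finite
  set D := ZSpan.fundamentalDomain b
  have hD : μ.real D ≠ 0 := measureReal_fundamentalDomain_ne_zero b μ
  choose P hPdeg hP using fun y =>
    exists_polynomial_eval_eq_det_add_smul (1 : E →ₗ[ℝ] E) (fderiv ℝ u y : E →ₗ[ℝ] E)
  have hsmall : ∀ t ∈ Ioo 0 (K + 1 : ℝ)⁻¹, ∫ y in D, (P y).eval t ∂μ = μ.real D := by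
    intro t ht
    have hlip' : LipschitzWith (‖t‖₊ * K) (t • u) := (lipschitzWith_smul t).comp hlip
    have hlt : ‖t‖₊ * K < 1 := by
      rw [← NNReal.coe_lt_coe, NNReal.coe_mul, coe_nnnorm, Real.norm_of_nonneg ht.1.le,
        NNReal.coe_one]
      calc t * K ≤ t * (K + 1) := mul_le_mul_of_nonneg_left (by linarith) ht.1.le
        _ < 1 := (lt_mul_inv_iff₀ (by positivity)).1 ((one_mul (K + 1 : ℝ)⁻¹).symm ▸ ht.2)
    simpa [hP, fderiv_const_smul (hu _), ContinuousLinearMap.det] using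
      setIntegral_det_one_add_fderiv_of_lipschitzWith_lt_one b μ hlt (hu.const_smul t) hlip'
        fun i => (hper i).smul t
  have hinf : (Ioo 0 (K + 1 : ℝ)⁻¹).Infinite := Ioo_infinite (by positivity)
  obtain ⟨s, hs, hcard⟩ := hinf.exists_subset_card_eq (finrank ℝ E + 1)
  have hsne : s.Nonempty := Finset.card_pos.1 (by lia)
  have hdeg (y) : (P y).degree < #s := by
    have hlt : (P y).natDegree < #s := hcard ▸ Nat.lt_succ_of_le (hPdeg y)
    exact Polynomial.degree_le_natDegree.trans_lt (by exact_mod_cast hlt)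
  have hint : ∀ t ∈ s, Integrable (fun y => (P y).eval t) (μ.restrict D) := fun t ht =>
    .of_integral_ne_zero (hsmall t (hs ht) ▸ hD)
  simpa [hP, ContinuousLinearMap.det] using
    integral_eval_eq_of_forall_mem hsne hdeg hint (fun t ht => hsmall t (hs ht)) 1

end Integration

theorem exists_det_fderiv_ne_zero {h : E → E} (hh : ContDiff ℝ 1 h)
    (hb : ∀ i y, h (y + b i) = h y + b i) : ∃ y, (fderiv ℝ h y).det ≠ 0 := by
  have : FiniteDimensional ℝ E := b.finiteDimensional_of_finite
  borelize E
  let u : E → E := fun y => h y - y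
  have hu : ContDiff ℝ 1 u := hh.sub contDiff_id
  have hper (i) : Function.Periodic u (b i) := fun y => by
    simp only [u, hb]
    abel
  obtain ⟨K, hlip⟩ := exists_lipschitzWith_of_periodic b hu hper
  have hdiff := hu.differentiable one_ne_zero
  have hderiv (y : E) : 1 + fderiv ℝ u y = fderiv ℝ h y := by
    rw [fderiv_fun_sub (hh.differentiable one_ne_zero y) differentiableAt_fun_id, fderiv_fun_id]
    exact add_sub_cancel _ _
  have hint := setIntegral_det_one_add_fderiv b Measure.addHaar hdiff hlip hper
  by_contra! hdet
  simp only [hderiv, hdet, integral_zero] at hint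
  exact measureReal_fundamentalDomain_ne_zero b _ hint.symm

end PeriodicPerturbations

section Mollification

open MeasureTheory Metric Filter ContinuousLinearMap
open scoped Convolution Topology

theorem exists_contDiff_add_eq_add_and_fderiv_eq_zero {E F : Type*} [NormedAddCommGroup E]
    [NormedSpace ℝ E] [FiniteDimensional ℝ E] [NormedAddCommGroup F] [NormedSpace ℝ F]
    [CompleteSpace F] {f : E → F} (hf : Continuous f) {δ : ℝ} (hδ : 0 < δ) :
    ∃ g : E → F, ContDiff ℝ 1 g ∧
      (∀ v a, (∀ y, f (y + v) = f y + a) → ∀ y, g (y + v) = g y + a) ∧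
      ∀ y, (∀ z ∈ ball y δ, f z = f y) → fderiv ℝ g y = 0 := by
  borelize E
  let μ : Measure E := .addHaar
  let φ : ContDiffBump (0 : E) := ⟨δ / 4, δ / 2, by positivity, by linarith⟩
  have hint (y : E) : Integrable (fun t => φ.normed μ t • f (y - t)) μ :=
    (φ.continuous_normed.smul (by fun_prop)).integrable_of_hasCompactSupport
      φ.hasCompactSupport_normed.smul_right
  refine ⟨φ.normed μ ⋆[lsmul ℝ ℝ, μ] f, ?_, fun v a hva y => ?_, fun y hy => ?_⟩
  · exact φ.hasCompactSupport_normed.contDiff_convolution_left _ φ.contDiff_normed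
      hf.locallyIntegrable
  · have hshift (t : E) : f (y + v - t) = f (y - t) + a := by rw [add_sub_right_comm, hva]
    simp only [convolution_def, lsmul_apply, hshift, smul_add]
    rw [integral_add (hint y) (φ.integrable_normed.smul_const a), φ.integral_normed_smul]
  · have hconst : φ.normed μ ⋆[lsmul ℝ ℝ, μ] f =ᶠ[𝓝 y] fun _ => f y := by
      filter_upwards [ball_mem_nhds y (half_pos hδ)] with z hz
      have hz' : f z = f y := hy z (ball_subset_ball (half_le_self hδ.le) hz)
      refine (φ.normed_convolution_eq_right fun w hw => ?_).trans hz'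
      rw [hz', hy w (mem_ball.2 ?_)]
      linarith [dist_triangle w z y, mem_ball.1 hz, mem_ball.1 hw, show φ.rOut = δ / 2 from rfl]
    rw [hconst.fderiv_eq, fderiv_const_apply]

end Mollification

section Torus

open Metric

variable {ι : Type*}

theorem det_fderiv_pi_eq_zero [Finite ι] {g : ι → (ι → ℝ) → ℝ} {y : ι → ℝ}
    (hg : ∀ i, DifferentiableAt ℝ (g i) y) {i : ι} (hi : fderiv ℝ (g i) y = 0) :
    (fderiv ℝ (fun z i => g i z) y).det = 0 := by
  classical
  cases nonempty_fintype ι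
  rw [fderiv_pi hg, ContinuousLinearMap.det, ← LinearMap.det_toMatrix']
  exact Matrix.det_eq_zero_of_row_eq_zero i fun j => by simp [hi]

theorem lipschitzWith_circleExp : LipschitzWith 1 Circle.exp := by
  refine LipschitzWith.of_dist_le_mul fun a b => ?_
  change dist (Circle.exp a : ℂ) (Circle.exp b) ≤ _
  simpa [circleMap] using (lipschitzWith_circleMap 0 1).dist_le_mul a b

theorem exists_forall_ball_subset_preimage_circleExp [Fintype ι] {κ : Type*}
    {V : κ → Set (ι → Circle)} (hV : ∀ k, IsOpen (V k)) (hcov : ⋃ k, V k = univ) :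
    ∃ δ > 0, ∀ y : ι → ℝ, ∃ k, ball y δ ⊆ (fun z j => Circle.exp (z j)) ⁻¹' V k := by
  obtain ⟨δ, hδ, h⟩ := lebesgue_number_lemma_of_metric isCompact_univ hV hcov.ge
  refine ⟨δ, hδ, fun y => (h (fun j => Circle.exp (y j)) (mem_univ _)).imp fun k hk z hz => hk ?_⟩
  refine (dist_pi_lt_iff hδ).2 fun j => ?_
  have := lipschitzWith_circleExp.dist_le_mul (z j) (y j)
  rw [NNReal.coe_one, one_mul] at this
  exact this.trans_lt ((dist_le_pi_dist z y j).trans_lt hz)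

theorem not_forall_hasLogOn_coordinate [Finite ι] {O : ι → Set (ι → Circle)}
    (hO : ∀ i, IsOpen (O i)) (hcov : ⋃ i, O i = univ) : ¬ ∀ i, HasLogOn (fun x => x i) (O i) := by
  cases nonempty_fintype ι
  intro hlog
  let q : (ι → ℝ) → ι → Circle := fun y j => Circle.exp (y j)
  have hq : Continuous q := by fun_prop
  obtain ⟨V, hVcov, hV, hVO⟩ := exists_iUnion_eq_closure_subset hO (fun _ => toFinite _) hcov
  choose G hG using fun i =>
    ((hlog i).mono (hVO i)).exists_continuousMap_of_isClosed isClosed_closure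
  let h : ι → (ι → ℝ) → ℝ := fun i y => y i - G i (q y)
  have hh (i) : Continuous (h i) := by fun_prop
  have hexp (i) : ∀ y ∈ q ⁻¹' V i, Circle.exp (h i y) = 1 := fun y hy => by
    rw [Circle.exp_sub, div_eq_one]
    exact (hG i (subset_closure hy)).symm
  obtain ⟨δ, hδ, hball⟩ := exists_forall_ball_subset_preimage_circleExp hV hVcov
  choose g hg hgb hg0 using fun i => exists_contDiff_add_eq_add_and_fderiv_eq_zero (hh i) hδ
  classical
  let b := (Pi.basisFun ℝ ι).isUnitSMul fun _ => (Real.two_pi_pos.ne').isUnit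
  have hb (j : ι) : b j = Pi.single j (2 * Real.pi) := by
    rw [Module.Basis.isUnitSMul_apply, Pi.basisFun_apply, ← Pi.single_smul, smul_eq_mul, mul_one]
  have hqb (y : ι → ℝ) (j : ι) : q (y + b j) = q y := by
    ext1 i
    obtain rfl | hij := eq_or_ne i j
    · simp [q, hb]
    · simp [q, hb, hij]
  obtain ⟨y, hy⟩ := exists_det_fderiv_ne_zero b (contDiff_pi.2 hg) fun j y => funext fun i =>
    hgb i (b j) (b j i) (fun y => by simp only [h, hqb, Pi.add_apply]; ring) y
  obtain ⟨i, hi⟩ := hball y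
  have hconst : ∀ z ∈ ball y δ, h i z = h i y := fun z hz =>
    Circle.isCoveringMap_exp.constOn_of_comp (convex_ball y δ).isPreconnected (hh i).continuousOn
      (fun a ha a' ha' => (hexp i a (hi ha)).trans (hexp i a' (hi ha')).symm) hz (mem_ball_self hδ)
  exact hy (det_fderiv_pi_eq_zero (fun i => (hg i).differentiable one_ne_zero y) (hg0 i y hconst))

end Torus

section GoodCovers

variable {Y : Type*} [TopologicalSpace Y] {U : Finset (Set Y)}

namespace IsGoodCover

theorem nullhomotopic [Nonempty Y] (hU : IsGoodCover U) {s : Set Y} (hs : s ∈ U) :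
    ((ContinuousMap.id Y).restrict s).Nullhomotopic := by
  obtain rfl | hne := s.eq_empty_or_nonempty
  · obtain ⟨y⟩ := ‹Nonempty Y›
    exact ⟨y, by rw [Subsingleton.elim (.const _ y) ((ContinuousMap.id Y).restrict ∅)]⟩
  · have hsInter : ⋂₀ (({s} : Finset (Set Y)) : Set (Set Y)) = s := by simp
    have : ContractibleSpace s := hsInter ▸
      hU.2.2 {s} (Finset.singleton_subset_iff.2 hs) (Finset.singleton_nonempty s) (by rwa [hsInter])
    exact (id_nullhomotopic s).comp_right ((ContinuousMap.id Y).restrict s)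

theorem isPreconnected_inter (hU : IsGoodCover U) {s t : Set Y} (hs : s ∈ U) (ht : t ∈ U) :
    IsPreconnected (s ∩ t) := by
  classical
  obtain hempty | hne := (s ∩ t).eq_empty_or_nonempty
  · exact hempty ▸ isPreconnected_empty
  · have hsInter : ⋂₀ (({s, t} : Finset (Set Y)) : Set (Set Y)) = s ∩ t := by simp
    have : ContractibleSpace ↥(s ∩ t) := hsInter ▸
      hU.2.2 {s, t} (Finset.insert_subset hs (Finset.singleton_subset_iff.2 ht))
        (Finset.insert_nonempty s {t}) (by rwa [hsInter])
    exact isPreconnected_iff_preconnectedSpace.2 inferInstance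

end IsGoodCover

end GoodCovers

theorem stmt7_general {n : ℕ} {Y : Type*} [TopologicalSpace Y] {φ : C(Fin n → Circle, Y)}
    {ψ : C(Y, Fin n → Circle)} (h : (ψ.comp φ).Homotopic (.id _)) {U : Finset (Set Y)}
    (hopen : ∀ s ∈ U, IsOpen s) (hcov : ⋃₀ (U : Set (Set Y)) = univ)
    (hnull : ∀ s ∈ U, ((ContinuousMap.id Y).restrict s).Nullhomotopic)
    (hconn : ∀ s ∈ U, ∀ t ∈ U, IsPreconnected (s ∩ t)) : (n + 1) * (n + 2) / 2 ≤ U.card := by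
  by_contra! hlt
  have hφ := φ.continuous
  let f : Fin n → C(Y, Circle) := fun i => ⟨fun y => ψ y i, by fun_prop⟩
  have hf (i) (s : U) : HasLogOn (f i) s := hasLogOn_of_nullhomotopic (hnull s s.2) (f i)
  have hf' (i) (σ : Finset U) (hσ : (⋂ s ∈ σ, φ ⁻¹' s).Nonempty) :
      HasLogOn (f i) (⋃ s ∈ σ, s) := by
    obtain ⟨x, hx⟩ := hσ
    rw [← Finset.set_biUnion_coe, biUnion_eq_iUnion]
    exact .iUnion_of_mem (fun s => hopen s s.1.2) (p := φ x) (fun s => mem_iInter₂.1 hx s s.2)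
      (fun s t => hconn s s.1.2 t t.1.2) fun s => hf i s
  obtain ⟨O, hO, hUO, hlog⟩ := exists_cover_hasLogOn_of_two_mul_card_lt
    (S := Finset.univ) (A := fun s : U => φ ⁻¹' s) (f := fun i => f i ∘ φ)
    (fun s => (hopen s s.2).preimage hφ) (by rw [Finset.card_univ, Fintype.card_coe]; lia)
    (fun i s => (hf i s).comp hφ.continuousOn (mapsTo_preimage _ _))
    (fun i σ hσ => (hf' i σ hσ).comp hφ.continuousOn fun x hx => by simpa using hx)
  have hOcov : ⋃ i, O i = univ := by
    refine univ_subset_iff.1 (Subset.trans (fun x _ => ?_) hUO)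
    obtain ⟨s, hs, hxs⟩ := mem_sUnion.1 (hcov ▸ mem_univ (φ x))
    exact mem_iUnion₂.2 ⟨⟨s, hs⟩, Finset.mem_univ _, hxs⟩
  refine not_forall_hasLogOn_coordinate hO hOcov fun i => ?_
  exact (hlog i : HasLogOn ((f i).comp φ) (O i)).of_homotopic
    (.comp (.refl (ContinuousMap.eval i)) h)

/-- The covering type of the `n`-torus `T^n = (S¹)^n` is at least `(n+1)(n+2)/2`:
every good cover of any space homotopy equivalent to `T^n` has at least
`(n+1)(n+2)/2` members. -/
theorem stmt7 (n : ℕ) (hn : 1 ≤ n) (Y : Type*) [TopologicalSpace Y]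
    (h : Nonempty (ContinuousMap.HomotopyEquiv (Fin n → Circle) Y))
    (U : Finset (Set Y)) (hU : IsGoodCover U) :
    (n + 1) * (n + 2) / 2 ≤ U.card := by
  obtain ⟨e⟩ := h
  have : Nonempty Y := ⟨e.toFun 1⟩
  exact stmt7_general e.left_inv hU.1 hU.2.1 (fun s => hU.nullhomotopic)
    fun s hs t ht => hU.isPreconnected_inter hs ht
end

section
/- For every n ≥ 2, the covering type of the unitary group U(n) satisfies ct(U(n)) ≥ (4n³ + 3n² + 5n + 12)/6; that is, for every topological space Y homotopy equivalent to U(n) and every good cover U of Y, U has at least (4n³ + 3n² + 5n + 12)/6 members. -/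
/-! Cohomology is mod 2 Alexander–Spanier cohomology of compact sets, represented by germs of
cochains. If a union of compact sets whose nonempty intersections are acyclic has nonzero
cohomology in degree `e > 0`, then some `e + 1` of the sets have a common point, so that their
union is acyclic. A class `x ⌣ y ≠ 0` of degree `e` therefore leaves both `x` and `y` nonzero on
the union of the other sets. Splitting off one factor at a time from a product of `b + 2` classes
of degrees `d₀, …, d_{b+1}` removes `d₀ + ⋯ + d_j + 1` sets for each `j = b + 1, …, 1`. At least
`d₀ + 3` sets remain: they carry classes of the distinct degrees `d₀` and `d₁`, while `d₀ + 2` sets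
could only support cohomology in degree `d₀`, as for the boundary of a simplex.

For `U(n)` there are classes of degrees `2n - 1, …, 3, 1` with nonzero product: filter the bundle
`U(n) → U(n + 1) → S^(2n+1)` by the preimages of the hemispheres of all dimensions.

A good open cover of `Y` yields closed sets as above in the polyhedron of its nerve, and a homotopy
equivalence `K → Y` from a compact space factors through this polyhedron up to homotopy.
-/

namespace CoveringType

open Filter Topology Finset

/-! ### Cochains on lists of points -/

/-- A mod 2 cochain on `X`, in the ordered sense: a function of finite lists of points. The
augmentation is built in, since the empty list counts as the unique simplex without vertices. -/
abbrev Cochain (X : Type*) : Type _ := List X → ZMod 2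

/-- The simplicial coboundary: the sum of a cochain over the faces of a list. -/
def coboundary {X : Type*} : Cochain X →ₗ[ZMod 2] Cochain X where
  toFun φ l := ∑ i ∈ range l.length, φ (l.eraseIdx i)
  map_add' φ ψ := by ext l; simp [sum_add_distrib]
  map_smul' c φ := by ext l; simp [mul_sum]

local notation "δ" => coboundary

section Cochains

variable {X X' : Type*}

lemma coboundary_apply (φ : Cochain X) (l : List X) :
    δ φ l = ∑ i ∈ range l.length, φ (l.eraseIdx i) := rfl

@[simp] lemma coboundary_nil (φ : Cochain X) : δ φ [] = 0 := rfl

lemma coboundary_cons (φ : Cochain X) (x : X) (l : List X) :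
    δ φ (x :: l) = φ l + δ (φ ∘ List.cons x) l := by
  simp [coboundary_apply, sum_range_succ', add_comm]

lemma coboundary_comp_cons (φ : Cochain X) (x : X) :
    δ φ ∘ List.cons x = φ + δ (φ ∘ List.cons x) :=
  funext fun l => coboundary_cons φ x l

@[simp] lemma coboundary_coboundary (φ : Cochain X) : δ (δ φ) = 0 := by
  ext l
  induction l generalizing φ with
  | nil => rfl
  | cons x l ih =>
    simp [coboundary_cons, coboundary_comp_cons, ih, CharTwo.add_self_eq_zero]

lemma coboundary_congr {φ ψ : Cochain X} {l : List X} {m : ℕ} (hl : l.length = m + 1)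
    (h : ∀ l' ⊆ l, l'.length = m → φ l' = ψ l') : δ φ l = δ ψ l := by
  rw [coboundary_apply, coboundary_apply]
  refine sum_congr rfl fun i hi => h _ List.eraseIdx_subset ?_
  rw [List.length_eraseIdx_of_lt (mem_range.1 hi)]
  omega

/-- The cochain map induced by a map of points, not necessarily continuous. -/
def pullback (f : X → X') : Cochain X' →ₗ[ZMod 2] Cochain X :=
  LinearMap.funLeft (ZMod 2) (ZMod 2) (List.map f)

@[simp] lemma pullback_apply (f : X → X') (φ : Cochain X') (l : List X) :
    pullback f φ l = φ (l.map f) := rfl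

@[simp] lemma pullback_id (φ : Cochain X) : pullback id φ = φ := by ext l; simp

lemma pullback_comp {X'' : Type*} (f : X' → X'') (g : X → X') (φ : Cochain X'') :
    pullback (f ∘ g) φ = pullback g (pullback f φ) := by
  ext l; simp

lemma coboundary_pullback (f : X → X') (φ : Cochain X') :
    δ (pullback f φ) = pullback f (δ φ) := by
  ext l; simp [coboundary_apply, List.eraseIdx_map]

/-- The Alexander–Whitney product; the left factor is read on the front face with `p + 1`
vertices. -/
def cup (p : ℕ) (φ ψ : Cochain X) : Cochain X :=
  fun l => φ (l.take (p + 1)) * ψ (l.drop p)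

@[simp] lemma zero_cup (p : ℕ) (ψ : Cochain X) : cup p 0 ψ = 0 := by ext l; simp [cup]

@[simp] lemma cup_zero (p : ℕ) (φ : Cochain X) : cup p φ 0 = 0 := by ext l; simp [cup]

lemma cup_assoc (p q : ℕ) (φ ψ χ : Cochain X) :
    cup (p + q) (cup p φ ψ) χ = cup p φ (cup q ψ χ) := by
  ext l
  simp only [cup, List.take_take, List.drop_take, List.drop_drop, mul_assoc]
  rw [show min (p + 1) (p + q + 1) = p + 1 by omega, show p + q + 1 - p = q + 1 by omega]

lemma pullback_cup (f : X → X') (p : ℕ) (φ ψ : Cochain X') :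
    pullback f (cup p φ ψ) = cup p (pullback f φ) (pullback f ψ) := by
  ext l; simp [cup]

lemma coboundary_cup (p : ℕ) (φ ψ : Cochain X) (l : List X) (hl : p + 2 ≤ l.length) :
    δ (cup p φ ψ) l = cup (p + 1) (δ φ) ψ l + cup p φ (δ ψ) l := by
  induction p generalizing φ ψ l with
  | zero =>
    obtain ⟨x, y, v, rfl⟩ : ∃ x y v, l = x :: y :: v := by
      match l, hl with
      | x :: y :: v, _ => exact ⟨x, y, v, rfl⟩
    have hcons : cup 0 φ ψ ∘ List.cons x = φ [x] • (ψ ∘ List.cons x) := by ext w; simp [cup]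
    rw [coboundary_cons, hcons, map_smul]
    simp only [cup, List.take_succ_cons, List.take_zero, List.drop_zero, List.drop_succ_cons,
      coboundary_cons, coboundary_nil, Pi.smul_apply, smul_eq_mul, Function.comp_apply]
    linear_combination (-φ [x] * ψ (y :: v)) * CharTwo.two_eq_zero (R := ZMod 2)
  | succ p ih =>
    obtain ⟨x, v, rfl⟩ := List.exists_cons_of_length_pos (by omega : 0 < l.length)
    have hcons : cup (p + 1) φ ψ ∘ List.cons x = cup p (φ ∘ List.cons x) ψ := by
      ext w; simp [cup]
    rw [coboundary_cons, hcons, ih _ _ _ (by simpa using hl)]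
    simp only [cup, List.take_succ_cons, List.drop_succ_cons, coboundary_cons,
      Function.comp_apply]
    ring

/-- The prism operator, a cochain homotopy between `pullback f` and `pullback g`. -/
def prism (f g : X → X') : Cochain X' →ₗ[ZMod 2] Cochain X where
  toFun φ l := ∑ i ∈ range l.length, φ ((l.take (i + 1)).map f ++ (l.drop i).map g)
  map_add' φ ψ := by ext l; simp [sum_add_distrib]
  map_smul' c φ := by ext l; simp [mul_sum]

lemma prism_apply (f g : X → X') (φ : Cochain X') (l : List X) :
    prism f g φ l =
      ∑ i ∈ range l.length, φ ((l.take (i + 1)).map f ++ (l.drop i).map g) := rfl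

@[simp] lemma prism_nil (f g : X → X') (φ : Cochain X') : prism f g φ [] = 0 := rfl

lemma prism_cons (f g : X → X') (φ : Cochain X') (x : X) (l : List X) :
    prism f g φ (x :: l) =
      φ (f x :: g x :: l.map g) + prism f g (φ ∘ List.cons (f x)) l := by
  simp [prism_apply, sum_range_succ', add_comm]

lemma coboundary_prism_add (f g : X → X') (φ : Cochain X') :
    δ (prism f g φ) + prism f g (δ φ) = pullback g φ - pullback f φ := by
  ext l
  induction l generalizing φ with
  | nil => simp
  | cons x l ih =>
    have hcons : prism f g φ ∘ List.cons x =
        pullback g (φ ∘ List.cons (f x) ∘ List.cons (g x)) +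
          prism f g (φ ∘ List.cons (f x)) := by
      ext w; simp [prism_cons]
    have ih' := ih (φ ∘ List.cons (f x))
    simp only [Pi.add_apply, Pi.sub_apply, pullback_apply, Function.comp_apply,
      CharTwo.sub_eq_add] at ih'
    simp only [Pi.add_apply, Pi.sub_apply, pullback_apply, coboundary_cons, hcons, map_add,
      prism_cons, coboundary_comp_cons, coboundary_pullback, List.map_cons,
      Function.comp_apply, Function.comp_assoc, CharTwo.sub_eq_add]
    grind

lemma prism_eq_zero (f g : X → X') (φ : Cochain X') (l : List X)
    (h : ∀ l' ⊆ l.map f ++ l.map g, l'.length = l.length + 1 → φ l' = 0) :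
    prism f g φ l = 0 := by
  rw [prism_apply]
  refine sum_eq_zero fun i hi => h _ (List.append_subset.2 ⟨?_, ?_⟩) ?_
  · exact List.Subset.trans (List.map_subset f (List.take_subset _ _))
      (List.subset_append_left _ _)
  · exact List.Subset.trans (List.map_subset g (List.drop_subset _ _))
      (List.subset_append_right _ _)
  · have := mem_range.1 hi
    simp only [List.length_append, List.length_map, List.length_take, List.length_drop]
    omega

end Cochains

/-! ### Germs of cochains near a set -/

section Germs

variable {X : Type*} [PseudoMetricSpace X] {A B : Set X} {ε ε' : ℝ} {l l' : List X} {m : ℕ}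
  {φ ψ : Cochain X}

/-- A list is `ε`-small at `A` if all its points are `ε`-close to one and the same point of `A`.
The empty list is small even at `A = ∅`, so that the augmentation survives there. -/
def IsSmall (A : Set X) (ε : ℝ) (l : List X) : Prop :=
  l ≠ [] → ∃ a ∈ A, ∀ x ∈ l, dist x a < ε

lemma IsSmall.mono (h : IsSmall A ε l) (hA : A ⊆ B) (hε : ε ≤ ε') : IsSmall B ε' l := fun hl =>
  let ⟨a, ha, hx⟩ := h hl
  ⟨a, hA ha, fun x hxl => (hx x hxl).trans_le hε⟩

lemma IsSmall.subset (h : IsSmall A ε l) (hl : l' ⊆ l) : IsSmall A ε l' := fun hne =>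
  let ⟨a, ha, hx⟩ := h fun hnil => hne (List.subset_nil.1 (hnil ▸ hl))
  ⟨a, ha, fun x hxl => hx x (hl hxl)⟩

lemma isSmall_union : IsSmall (A ∪ B) ε l ↔ IsSmall A ε l ∨ IsSmall B ε l := by
  by_cases hl : l = [] <;> simp [IsSmall, hl, or_and_right, exists_or]

/-- The filter of lists of `m` points that are arbitrarily small at `A`; germs along it are the
Alexander–Spanier cochains of `A` with `m` vertices. -/
def smallLists (A : Set X) (m : ℕ) : Filter (List X) where
  sets := {s | ∃ ε > 0, ∀ l : List X, l.length = m → IsSmall A ε l → l ∈ s}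
  univ_sets := ⟨1, one_pos, fun _ _ _ => trivial⟩
  sets_of_superset := fun ⟨ε, hε, h⟩ hst => ⟨ε, hε, fun l hl hs => hst (h l hl hs)⟩
  inter_sets := fun ⟨ε, hε, h⟩ ⟨ε', hε', h'⟩ => ⟨min ε ε', lt_min hε hε', fun l hl hs =>
    ⟨h l hl (hs.mono subset_rfl (min_le_left _ _)),
      h' l hl (hs.mono subset_rfl (min_le_right _ _))⟩⟩

lemma eventually_smallLists {p : List X → Prop} :
    (∀ᶠ l in smallLists A m, p l) ↔
      ∃ ε > 0, ∀ l : List X, l.length = m → IsSmall A ε l → p l := Iff.rfl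

lemma eventually_length_eq (A : Set X) (m : ℕ) : ∀ᶠ l in smallLists A m, l.length = m :=
  ⟨1, one_pos, fun _ h _ => h⟩

lemma smallLists_mono (h : A ⊆ B) (m : ℕ) : smallLists A m ≤ smallLists B m :=
  fun _ ⟨ε, hε, hs⟩ => ⟨ε, hε, fun l hl hsm => hs l hl (hsm.mono h le_rfl)⟩

lemma smallLists_union (A B : Set X) (m : ℕ) :
    smallLists (A ∪ B) m = smallLists A m ⊔ smallLists B m := by
  refine le_antisymm ?_ (sup_le (smallLists_mono Set.subset_union_left m)
    (smallLists_mono Set.subset_union_right m))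
  rintro s ⟨⟨ε, hε, h⟩, ⟨ε', hε', h'⟩⟩
  refine ⟨min ε ε', lt_min hε hε', fun l hl hs => ?_⟩
  rcases isSmall_union.1 hs with hs | hs
  · exact h l hl (hs.mono subset_rfl (min_le_left _ _))
  · exact h' l hl (hs.mono subset_rfl (min_le_right _ _))

lemma eventuallyEq_union :
    φ =ᶠ[smallLists (A ∪ B) m] ψ ↔ φ =ᶠ[smallLists A m] ψ ∧ φ =ᶠ[smallLists B m] ψ := by
  rw [smallLists_union]
  exact eventually_sup

lemma smallLists_empty (m : ℕ) : smallLists (∅ : Set X) (m + 1) = ⊥ :=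
  empty_mem_iff_bot.1 ⟨1, one_pos, fun l hl hs => by
    obtain ⟨a, ha, -⟩ := hs (List.ne_nil_of_length_eq_add_one hl)
    exact ha⟩

lemma coboundary_eventuallyEq (h : φ =ᶠ[smallLists A m] ψ) :
    δ φ =ᶠ[smallLists A (m + 1)] δ ψ :=
  let ⟨ε, hε, h⟩ := h
  ⟨ε, hε, fun _ hl hs => coboundary_congr hl fun l' hl' hm => h l' hm (hs.subset hl')⟩

/-- The cochains with `m` vertices whose germ near `A` is zero. -/
def vanishing (A : Set X) (m : ℕ) : Submodule (ZMod 2) (Cochain X) where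
  carrier := {φ | φ =ᶠ[smallLists A m] 0}
  add_mem' h h' := by
    rw [Set.mem_ofPred_eq] at *
    simpa only [add_zero] using h.add h'
  zero_mem' := Set.mem_ofPred.2 EventuallyEq.rfl
  smul_mem' c φ h := by
    rw [Set.mem_ofPred_eq] at *
    simpa only [smul_zero] using h.const_smul c

lemma mem_vanishing : φ ∈ vanishing A m ↔ φ =ᶠ[smallLists A m] 0 := Iff.rfl

/-- The cochains with `m` vertices whose germ near `A` is a cocycle. -/
def cocycles (A : Set X) (m : ℕ) : Submodule (ZMod 2) (Cochain X) :=
  (vanishing A (m + 1)).comap coboundary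

/-- The cochains with `m` vertices whose germ near `A` is a coboundary. -/
def coboundaries (A : Set X) (m : ℕ) : Submodule (ZMod 2) (Cochain X) :=
  LinearMap.range (coboundary : Cochain X →ₗ[ZMod 2] Cochain X) ⊔ vanishing A m

lemma mem_cocycles : φ ∈ cocycles A m ↔ δ φ =ᶠ[smallLists A (m + 1)] 0 := Iff.rfl

lemma mem_coboundaries : φ ∈ coboundaries A m ↔ ∃ ψ, φ =ᶠ[smallLists A m] δ ψ := by
  simp only [coboundaries, Submodule.mem_sup, LinearMap.mem_range, exists_exists_eq_and,
    mem_vanishing]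
  constructor
  · rintro ⟨ψ, χ, hχ, rfl⟩
    exact ⟨ψ, by simpa using (EventuallyEq.refl _ (δ ψ)).add hχ⟩
  · rintro ⟨ψ, h⟩
    exact ⟨ψ, φ - δ ψ, h.sub_eq, by simp⟩

lemma coboundary_mem_cocycles (φ : Cochain X) : δ φ ∈ cocycles A m := by
  simp [mem_cocycles]

lemma mem_cocycles_congr (h : φ =ᶠ[smallLists A m] ψ) :
    φ ∈ cocycles A m ↔ ψ ∈ cocycles A m :=
  ⟨(coboundary_eventuallyEq h).symm.trans, (coboundary_eventuallyEq h).trans⟩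

lemma mem_coboundaries_congr (h : φ =ᶠ[smallLists A m] ψ) :
    φ ∈ coboundaries A m ↔ ψ ∈ coboundaries A m := by
  simp only [mem_coboundaries]
  exact exists_congr fun _ => ⟨h.symm.trans, h.trans⟩

lemma cocycles_anti (h : A ⊆ B) : cocycles B m ≤ cocycles A m :=
  fun _ hφ => Eventually.filter_mono (smallLists_mono h _) hφ

lemma coboundaries_anti (h : A ⊆ B) : coboundaries B m ≤ coboundaries A m := fun _ hφ =>
  let ⟨ψ, hψ⟩ := mem_coboundaries.1 hφ
  mem_coboundaries.2 ⟨ψ, hψ.filter_mono (smallLists_mono h _)⟩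

lemma mem_cocycles_union (hA : φ ∈ cocycles A m) (hB : φ ∈ cocycles B m) :
    φ ∈ cocycles (A ∪ B) m :=
  eventuallyEq_union.2 ⟨hA, hB⟩

lemma mem_coboundaries_zero : φ ∈ coboundaries A 0 ↔ φ [] = 0 := by
  rw [mem_coboundaries]
  constructor
  · rintro ⟨ψ, _, -, h⟩
    simpa using h [] rfl (absurd rfl)
  · refine fun h => ⟨0, 1, one_pos, fun l hl _ => ?_⟩
    simpa [List.length_eq_zero_iff.1 hl] using h

/-- Vanishing of the reduced mod 2 Alexander–Spanier cohomology of `A` in degree `m - 1`, the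
degree whose cochains have `m` vertices. -/
def Acyclic (A : Set X) (m : ℕ) : Prop := cocycles A m ≤ coboundaries A m

lemma acyclic_zero (hA : A.Nonempty) : Acyclic A 0 := by
  rintro φ ⟨ε, hε, h⟩
  obtain ⟨a, ha⟩ := hA
  have := h [a] rfl fun _ => ⟨a, ha, by simpa using hε⟩
  simpa [mem_coboundaries_zero, coboundary_cons] using this

lemma acyclic_empty (m : ℕ) : Acyclic (∅ : Set X) (m + 1) := fun φ _ =>
  mem_coboundaries.2 ⟨φ, by rw [smallLists_empty]; exact eventually_bot⟩

lemma acyclic_singleton (a : X) (m : ℕ) : Acyclic {a} m := by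
  rintro φ ⟨ε, hε, h⟩
  refine mem_coboundaries.2 ⟨φ ∘ List.cons a, ε, hε, fun l hl hs => ?_⟩
  have hcons : IsSmall {a} ε (a :: l) := fun _ => by
    refine ⟨a, rfl, List.forall_mem_cons.2 ⟨by simpa using hε, fun x hx => ?_⟩⟩
    obtain ⟨_, rfl, h'⟩ := hs (List.ne_nil_of_mem hx)
    exact h' x hx
  have hzero : δ φ (a :: l) = 0 := h (a :: l) (by simp [hl]) hcons
  exact CharTwo.add_eq_zero.1 (coboundary_cons φ a l ▸ hzero)

lemma apply_singleton_of_eventually {p : List X → Prop}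
    (h : ∀ᶠ l in smallLists A 1, p l) {a : X} (ha : a ∈ A) : p [a] :=
  let ⟨_, hε, h⟩ := h
  h [a] rfl fun _ => ⟨a, ha, by simpa using hε⟩

lemma apply_singleton_eq_of_mem_coboundaries (h : φ ∈ coboundaries A 1) {a b : X} (ha : a ∈ A)
    (hb : b ∈ A) : φ [a] = φ [b] := by
  obtain ⟨ψ, hψ⟩ := mem_coboundaries.1 h
  rw [apply_singleton_of_eventually hψ ha, apply_singleton_of_eventually hψ hb]
  simp [coboundary_cons]

end Germs

/-! ### Gluing and the Mayer–Vietoris principle -/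

section MayerVietoris

variable {X : Type*} [MetricSpace X] {A B : Set X}

lemma exists_dist_inter_lt (hA : IsCompact A) (hB : IsCompact B) {ε : ℝ} (hε : 0 < ε) :
    ∃ η > 0, ∀ a ∈ A, ∀ b ∈ B, dist a b < η → ∃ c ∈ A ∩ B, dist a c < ε := by
  let S : Set (X × X) := (A ×ˢ B) ∩ {p | ∀ c ∈ A ∩ B, ε ≤ dist p.1 c}
  have hclosed : IsClosed {p : X × X | ∀ c ∈ A ∩ B, ε ≤ dist p.1 c} := by
    simp only [Set.ofPred_forall]
    exact isClosed_biInter fun c _ => isClosed_le continuous_const (by fun_prop)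
  have hS : IsCompact S := (hA.prod hB).inter_right hclosed
  rcases S.eq_empty_or_nonempty with hempty | hne
  · refine ⟨1, one_pos, fun a ha b hb _ => ?_⟩
    by_contra! hfar
    exact (hempty.subset ⟨⟨ha, hb⟩, hfar⟩ : (a, b) ∈ (∅ : Set (X × X)))
  · obtain ⟨p, hp, hmin⟩ := hS.exists_isMinOn hne
      (f := fun p : X × X => dist p.1 p.2) (by fun_prop)
    refine ⟨dist p.1 p.2, dist_pos.2 fun h => ?_, fun a ha b hb hab => ?_⟩
    · have := hp.2 p.1 ⟨hp.1.1, h ▸ hp.1.2⟩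
      rw [dist_self] at this
      exact this.not_gt hε
    · by_contra! hfar
      exact (hmin (show (a, b) ∈ S from ⟨⟨ha, hb⟩, hfar⟩)).not_gt hab

lemma smallLists_inter (hA : IsCompact A) (hB : IsCompact B) (m : ℕ) :
    smallLists (A ∩ B) m = smallLists A m ⊓ smallLists B m := by
  refine le_antisymm (le_inf (smallLists_mono Set.inter_subset_left m)
    (smallLists_mono Set.inter_subset_right m)) ?_
  rintro s ⟨ε, hε, h⟩
  obtain ⟨η, hη, hinter⟩ := exists_dist_inter_lt hA hB (half_pos hε)
  have hpos : 0 < min (η / 2) (ε / 2) := lt_min (half_pos hη) (half_pos hε)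
  refine mem_inf_iff_superset.2
    ⟨{l | l.length = m ∧ IsSmall A _ l}, ⟨_, hpos, fun l hl hs => ⟨hl, hs⟩⟩,
      {l | IsSmall B _ l}, ⟨_, hpos, fun _ _ hs => hs⟩, ?_⟩
  rintro l ⟨⟨hl, hsA⟩, hsB⟩
  refine h l hl fun hne => ?_
  obtain ⟨a, ha, hxa⟩ := hsA hne
  obtain ⟨b, hb, hxb⟩ := hsB hne
  obtain ⟨x, hx⟩ := List.exists_mem_of_ne_nil l hne
  have hab : dist a b < η := by
    have := dist_triangle_left a b x
    linarith [hxa x hx, hxb x hx, min_le_left (η / 2) (ε / 2)]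
  obtain ⟨c, hc, hac⟩ := hinter a ha b hb hab
  refine ⟨c, hc, fun y hy => ?_⟩
  linarith [hxa y hy, dist_triangle y a c, min_le_right (η / 2) (ε / 2)]

lemma exists_eventuallyEq_of_inter (hA : IsCompact A) (hB : IsCompact B) {m : ℕ}
    {φ ψ : Cochain X} (h : φ =ᶠ[smallLists (A ∩ B) m] ψ) :
    ∃ χ, χ =ᶠ[smallLists A m] φ ∧ χ =ᶠ[smallLists B m] ψ := by
  classical
  rw [smallLists_inter hA hB] at h
  obtain ⟨s, hs, t, ht, hst⟩ := mem_inf_iff_superset.1 h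
  refine ⟨s.piecewise φ ψ, ?_, ?_⟩
  · filter_upwards [hs] with l hl using Set.piecewise_eq_of_mem _ _ _ hl
  · filter_upwards [ht] with l hl
    by_cases hls : l ∈ s
    · exact (Set.piecewise_eq_of_mem _ _ _ hls).trans (hst ⟨hls, hl⟩)
    · exact Set.piecewise_eq_of_notMem _ _ _ hls

lemma mem_coboundaries_union (hA : IsCompact A) (hB : IsCompact B) {k : ℕ}
    {φ α β : Cochain X} (hα : φ =ᶠ[smallLists A (k + 1)] δ α)
    (hβ : φ =ᶠ[smallLists B (k + 1)] δ β) (hαβ : α - β ∈ coboundaries (A ∩ B) k) :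
    φ ∈ coboundaries (A ∪ B) (k + 1) := by
  obtain ⟨γ, hγ⟩ := mem_coboundaries.1 hαβ
  have hinter : α - δ γ =ᶠ[smallLists (A ∩ B) k] β := by
    filter_upwards [hγ] with l hl
    rw [Pi.sub_apply, ← hl, Pi.sub_apply, sub_sub_cancel]
  obtain ⟨χ, hχA, hχB⟩ := exists_eventuallyEq_of_inter hA hB hinter
  refine mem_coboundaries.2 ⟨χ, eventuallyEq_union.2
    ⟨?_, hβ.trans (coboundary_eventuallyEq hχB).symm⟩⟩
  have := coboundary_eventuallyEq hχA
  rw [map_sub, coboundary_coboundary, sub_zero] at this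
  exact hα.trans this.symm

/-- The difference `α - β` represents the preimage of `φ` under the Mayer–Vietoris connecting
map. -/
lemma sub_mem_cocycles_inter {k : ℕ} {φ α β : Cochain X}
    (hα : φ =ᶠ[smallLists A (k + 1)] δ α) (hβ : φ =ᶠ[smallLists B (k + 1)] δ β) :
    α - β ∈ cocycles (A ∩ B) k := by
  rw [mem_cocycles, map_sub]
  filter_upwards [hα.filter_mono (smallLists_mono Set.inter_subset_left _),
    hβ.filter_mono (smallLists_mono Set.inter_subset_right _)] with l hl hl'
  simp [← hl, ← hl']

lemma Acyclic.union (hA : IsCompact A) (hB : IsCompact B) {k : ℕ} (h : Acyclic A (k + 1))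
    (h' : Acyclic B (k + 1)) (hinter : Acyclic (A ∩ B) k) : Acyclic (A ∪ B) (k + 1) := by
  intro φ hφ
  obtain ⟨α, hα⟩ := mem_coboundaries.1 (h (cocycles_anti Set.subset_union_left hφ))
  obtain ⟨β, hβ⟩ := mem_coboundaries.1 (h' (cocycles_anti Set.subset_union_right hφ))
  exact mem_coboundaries_union hA hB hα hβ (hinter (sub_mem_cocycles_inter hα hβ))

lemma exists_mem_cocycles_union (hA : IsCompact A) (hB : IsCompact B) {m : ℕ} {φ ψ : Cochain X}
    (hφ : φ ∈ cocycles A m) (hψ : ψ ∈ cocycles B m) (h : φ =ᶠ[smallLists (A ∩ B) m] ψ) :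
    ∃ χ ∈ cocycles (A ∪ B) m, χ =ᶠ[smallLists A m] φ ∧ χ =ᶠ[smallLists B m] ψ := by
  obtain ⟨χ, hχA, hχB⟩ := exists_eventuallyEq_of_inter hA hB h
  exact ⟨χ, mem_cocycles_union ((mem_cocycles_congr hχA).2 hφ) ((mem_cocycles_congr hχB).2 hψ),
    hχA, hχB⟩

end MayerVietoris

/-! ### Homotopy invariance -/

section Maps

open Relation

variable {X X' : Type*} [PseudoMetricSpace X] [PseudoMetricSpace X'] {A : Set X} {A' : Set X'}
  {f g : X → X'} {m : ℕ} {φ : Cochain X'}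

/-- Two maps send `ε`-small lists at `A` to lists whose union is `ε'`-small at `A'`. -/
def ContiguousAt (ε ε' : ℝ) (A : Set X) (A' : Set X') (f g : X → X') : Prop :=
  ∀ a ∈ A, ∃ a' ∈ A', ∀ x, dist x a < ε → dist (f x) a' < ε' ∧ dist (g x) a' < ε'

/-- Contiguity at all scales. Neither map need be continuous; `Contiguous A A' f f` says that `f`
induces a map of Alexander–Spanier cochains. -/
def Contiguous (A : Set X) (A' : Set X') (f g : X → X') : Prop :=
  ∀ ε' > 0, ∃ ε > 0, ContiguousAt ε ε' A A' f g

/-- At every scale, `f` and `g` are connected by a chain of contiguous maps. -/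
def ContiguityHomotopic (A : Set X) (A' : Set X') (f g : X → X') : Prop :=
  ∀ ε' > 0, ∃ ε > 0, ReflTransGen (ContiguousAt ε ε' A A') f g

lemma Contiguous.homotopic (h : Contiguous A A' f g) : ContiguityHomotopic A A' f g :=
  fun ε' hε' => (h ε' hε').imp fun _ ⟨hε, h⟩ => ⟨hε, .single h⟩

lemma ContiguousAt.isSmall_append {ε ε' : ℝ} (h : ContiguousAt ε ε' A A' f g) {l : List X}
    (hl : IsSmall A ε l) : IsSmall A' ε' (l.map f ++ l.map g) := by
  intro hne
  obtain ⟨a, ha, hx⟩ := hl (by rintro rfl; simp at hne)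
  obtain ⟨a', ha', hfg⟩ := h a ha
  refine ⟨a', ha', fun y hy => ?_⟩
  rcases List.mem_append.1 hy with hy | hy <;> obtain ⟨x, hxl, rfl⟩ := List.mem_map.1 hy
  exacts [(hfg x (hx x hxl)).1, (hfg x (hx x hxl)).2]

lemma Contiguous.tendsto_map (h : Contiguous A A' f g) (m : ℕ) :
    Tendsto (List.map f) (smallLists A m) (smallLists A' m) := by
  rintro s ⟨ε', hε', hs⟩
  obtain ⟨ε, hε, h⟩ := h ε' hε'
  exact ⟨ε, hε, fun l hl hsm => hs _ (by simpa using hl)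
    ((h.isSmall_append hsm).subset (List.subset_append_left _ _))⟩

lemma Contiguous.pullback_mem_cocycles (h : Contiguous A A' f g) (hφ : φ ∈ cocycles A' m) :
    pullback f φ ∈ cocycles A m := by
  rw [mem_cocycles, coboundary_pullback]
  exact (h.tendsto_map _).eventually hφ

lemma Contiguous.pullback_mem_coboundaries (h : Contiguous A A' f g)
    (hφ : φ ∈ coboundaries A' m) : pullback f φ ∈ coboundaries A m := by
  obtain ⟨ψ, hψ⟩ := mem_coboundaries.1 hφ
  refine mem_coboundaries.2 ⟨pullback f ψ, ?_⟩
  rw [coboundary_pullback]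
  exact (h.tendsto_map _).eventually hψ

lemma ContiguousAt.pullback_sub_pullback {ε ε' : ℝ} (h : ContiguousAt ε ε' A A' f g)
    (hφ : ∀ l : List X', l.length = m + 1 → IsSmall A' ε' l → δ φ l = 0) {l : List X}
    (hl : l.length = m) (hs : IsSmall A ε l) :
    (pullback g φ - pullback f φ) l = δ (prism f g φ) l := by
  rw [← coboundary_prism_add, Pi.add_apply, prism_eq_zero, add_zero]
  exact fun l' hsub hl' => hφ l' (by rw [hl', hl]) ((h.isSmall_append hs).subset hsub)

lemma exists_pullback_sub_pullback_of_reflTransGen {ε ε' : ℝ}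
    (h : ReflTransGen (ContiguousAt ε ε' A A') f g)
    (hφ : ∀ l : List X', l.length = m + 1 → IsSmall A' ε' l → δ φ l = 0) :
    ∃ ψ, ∀ l : List X, l.length = m → IsSmall A ε l →
      (pullback g φ - pullback f φ) l = δ ψ l := by
  induction h with
  | refl => exact ⟨0, by simp⟩
  | @tail g k _ hgk ih =>
    obtain ⟨ψ, hψ⟩ := ih
    refine ⟨ψ + prism g k φ, fun l hl hs => ?_⟩
    rw [map_add, Pi.add_apply, ← hψ l hl hs, ← hgk.pullback_sub_pullback hφ hl hs,
      ← Pi.add_apply, add_comm, sub_add_sub_cancel]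

lemma ContiguityHomotopic.pullback_sub_mem_coboundaries (h : ContiguityHomotopic A A' f g)
    (hφ : φ ∈ cocycles A' m) : pullback g φ - pullback f φ ∈ coboundaries A m := by
  obtain ⟨ε', hε', hφ⟩ := eventually_smallLists.1 hφ
  obtain ⟨ε, hε, h⟩ := h ε' hε'
  obtain ⟨ψ, hψ⟩ := exists_pullback_sub_pullback_of_reflTransGen h hφ
  exact mem_coboundaries.2 ⟨ψ, ε, hε, hψ⟩

lemma ContiguityHomotopic.pullback_mem_coboundaries_iff (h : ContiguityHomotopic A A' f g)
    (hφ : φ ∈ cocycles A' m) :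
    pullback f φ ∈ coboundaries A m ↔ pullback g φ ∈ coboundaries A m := by
  have hsub := h.pullback_sub_mem_coboundaries hφ
  exact ⟨fun hf => by simpa using add_mem hsub hf, fun hg => by simpa using sub_mem hg hsub⟩

end Maps

section NearestPoint

variable {X X' : Type*} [MetricSpace X] [PseudoMetricSpace X'] {A : Set X} {A' : Set X'}

open Classical in
/-- A choice of nearest point of `A`, in general discontinuous. It extends maps defined on `A` to
a neighbourhood; the junk value away from the case of nonempty compact `A` is the identity. -/
noncomputable def nearest (A : Set X) (x : X) : X :=
  if h : ∃ r ∈ A, ∀ a ∈ A, dist x r ≤ dist x a then h.choose else x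

lemma nearest_spec (hA : IsCompact A) (hne : A.Nonempty) (x : X) :
    nearest A x ∈ A ∧ ∀ a ∈ A, dist x (nearest A x) ≤ dist x a := by
  have h : ∃ r ∈ A, ∀ a ∈ A, dist x r ≤ dist x a := by
    obtain ⟨r, hr, h⟩ := hA.exists_infDist_eq_dist hne x
    exact ⟨r, hr, fun a ha => h ▸ Metric.infDist_le_dist_of_mem ha⟩
  rw [nearest, dif_pos h]
  exact h.choose_spec

lemma dist_nearest_le (hA : IsCompact A) (x : X) {a : X} (ha : a ∈ A) :
    dist (nearest A x) a ≤ 2 * dist x a := by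
  have := (nearest_spec hA ⟨a, ha⟩ x).2 a ha
  linarith [dist_triangle_left (nearest A x) a x]

lemma nearest_of_mem (hA : IsCompact A) {a : X} (ha : a ∈ A) : nearest A a = a :=
  dist_le_zero.1 (by simpa using dist_nearest_le hA a ha)

lemma contiguous_comp_nearest (hA : IsCompact A) {r : X → X'} (hr : ContinuousOn r A)
    (hmaps : Set.MapsTo r A A') : Contiguous A A' (r ∘ nearest A) (r ∘ nearest A) := by
  intro ε hε
  obtain ⟨η, hη, h⟩ := Metric.uniformContinuousOn_iff.1
    (hA.uniformContinuousOn_of_continuous hr) ε hε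
  refine ⟨η / 2, half_pos hη, fun a ha => ⟨r a, hmaps ha, fun x hx => ?_⟩⟩
  rw [and_self]
  exact h _ (nearest_spec hA ⟨a, ha⟩ x).1 a ha (by linarith [dist_nearest_le hA x ha])

lemma contiguous_retraction_id {B : Set X} (hA : IsCompact A) (hBA : B ⊆ A) {r : X → X}
    (hr : ContinuousOn r A) (hid : ∀ b ∈ B, r b = b) :
    Contiguous B B (r ∘ nearest A) id := by
  intro ε hε
  obtain ⟨η, hη, h⟩ := Metric.uniformContinuousOn_iff.1
    (hA.uniformContinuousOn_of_continuous hr) ε hε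
  refine ⟨min (η / 2) ε, lt_min (half_pos hη) hε, fun b hb => ⟨b, hb, fun x hx => ?_⟩⟩
  obtain ⟨hxη, hxε⟩ := lt_min_iff.1 hx
  refine ⟨?_, hxε⟩
  have := h _ (nearest_spec hA ⟨b, hBA hb⟩ x).1 b (hBA hb)
    (by linarith [dist_nearest_le hA x (hBA hb)])
  rwa [hid b hb] at this

lemma contiguityHomotopic_of_continuousOn (hA : IsCompact A) {H : ℝ × X → X'}
    (hH : ContinuousOn H (Set.Icc 0 1 ×ˢ A)) (hmaps : Set.MapsTo H (Set.Icc 0 1 ×ˢ A) A') :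
    ContiguityHomotopic A A' (fun x => H (0, nearest A x)) (fun x => H (1, nearest A x)) := by
  intro ε hε
  obtain ⟨η, hη, h⟩ := Metric.uniformContinuousOn_iff.1
    ((isCompact_Icc.prod hA).uniformContinuousOn_of_continuous hH) ε hε
  obtain ⟨n, hn⟩ := exists_nat_one_div_lt hη
  have hmem : ∀ i ≤ n + 1, (i / (n + 1) : ℝ) ∈ Set.Icc (0 : ℝ) 1 := fun i hi =>
    ⟨by positivity, (div_le_one (by positivity)).2 (by exact_mod_cast hi)⟩
  let F (i : ℕ) (x : X) : X' := H (i / (n + 1), nearest A x)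
  have hstep : ∀ i ∈ Set.Ico 0 (n + 1), ContiguousAt (η / 2) ε A A' (F i) (F (i + 1)) := by
    intro i ⟨_, hi⟩ a ha
    refine ⟨H (i / (n + 1), a), hmaps ⟨hmem i hi.le, ha⟩, fun x hx => ?_⟩
    have hnear : dist (nearest A x) a < η := by linarith [dist_nearest_le hA x ha]
    have hA' := (nearest_spec hA ⟨a, ha⟩ x).1
    refine ⟨h _ ⟨hmem i hi.le, hA'⟩ _ ⟨hmem i hi.le, ha⟩ ?_,
      h _ ⟨hmem (i + 1) hi, hA'⟩ _ ⟨hmem i hi.le, ha⟩ (max_lt ?_ hnear)⟩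
    · simpa [Prod.dist_eq, hη] using hnear
    · simp only [Nat.cast_add, Nat.cast_one, Real.dist_eq, ← sub_div, add_sub_cancel_left]
      rwa [abs_of_pos (by positivity)]
  have hchain : Relation.ReflTransGen (ContiguousAt (η / 2) ε A A') (F 0) (F (n + 1)) :=
    (reflTransGen_of_succ_of_le _ hstep (Nat.zero_le _)).lift F fun _ _ h => h
  refine ⟨η / 2, half_pos hη, ?_⟩
  simpa [F, div_self (Nat.cast_add_one_ne_zero (R := ℝ) n)] using hchain

end NearestPoint

section Restriction

variable {X : Type*} [MetricSpace X] {A A' : Set X}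

/-- Restriction of cohomology classes from `A` to `A'` is injective, for cochains with `m`
vertices. -/
def RestrictionInjective (A A' : Set X) (m : ℕ) : Prop :=
  ∀ φ ∈ cocycles A m, φ ∈ coboundaries A' m → φ ∈ coboundaries A m

/-- Restriction from `A` to `A'` is surjective, already on germs of cocycles. -/
def RestrictionSurjective (A A' : Set X) (m : ℕ) : Prop :=
  ∀ φ ∈ cocycles A' m, ∃ φ' ∈ cocycles A m, φ' =ᶠ[smallLists A' m] φ

lemma RestrictionInjective.acyclic {m : ℕ} (h : RestrictionInjective A A' m) (hsub : A' ⊆ A)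
    (h' : Acyclic A' m) : Acyclic A m :=
  fun φ hφ => h φ hφ (h' (cocycles_anti hsub hφ))

lemma restrictionInjective_of_homotopy (hA : IsCompact A) {H : ℝ × X → X}
    (hH : ContinuousOn H (Set.Icc 0 1 ×ˢ A)) (hmaps : Set.MapsTo H (Set.Icc 0 1 ×ˢ A) A)
    (h0 : ∀ a ∈ A, H (0, a) = a) (h1 : ∀ a ∈ A, H (1, a) ∈ A') (m : ℕ) :
    RestrictionInjective A A' m := by
  intro φ hφ hB
  rcases A.eq_empty_or_nonempty with rfl | hne
  · cases m with
    | zero => rwa [mem_coboundaries_zero] at hB ⊢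
    | succ m => exact acyclic_empty m hφ
  have hcont : ContinuousOn (fun x => H (1, x)) A :=
    hH.comp (by fun_prop) fun x hx => ⟨by simp, hx⟩
  have hend := (contiguous_comp_nearest hA hcont h1).pullback_mem_coboundaries hB
  have hstart := ((contiguityHomotopic_of_continuousOn hA hH hmaps).pullback_mem_coboundaries_iff
    hφ).2 hend
  have hid : (fun x => H (0, nearest A x)) = id ∘ nearest A :=
    funext fun x => h0 _ (nearest_spec hA hne x).1
  rw [hid, (contiguous_retraction_id hA subset_rfl continuousOn_id
    fun _ _ => rfl).homotopic.pullback_mem_coboundaries_iff hφ] at hstart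
  simpa using hstart

lemma restrictionSurjective_of_retraction (hA : IsCompact A) (hsub : A' ⊆ A) {r : X → X}
    (hr : ContinuousOn r A) (hmaps : Set.MapsTo r A A') (hid : ∀ a ∈ A', r a = a) (m : ℕ) :
    RestrictionSurjective A A' m := by
  intro φ hφ
  obtain ⟨ψ, hψ⟩ := mem_coboundaries.1
    ((contiguous_retraction_id hA hsub hr hid).homotopic.pullback_sub_mem_coboundaries hφ)
  refine ⟨pullback (r ∘ nearest A) φ + δ ψ, add_mem
    ((contiguous_comp_nearest hA hr hmaps).pullback_mem_cocycles hφ)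
    (coboundary_mem_cocycles ψ), ?_⟩
  filter_upwards [hψ] with l hl
  rw [Pi.add_apply, ← hl]
  simp

end Restriction

/-! ### Cup products -/

section Cup

variable {X : Type*} [PseudoMetricSpace X] {A B : Set X} {p q m : ℕ} {φ ψ φ' ψ' : Cochain X}

lemma tendsto_take (h : p ≤ m) :
    Tendsto (List.take p) (smallLists A m) (smallLists A p) :=
  fun _ ⟨ε, hε, hs⟩ => ⟨ε, hε, fun l hl hsm =>
    hs _ (by rw [List.length_take, hl, min_eq_left h]) (hsm.subset (List.take_subset _ _))⟩

lemma tendsto_drop (h : m = p + q) :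
    Tendsto (List.drop p) (smallLists A m) (smallLists A q) :=
  fun _ ⟨ε, hε, hs⟩ => ⟨ε, hε, fun l hl hsm =>
    hs _ (by rw [List.length_drop]; omega) (hsm.subset (List.drop_subset _ _))⟩

lemma cup_congr_left (h : φ =ᶠ[smallLists A (p + 1)] φ') (hm : p + 1 ≤ m := by omega) :
    cup p φ ψ =ᶠ[smallLists A m] cup p φ' ψ := by
  filter_upwards [(tendsto_take hm).eventually h] with l hl
  rw [cup, cup, hl]

lemma cup_congr_right (h : ψ =ᶠ[smallLists A (q + 1)] ψ') (hm : m = p + q + 1 := by omega) :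
    cup p φ ψ =ᶠ[smallLists A m] cup p φ ψ' := by
  filter_upwards [(tendsto_drop (q := q + 1) hm).eventually h] with l hl
  rw [cup, cup, hl]

lemma coboundary_cup_eventuallyEq (hm : p + 2 ≤ m := by omega) :
    δ (cup p φ ψ) =ᶠ[smallLists A m] cup (p + 1) (δ φ) ψ + cup p φ (δ ψ) := by
  filter_upwards [eventually_length_eq A m] with l hl
  rw [coboundary_cup _ _ _ _ (hl ▸ hm), Pi.add_apply]

lemma coboundary_cup_of_left_mem_cocycles (hφ : φ ∈ cocycles A (p + 1))
    (hm : p + 2 ≤ m := by omega) : δ (cup p φ ψ) =ᶠ[smallLists A m] cup p φ (δ ψ) := by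
  have hleft : cup (p + 1) (δ φ) ψ =ᶠ[smallLists A m] cup (p + 1) 0 ψ := cup_congr_left hφ
  simpa using (coboundary_cup_eventuallyEq hm).trans (hleft.add EventuallyEq.rfl)

lemma coboundary_cup_of_right_mem_cocycles (hψ : ψ ∈ cocycles A (q + 1))
    (hm : m = p + q + 2 := by omega) :
    δ (cup p φ ψ) =ᶠ[smallLists A m] cup (p + 1) (δ φ) ψ := by
  have hright : cup p φ (δ ψ) =ᶠ[smallLists A m] cup p φ 0 := cup_congr_right hψ
  simpa using (coboundary_cup_eventuallyEq (by omega)).trans (EventuallyEq.rfl.add hright)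

lemma cup_mem_cocycles (hφ : φ ∈ cocycles A (p + 1)) (hψ : ψ ∈ cocycles A (q + 1))
    (hm : m = p + q + 1 := by omega) : cup p φ ψ ∈ cocycles A m := by
  rw [mem_cocycles]
  have hright : cup p φ (δ ψ) =ᶠ[smallLists A (m + 1)] cup p φ 0 := cup_congr_right hψ
  simpa using (coboundary_cup_of_left_mem_cocycles hφ).trans hright

lemma coboundary_cup_mem_coboundaries (hψ : ψ ∈ cocycles A (q + 1))
    (hm : m = p + q + 2 := by omega) : cup (p + 1) (δ φ) ψ ∈ coboundaries A m :=
  mem_coboundaries.2 ⟨_, (coboundary_cup_of_right_mem_cocycles hψ).symm⟩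

lemma cup_coboundary_mem_coboundaries (hφ : φ ∈ cocycles A (p + 1))
    (hm : p + 2 ≤ m := by omega) : cup p φ (δ ψ) ∈ coboundaries A m :=
  mem_coboundaries.2 ⟨_, (coboundary_cup_of_left_mem_cocycles hφ).symm⟩

/-- Subtracting coboundaries, one may assume that one factor vanishes near `A` and the other
near `B`. -/
lemma cup_mem_coboundaries_union (hφ : φ ∈ cocycles (A ∪ B) (p + 2))
    (hψ : ψ ∈ cocycles (A ∪ B) (q + 2)) (hφA : φ ∈ coboundaries A (p + 2))
    (hψB : ψ ∈ coboundaries B (q + 2)) (hm : m = p + q + 3 := by omega) :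
    cup (p + 1) φ ψ ∈ coboundaries (A ∪ B) m := by
  obtain ⟨α, hα⟩ := mem_coboundaries.1 hφA
  obtain ⟨β, hβ⟩ := mem_coboundaries.1 hψB
  have hsplit : cup (p + 1) φ ψ = cup (p + 1) (φ - δ α) (ψ - δ β) +
      cup (p + 1) (δ α) (ψ - δ β) + cup (p + 1) φ (δ β) := by
    ext l; simp only [cup, Pi.add_apply, Pi.sub_apply]; ring
  have hzero : cup (p + 1) (φ - δ α) (ψ - δ β) =ᶠ[smallLists (A ∪ B) m] 0 := by
    refine eventuallyEq_union.2 ⟨?_, ?_⟩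
    · simpa using cup_congr_left (ψ := ψ - δ β) (m := m) hα.sub_eq
    · simpa using cup_congr_right (φ := φ - δ α) (p := p + 1) (m := m) hβ.sub_eq
  rw [hsplit]
  refine add_mem (add_mem ?_ ?_) (cup_coboundary_mem_coboundaries hφ)
  · exact (mem_coboundaries_congr hzero).2 (zero_mem _)
  · exact coboundary_cup_mem_coboundaries (sub_mem hψ (coboundary_mem_cocycles β))

end Cup

section CupProd

variable {X X' : Type*}

/-- The cup product `φ 0 ⌣ ⋯ ⌣ φ b` of cochains, where `φ i` has degree `d i`. -/
def cupProd (d : ℕ → ℕ) (φ : ℕ → Cochain X) : ℕ → Cochain X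
  | 0 => φ 0
  | b + 1 => cup (∑ i ∈ range (b + 1), d i) (cupProd d φ b) (φ (b + 1))

lemma cupProd_succ' (d : ℕ → ℕ) (φ : ℕ → Cochain X) (b : ℕ) :
    cupProd d φ (b + 1) =
      cup (d 0) (φ 0) (cupProd (fun i => d (i + 1)) (fun i => φ (i + 1)) b) := by
  induction b with
  | zero => simp [cupProd]
  | succ b ih =>
    rw [cupProd, ih, cupProd, sum_range_succ', add_comm _ (d 0), cup_assoc]

lemma pullback_cupProd (f : X → X') (d : ℕ → ℕ) (φ : ℕ → Cochain X') (b : ℕ) :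
    pullback f (cupProd d φ b) = cupProd d (fun i => pullback f (φ i)) b := by
  induction b with
  | zero => rfl
  | succ b ih => rw [cupProd, pullback_cup, ih, cupProd]

variable [PseudoMetricSpace X] {A : Set X} {d : ℕ → ℕ} {φ ψ : ℕ → Cochain X} {b : ℕ}

lemma cupProd_mem_cocycles (h : ∀ i ≤ b, φ i ∈ cocycles A (d i + 1)) :
    cupProd d φ b ∈ cocycles A (∑ i ∈ range (b + 1), d i + 1) := by
  induction b with
  | zero => simpa [cupProd] using h 0 le_rfl
  | succ b ih =>
    rw [sum_range_succ]
    exact cup_mem_cocycles (ih fun i hi => h i (hi.trans b.le_succ)) (h (b + 1) le_rfl)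

lemma cupProd_congr (h : ∀ i ≤ b, φ i =ᶠ[smallLists A (d i + 1)] ψ i) :
    cupProd d φ b =ᶠ[smallLists A (∑ i ∈ range (b + 1), d i + 1)] cupProd d ψ b := by
  induction b with
  | zero => simpa [cupProd] using h 0 le_rfl
  | succ b ih =>
    rw [sum_range_succ]
    exact (cup_congr_left (ih fun i hi => h i (hi.trans b.le_succ))).trans
      (cup_congr_right (h (b + 1) le_rfl))

end CupProd

section Retract

variable {X X' : Type*} {A : Set X} {A' : Set X'} {F : X → X'} {m : ℕ}

/-- The map `F` of neighbourhood germs, in general discontinuous, induces an injection from the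
cohomology of `A'` to that of `A`. -/
structure InjectiveOnCohomology [PseudoMetricSpace X] [PseudoMetricSpace X'] (A : Set X)
    (A' : Set X') (F : X → X') : Prop where
  contiguous : Contiguous A A' F F
  mem_coboundaries : ∀ ⦃m φ⦄, φ ∈ cocycles A' m → pullback F φ ∈ coboundaries A m →
    φ ∈ coboundaries A' m

namespace InjectiveOnCohomology

variable [PseudoMetricSpace X] [PseudoMetricSpace X']

lemma acyclic (hF : InjectiveOnCohomology A A' F) (h : Acyclic A m) : Acyclic A' m :=
  fun _ hφ => hF.mem_coboundaries hφ (h (hF.contiguous.pullback_mem_cocycles hφ))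

lemma cupProd_notMem_coboundaries (hF : InjectiveOnCohomology A A' F) {d : ℕ → ℕ}
    {φ : ℕ → Cochain X'} {b : ℕ} (hφ : ∀ i ≤ b, φ i ∈ cocycles A' (d i + 1))
    (hne : cupProd d φ b ∉ coboundaries A' (∑ i ∈ range (b + 1), d i + 1)) :
    cupProd d (fun i => pullback F (φ i)) b ∉
      coboundaries A (∑ i ∈ range (b + 1), d i + 1) := by
  rw [← pullback_cupProd]
  exact fun h => hne (hF.mem_coboundaries (cupProd_mem_cocycles hφ) h)

end InjectiveOnCohomology

lemma exists_continuousOn_toSubtype [TopologicalSpace X] (hne : A.Nonempty) :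
    ∃ ρ : X → A, ContinuousOn ρ A ∧ ∀ a : A, ρ a = a := by
  classical
  obtain ⟨a₀, ha₀⟩ := hne
  let ρ (x : X) : A := if h : x ∈ A then ⟨x, h⟩ else ⟨a₀, ha₀⟩
  have hρ (a : A) : ρ a = a := dif_pos a.2
  refine ⟨ρ, ?_, hρ⟩
  rw [continuousOn_iff_continuous_domRestrict, show A.domRestrict ρ = id from funext hρ]
  exact continuous_id

lemma exists_injectiveOnCohomology [MetricSpace X] [MetricSpace X'] (hA : IsCompact A)
    (hA' : IsCompact A') (hne : A'.Nonempty) (p : C(A', A)) (q : C(A, A'))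
    (h : (q.comp p).Homotopic (ContinuousMap.id A')) :
    ∃ F : X → X', InjectiveOnCohomology A A' F := by
  obtain ⟨H⟩ := h
  have hneA : A.Nonempty := let ⟨a, ha⟩ := hne; ⟨_, (p ⟨a, ha⟩).2⟩
  obtain ⟨ρ, hρ, hρid⟩ := exists_continuousOn_toSubtype hneA
  obtain ⟨ρ', hρ', hρ'id⟩ := exists_continuousOn_toSubtype hne
  let Q (x : X) : X' := q (ρ x)
  let P (x : X') : X := p (ρ' x)
  let K (z : ℝ × X') : X' := H (Set.projIcc 0 1 zero_le_one z.1, ρ' z.2)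
  have hQ : ContinuousOn Q A := (by fun_prop : Continuous fun a => (q a : X')).comp_continuousOn hρ
  have hP : ContinuousOn P A' :=
    (by fun_prop : Continuous fun a => (p a : X)).comp_continuousOn hρ'
  have hK : ContinuousOn K (Set.Icc 0 1 ×ˢ A') :=
    (continuous_subtype_val.comp H.continuous).comp_continuousOn
      ((continuous_projIcc.comp continuous_fst).continuousOn.prodMk
        (hρ'.comp continuousOn_snd fun z hz => hz.2))
  have hstart : (Q ∘ nearest A) ∘ P ∘ nearest A' = fun x => K (0, nearest A' x) := by
    funext x
    have hnear : nearest A (p (ρ' (nearest A' x))) = p (ρ' (nearest A' x)) :=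
      nearest_of_mem hA (p _).2
    simp [Q, P, K, hnear, hρid]
  have hend : (fun x => K (1, nearest A' x)) = id ∘ nearest A' := by
    funext x
    simpa [K] using congrArg Subtype.val (hρ'id ⟨_, (nearest_spec hA' hne x).1⟩)
  have hcont := contiguous_comp_nearest hA hQ fun _ _ => Subtype.coe_prop _
  refine ⟨Q ∘ nearest A, hcont, fun m φ hφ hB => ?_⟩
  have hPQ := (contiguous_comp_nearest hA' hP fun _ _ => Subtype.coe_prop _
    ).pullback_mem_coboundaries hB
  rw [← pullback_comp, hstart, (contiguityHomotopic_of_continuousOn hA' hK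
    fun _ _ => Subtype.coe_prop _).pullback_mem_coboundaries_iff hφ, hend,
    (contiguous_retraction_id hA' subset_rfl continuousOn_id
      fun _ _ => rfl).homotopic.pullback_mem_coboundaries_iff hφ, pullback_id] at hPQ
  exact hPQ

lemma exists_injectiveOnCohomology_of_homeomorph [MetricSpace X] [MetricSpace X']
    (hA : IsCompact A) (hA' : IsCompact A') (hne : A'.Nonempty) (e : A ≃ₜ A') :
    ∃ F : X → X', InjectiveOnCohomology A A' F :=
  exists_injectiveOnCohomology hA hA' hne e.symm e
    (by rw [e.toContinuousMap_comp_symm])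

end Retract

section Connecting

variable {X : Type*} [MetricSpace X] {A B : Set X} {p q m : ℕ} {φ φ' ψ : Cochain X}

/-- `φ'` represents the image under the Mayer–Vietoris connecting map of the class on `A ∩ B`
represented by `φ`: one writes `φ` as the difference of `φ` on `A` and `0` on `B`. -/
structure IsConnecting (A B : Set X) (m : ℕ) (φ φ' : Cochain X) : Prop where
  left : φ' =ᶠ[smallLists A (m + 1)] δ φ
  right : φ' =ᶠ[smallLists B (m + 1)] 0

lemma exists_isConnecting (hA : IsCompact A) (hB : IsCompact B) (hφ : φ ∈ cocycles (A ∩ B) m) :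
    ∃ φ' ∈ cocycles (A ∪ B) (m + 1), IsConnecting A B m φ φ' :=
  let ⟨φ', h, hA, hB⟩ := exists_mem_cocycles_union hA hB (coboundary_mem_cocycles φ)
    (zero_mem _) hφ
  ⟨φ', h, hA, hB⟩

lemma IsConnecting.cup (h : IsConnecting A B (p + 1) φ φ') (hψ : ψ ∈ cocycles A (q + 1))
    (hm : m = p + q + 1 := by omega) :
    IsConnecting A B m (cup p φ ψ) (cup (p + 1) φ' ψ) where
  left := (cup_congr_left h.left).trans (coboundary_cup_of_right_mem_cocycles hψ).symm
  right := by simpa using cup_congr_left (ψ := ψ) (m := m + 1) h.right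

lemma IsConnecting.exists_sub_mem_cocycles (h : IsConnecting A B m φ φ')
    (hφ' : φ' ∈ coboundaries (A ∪ B) (m + 1)) :
    ∃ η ∈ cocycles B m, φ - η ∈ cocycles A m := by
  obtain ⟨η, hη⟩ := mem_coboundaries.1 hφ'
  obtain ⟨hηA, hηB⟩ := eventuallyEq_union.1 hη
  refine ⟨η, hηB.symm.trans h.right, ?_⟩
  rw [mem_cocycles, map_sub]
  exact (h.left.symm.trans hηA).sub_eq

end Connecting

/-! ### Filtrations by hemispheres -/

section Filtration

variable {X : Type*} {cap : ℤˣ → ℕ → Set X} {K : ℕ}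

/-- The union of the two `k`-dimensional caps. -/
def sphere (cap : ℤˣ → ℕ → Set X) (k : ℕ) : Set X := cap 1 k ∪ cap (-1) k

lemma cap_subset_sphere (s : ℤˣ) (k : ℕ) : cap s k ⊆ sphere cap k := by
  rcases Int.units_eq_one_or s with rfl | rfl
  exacts [Set.subset_union_left, Set.subset_union_right]

variable [MetricSpace X]

/-- A filtration that looks like the preimages, under a fibration over a `K`-sphere, of the
closed hemispheres `cap s k` of its great subspheres: the restriction from each hemisphere to the
fibre over each of the poles `cap (±1) 0` is an isomorphism in cohomology. -/
structure HemisphereFiltration (cap : ℤˣ → ℕ → Set X) (K : ℕ) : Prop where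
  isCompact : ∀ s k, IsCompact (cap s k)
  inter_zero : cap 1 0 ∩ cap (-1) 0 = ∅
  inter_succ : ∀ k, cap 1 (k + 1) ∩ cap (-1) (k + 1) = sphere cap k
  injective : ∀ k < K, ∀ s t m, RestrictionInjective (cap s (k + 1)) (cap t 0) m
  surjective : ∀ k < K, ∀ s t m, RestrictionSurjective (cap s (k + 1)) (cap t 0) m

namespace HemisphereFiltration

lemma sphere_subset_cap (F : HemisphereFiltration cap K)
    (s : ℤˣ) (k : ℕ) : sphere cap k ⊆ cap s (k + 1) := by
  rw [← F.inter_succ]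
  rcases Int.units_eq_one_or s with rfl | rfl
  exacts [Set.inter_subset_left, Set.inter_subset_right]

lemma sphere_mono (F : HemisphereFiltration cap K) : Monotone (sphere cap) :=
  monotone_nat_of_le_succ fun k => (F.sphere_subset_cap 1 k).trans (cap_subset_sphere 1 _)

lemma cap_zero_subset_sphere (F : HemisphereFiltration cap K)
    (s : ℤˣ) (k : ℕ) : cap s 0 ⊆ sphere cap k :=
  (cap_subset_sphere s 0).trans (F.sphere_mono k.zero_le)

lemma cap_zero_subset_cap (F : HemisphereFiltration cap K)
    (s t : ℤˣ) (k : ℕ) : cap s 0 ⊆ cap t (k + 1) :=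
  (F.cap_zero_subset_sphere s k).trans (F.sphere_subset_cap t k)

lemma acyclic_cap (F : HemisphereFiltration cap K)
    {m k : ℕ} (hk : k < K) (h : ∀ s, Acyclic (cap s 0) m) (s : ℤˣ) :
    Acyclic (cap s (k + 1)) m :=
  (F.injective k hk s s m).acyclic (F.cap_zero_subset_cap s s k) (h s)

lemma acyclic_sphere (F : HemisphereFiltration cap K)
    {D k : ℕ} (hk : k ≤ K) (h : ∀ s, ∀ m > D + 1, Acyclic (cap s 0) m) :
    ∀ m > D + k + 1, Acyclic (sphere cap k) m := by
  induction k with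
  | zero =>
    intro m hm
    obtain ⟨j, rfl⟩ : ∃ j, m = j + 2 := ⟨m - 2, by omega⟩
    refine Acyclic.union (F.isCompact _ _) (F.isCompact _ _) (h 1 _ hm) (h (-1) _ hm) ?_
    rw [F.inter_zero]
    exact acyclic_empty j
  | succ k ih =>
    intro m hm
    obtain ⟨j, rfl⟩ : ∃ j, m = j + 1 := ⟨m - 1, by omega⟩
    have hcap := F.acyclic_cap hk fun s => h s (j + 1) (by omega)
    refine Acyclic.union (F.isCompact _ _) (F.isCompact _ _) (hcap 1) (hcap (-1)) ?_
    rw [F.inter_succ]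
    exact ih (by omega) j (by omega)

lemma restrictionInjective_sphere (F : HemisphereFiltration cap K)
    {k m : ℕ} (hk : k ≤ K) (hm : m ≤ k) :
    RestrictionInjective (sphere cap k) (cap 1 0) m := by
  induction k generalizing m with
  | zero =>
    obtain rfl := Nat.le_zero.1 hm
    exact fun φ _ hB => mem_coboundaries_zero.2 (mem_coboundaries_zero.1 hB)
  | succ k ih =>
    intro φ hφ hB
    cases m with
    | zero => exact mem_coboundaries_zero.2 (mem_coboundaries_zero.1 hB)
    | succ j =>
      have hcob (s : ℤˣ) := mem_coboundaries.1
        (F.injective k hk s 1 _ φ (cocycles_anti (cap_subset_sphere s _) hφ) hB)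
      obtain ⟨⟨α, hα⟩, β, hβ⟩ := And.intro (hcob 1) (hcob (-1))
      have hαβ := sub_mem_cocycles_inter hα hβ
      rw [F.inter_succ] at hαβ
      -- The class of `α - β` on the intersection is corrected by a class from the second cap.
      obtain ⟨w, hw, hwαβ⟩ := F.surjective k hk (-1) 1 j _
        (cocycles_anti (F.cap_zero_subset_sphere 1 k) hαβ)
      have hβw : φ =ᶠ[smallLists (cap (-1) (k + 1)) (j + 1)] δ (β + w) := by
        rw [map_add]
        simpa using hβ.add (EventuallyEq.symm hw)
      refine mem_coboundaries_union (F.isCompact _ _) (F.isCompact _ _) hα hβw ?_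
      rw [F.inter_succ, ← sub_sub]
      exact ih (by omega) (by omega) _
        (sub_mem hαβ (cocycles_anti (F.sphere_subset_cap (-1) k) hw))
        ((mem_coboundaries_congr hwαβ.symm.sub_eq).2 (zero_mem _))

lemma exists_mem_cocycles_sphere (F : HemisphereFiltration cap K)
    {k m : ℕ} (hk : k < K) (hm : m ≤ k) {φ : Cochain X}
    (hφ : φ ∈ cocycles (cap 1 0) m) :
    ∃ φ' ∈ cocycles (sphere cap (k + 1)) m, φ' =ᶠ[smallLists (cap 1 0) m] φ := by
  obtain ⟨α, hα, hαφ⟩ := F.surjective k hk 1 1 m φ hφ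
  obtain ⟨β, hβ, hβφ⟩ := F.surjective k hk (-1) 1 m φ hφ
  have hαβ : α - β ∈ coboundaries (sphere cap k) m :=
    F.restrictionInjective_sphere hk.le hm _
      (sub_mem (cocycles_anti (F.sphere_subset_cap 1 k) hα)
        (cocycles_anti (F.sphere_subset_cap (-1) k) hβ))
      ((mem_coboundaries_congr (hαφ.trans hβφ.symm).sub_eq).2 (zero_mem _))
  obtain ⟨γ, hγ⟩ := mem_coboundaries.1 hαβ
  have hagree : α =ᶠ[smallLists (cap 1 (k + 1) ∩ cap (-1) (k + 1)) m] β + δ γ := by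
    rw [F.inter_succ]
    filter_upwards [hγ] with l hl
    rw [Pi.add_apply, ← hl, Pi.sub_apply, add_sub_cancel]
  obtain ⟨χ, hχ, hχα, -⟩ := exists_mem_cocycles_union (F.isCompact _ _) (F.isCompact _ _) hα
    (add_mem hβ (coboundary_mem_cocycles γ)) hagree
  exact ⟨χ, hχ, (hχα.filter_mono (smallLists_mono (F.cap_zero_subset_cap 1 1 k) _)).trans hαφ⟩

lemma exists_separating_cocycle (F : HemisphereFiltration cap K) : ∃ τ ∈ cocycles (sphere cap 0) 1,
    τ =ᶠ[smallLists (cap 1 0) 1] 1 ∧ τ =ᶠ[smallLists (cap (-1) 0) 1] 0 := by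
  refine exists_mem_cocycles_union (F.isCompact _ _) (F.isCompact _ _) ?_ (zero_mem _) ?_
  · rw [mem_cocycles]
    filter_upwards [eventually_length_eq (cap 1 0) 2] with l hl
    obtain ⟨x, y, rfl⟩ := List.length_eq_two.1 hl
    simp [coboundary_cons, CharTwo.add_self_eq_zero]
  · rw [F.inter_zero, smallLists_empty]
    exact eventually_bot

lemma exists_isConnecting_sphere (F : HemisphereFiltration cap K)
    {k m : ℕ} {τ : Cochain X} (hτ : τ ∈ cocycles (sphere cap k) m) :
    ∃ τ' ∈ cocycles (sphere cap (k + 1)) (m + 1),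
      IsConnecting (cap 1 (k + 1)) (cap (-1) (k + 1)) m τ τ' :=
  exists_isConnecting (F.isCompact _ _) (F.isCompact _ _) (by rwa [F.inter_succ])

lemma exists_cup_notMem_coboundaries_one (F : HemisphereFiltration cap K)
    (hK : 2 ≤ K) {m : ℕ} {φ : Cochain X}
    (hφ : φ ∈ cocycles (sphere cap K) (m + 1)) (hne : φ ∉ coboundaries (cap 1 0) (m + 1)) :
    ∃ τ ∈ cocycles (sphere cap 1) 2, cup 1 τ φ ∉ coboundaries (sphere cap 1) (m + 2) := by
  obtain ⟨τ, hτ, hτ1, hτ0⟩ := F.exists_separating_cocycle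
  obtain ⟨τ', hτ', hconn⟩ := F.exists_isConnecting_sphere hτ
  refine ⟨τ', hτ', fun hB => hne ?_⟩
  have hK' : 0 < K := by omega
  have hconn' : IsConnecting _ _ (m + 1) (cup 0 τ φ) (cup 1 τ' φ) := hconn.cup
    (cocycles_anti ((cap_subset_sphere 1 1).trans (F.sphere_mono (by omega))) hφ)
  obtain ⟨η, hη, hsub⟩ := hconn'.exists_sub_mem_cocycles hB
  have hcup1 : cup 0 τ φ =ᶠ[smallLists (cap 1 0) (m + 1)] φ :=
    (cup_congr_left hτ1).trans (.of_eq (by ext l; simp [cup]))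
  have hcup0 : cup 0 τ φ =ᶠ[smallLists (cap (-1) 0) (m + 1)] 0 :=
    (cup_congr_left hτ0).trans (.of_eq (by ext l; simp [cup]))
  -- Since `η` extends over a 2-dimensional hemisphere, it has the same class over both poles.
  obtain ⟨w, hw, hwη⟩ := F.surjective 1 hK 1 (-1) (m + 1) η
    (cocycles_anti (F.cap_zero_subset_cap (-1) (-1) 0) hη)
  have hw1 := cocycles_anti (F.sphere_subset_cap 1 1) hw
  have hηw : η - w ∈ coboundaries (cap (-1) 1) (m + 1) :=
    F.injective 0 hK' _ (-1) _ _ (sub_mem hη (cocycles_anti (cap_subset_sphere (-1) 1) hw1))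
      ((mem_coboundaries_congr hwη.symm.sub_eq).2 (zero_mem _))
  have hcw : cup 0 τ φ - η + w ∈ coboundaries (cap 1 1) (m + 1) := by
    refine F.injective 0 hK' _ (-1) _ _
      (add_mem hsub (cocycles_anti (cap_subset_sphere 1 1) hw1)) ?_
    refine (mem_coboundaries_congr ?_).2 (zero_mem _)
    filter_upwards [hcup0, hwη] with l hl hl'
    simp only [Pi.add_apply, Pi.sub_apply, Pi.zero_apply, hl, hl', zero_sub, neg_add_cancel]
  refine (mem_coboundaries_congr hcup1).1 ?_
  simpa using add_mem (coboundaries_anti (F.cap_zero_subset_cap 1 1 0) hcw)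
    (coboundaries_anti (F.cap_zero_subset_cap 1 (-1) 0) hηw)

lemma exists_cup_notMem_coboundaries (F : HemisphereFiltration cap K) (hK : 2 ≤ K) {D : ℕ}
    (hacyc : ∀ s, ∀ m > D + 1, Acyclic (cap s 0) m) {φ : Cochain X}
    (hφ : φ ∈ cocycles (sphere cap K) (D + 1)) (hne : φ ∉ coboundaries (cap 1 0) (D + 1)) {k : ℕ}
    (hk : k < K) : ∃ τ ∈ cocycles (sphere cap (k + 1)) (k + 2),
      cup (k + 1) τ φ ∉ coboundaries (sphere cap (k + 1)) (k + 1 + D + 1) := by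
  induction k with
  | zero =>
    rw [zero_add, add_comm 1 D]
    exact F.exists_cup_notMem_coboundaries_one hK hφ hne
  | succ k ih =>
    obtain ⟨τ, hτ, hneτ⟩ := ih (by omega)
    obtain ⟨τ', hτ', hconn⟩ := F.exists_isConnecting_sphere hτ
    refine ⟨τ', hτ', fun hB => hneτ ?_⟩
    have hconn' : IsConnecting _ _ (k + 1 + D + 1) (cup (k + 1) τ φ) (cup (k + 2) τ' φ) :=
      hconn.cup (cocycles_anti ((cap_subset_sphere 1 _).trans (F.sphere_mono hk)) hφ)
    obtain ⟨η, hη, hsub⟩ := hconn'.exists_sub_mem_cocycles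
      (by rwa [show k + 1 + D + 1 + 1 = k + 1 + 1 + D + 1 by omega])
    have hcap := F.acyclic_cap hk fun s => hacyc s (k + 1 + D + 1) (by omega)
    simpa using add_mem (coboundaries_anti (F.sphere_subset_cap 1 _) (hcap 1 hsub))
      (coboundaries_anti (F.sphere_subset_cap (-1) _) (hcap (-1) hη))

lemma not_acyclic_circle (F : HemisphereFiltration cap K)
    (hK : 0 < K) {a b : X} (ha : cap 1 0 = {a}) (hb : cap (-1) 0 = {b}) :
    ¬ Acyclic (sphere cap 1) 2 := by
  intro hacyc
  obtain ⟨τ, hτ, hτ1, hτ0⟩ := F.exists_separating_cocycle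
  obtain ⟨τ', hτ', hconn⟩ := F.exists_isConnecting_sphere hτ
  obtain ⟨η, hη, hsub⟩ := hconn.exists_sub_mem_cocycles (hacyc hτ')
  have hcap (s : ℤˣ) : Acyclic (cap s 1) 1 := F.acyclic_cap hK (fun s => by
    rcases Int.units_eq_one_or s with rfl | rfl
    · exact ha ▸ acyclic_singleton a 1
    · exact hb ▸ acyclic_singleton b 1) s
  have haτ : a ∈ cap 1 0 := ha ▸ rfl
  have hbτ : b ∈ cap (-1) 0 := hb ▸ rfl
  have h1 := apply_singleton_eq_of_mem_coboundaries (hcap 1 hsub)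
    (F.cap_zero_subset_cap _ _ _ haτ) (F.cap_zero_subset_cap _ _ _ hbτ)
  have h2 := apply_singleton_eq_of_mem_coboundaries (hcap (-1) hη)
    (F.cap_zero_subset_cap _ _ _ haτ) (F.cap_zero_subset_cap _ _ _ hbτ)
  have h3 : τ [a] = 1 := apply_singleton_of_eventually hτ1 haτ
  have h4 : τ [b] = 0 := apply_singleton_of_eventually hτ0 hbτ
  rw [Pi.sub_apply, Pi.sub_apply, h2, sub_left_inj, h3, h4] at h1
  exact one_ne_zero h1

end HemisphereFiltration

end Filtration

section Unitary

open Matrix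

attribute [local instance] Matrix.normedAddCommGroup

/-! ### Unitary matrices with prescribed column -/

section Reflection

variable {𝕜 ι : Type*} [RCLike 𝕜] [Fintype ι] [DecidableEq ι] {w v : ι → 𝕜}

/-- The unitary matrix that moves the unit vector `w` to the unit vector `v ≠ w` and is the identity
on the orthogonal complement of `v - w`. -/
noncomputable def reflection (w v : ι → 𝕜) : Matrix ι ι 𝕜 :=
  1 + (star v ⬝ᵥ w - 1)⁻¹ • vecMulVec (v - w) (star (v - w))

lemma reflection_mulVec (hw : star w ⬝ᵥ w = 1) (h : star v ⬝ᵥ w ≠ 1) :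
    reflection w v *ᵥ w = v := by
  have h' : star v ⬝ᵥ w - 1 ≠ 0 := sub_ne_zero.2 h
  rw [reflection, add_mulVec, one_mulVec, smul_mulVec, vecMulVec_mulVec, star_sub, sub_dotProduct,
    hw, op_smul_eq_smul, inv_smul_smul₀ h', add_sub_cancel]

lemma reflection_mem_unitaryGroup (hw : star w ⬝ᵥ w = 1) (hv : star v ⬝ᵥ v = 1)
    (h : star v ⬝ᵥ w ≠ 1) : reflection w v ∈ unitaryGroup ι 𝕜 := by
  have hne : star v ⬝ᵥ w - 1 ≠ 0 := sub_ne_zero.2 h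
  have hne' : star (star v ⬝ᵥ w) - 1 ≠ 0 := by
    simpa only [star_sub, star_one] using star_ne_zero.2 hne
  have hdot : star (v - w) ⬝ᵥ (v - w) = 2 - star v ⬝ᵥ w - star (star v ⬝ᵥ w) := by
    rw [star_sub, sub_dotProduct, dotProduct_sub, dotProduct_sub, hw, hv, star_dotProduct w v]
    ring
  have hcoeff : (star v ⬝ᵥ w - 1)⁻¹ + ((star (star v ⬝ᵥ w) - 1)⁻¹ +
      (star (star v ⬝ᵥ w) - 1)⁻¹ * (star v ⬝ᵥ w - 1)⁻¹ *
        (2 - star v ⬝ᵥ w - star (star v ⬝ᵥ w))) = 0 := by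
    field_simp
    ring
  have hself : star (vecMulVec (v - w) (star (v - w))) = vecMulVec (v - w) (star (v - w)) := by
    rw [star_eq_conjTranspose, conjTranspose_vecMulVec, star_star]
  rw [mem_unitaryGroup_iff', reflection, star_add, star_one, star_smul, hself, add_mul, mul_add,
    mul_add, one_mul, one_mul, mul_one, smul_mul_smul_comm, vecMulVec_mul_vecMulVec, hdot,
    vecMulVec_smul, smul_smul, star_inv₀, star_sub (star v ⬝ᵥ w), star_one, add_assoc, ← add_smul,
    ← add_smul, hcoeff, zero_smul, add_zero]

lemma continuousOn_reflection (w : ι → 𝕜) :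
    ContinuousOn (reflection w) {v | star v ⬝ᵥ w ≠ 1} := by
  have hcoeff : ContinuousOn (fun v : ι → 𝕜 => (star v ⬝ᵥ w - 1)⁻¹) {v | star v ⬝ᵥ w ≠ 1} :=
    (by fun_prop : ContinuousOn (fun v : ι → 𝕜 => star v ⬝ᵥ w - 1) _).inv₀
      fun v hv => sub_ne_zero.2 hv
  have hmat : Continuous fun v : ι → 𝕜 => vecMulVec (v - w) (star (v - w)) :=
    Continuous.matrix_vecMulVec (by fun_prop) (by fun_prop)
  exact continuousOn_const.add (hcoeff.smul hmat.continuousOn)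

end Reflection

section UnitaryOver

lemma continuous_col {m n R : Type*} [TopologicalSpace R] (j : n) :
    Continuous fun M : Matrix m n R => M.col j := by
  unfold col; fun_prop

variable {𝕜 ι : Type*} [RCLike 𝕜] [Fintype ι] [DecidableEq ι] {j : ι} {C : Set (ι → 𝕜)}
  {w p : ι → 𝕜} {M : Matrix ι ι 𝕜}

/-- The unitary matrices whose `j`-th column lies in `C`. -/
def unitaryOver (j : ι) (C : Set (ι → 𝕜)) : Set (Matrix ι ι 𝕜) :=
  unitaryGroup ι 𝕜 ∩ {M | M.col j ∈ C}

lemma star_col_dotProduct_col (hM : M ∈ unitaryGroup ι 𝕜) (j : ι) :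
    star (M.col j) ⬝ᵥ M.col j = 1 := by
  have := congrFun (congrFun (mem_unitaryGroup_iff'.1 hM) j) j
  rwa [one_apply_eq] at this

lemma isCompact_unitaryGroup : IsCompact (unitaryGroup ι 𝕜 : Set (Matrix ι ι 𝕜)) := by
  have : ProperSpace (Matrix ι ι 𝕜) := inferInstanceAs (ProperSpace (ι → ι → 𝕜))
  have hclosed : IsClosed (unitaryGroup ι 𝕜 : Set (Matrix ι ι 𝕜)) := by
    have : (unitaryGroup ι 𝕜 : Set (Matrix ι ι 𝕜)) = {M | Mᴴ * M = 1} :=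
      Set.ext fun M => mem_unitaryGroup_iff'
    rw [this]
    exact isClosed_eq (by fun_prop) continuous_const
  exact Metric.isCompact_of_isClosed_isBounded hclosed <| isBounded_iff_forall_norm_le.2
    ⟨1, fun M hM => (Matrix.norm_le_iff zero_le_one).2 (entry_norm_bound_of_unitary hM)⟩

lemma isCompact_unitaryOver (hC : IsClosed C) : IsCompact (unitaryOver j C) :=
  isCompact_unitaryGroup.inter_right (hC.preimage (continuous_col j))

/-- Moves the `j`-th column of a unitary matrix to `v`, through the auxiliary vector `w`. -/
noncomputable def transport (j : ι) (w v : ι → 𝕜) (M : Matrix ι ι 𝕜) : Matrix ι ι 𝕜 :=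
  reflection w v * (star (reflection w (M.col j)) * M)

lemma transport_mem_unitaryGroup {v : ι → 𝕜} (hw : star w ⬝ᵥ w = 1) (hv : star v ⬝ᵥ v = 1)
    (hvw : star v ⬝ᵥ w ≠ 1) (hM : M ∈ unitaryGroup ι 𝕜) (hMw : star (M.col j) ⬝ᵥ w ≠ 1) :
    transport j w v M ∈ unitaryGroup ι 𝕜 :=
  mul_mem (reflection_mem_unitaryGroup hw hv hvw) (mul_mem (Unitary.star_mem
    (reflection_mem_unitaryGroup hw (star_col_dotProduct_col hM j) hMw)) hM)

lemma col_transport {v : ι → 𝕜} (hw : star w ⬝ᵥ w = 1) (hvw : star v ⬝ᵥ w ≠ 1)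
    (hM : M ∈ unitaryGroup ι 𝕜) (hMw : star (M.col j) ⬝ᵥ w ≠ 1) :
    (transport j w v M).col j = v := by
  have hunit := reflection_mem_unitaryGroup hw (star_col_dotProduct_col hM j) hMw
  have hback : star (reflection w (M.col j)) *ᵥ M.col j = w := by
    nth_rw 2 [← reflection_mulVec hw hMw]
    rw [mulVec_mulVec, Unitary.star_mul_self_of_mem hunit, one_mulVec]
  calc (transport j w v M).col j
      = reflection w v *ᵥ (star (reflection w (M.col j)) *ᵥ M.col j) := by
        simp only [transport, ← mul_assoc, mulVec_mulVec]; rfl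
    _ = v := by rw [hback, reflection_mulVec hw hvw]

lemma transport_col (hw : star w ⬝ᵥ w = 1) (hM : M ∈ unitaryGroup ι 𝕜)
    (hMw : star (M.col j) ⬝ᵥ w ≠ 1) : transport j w (M.col j) M = M := by
  rw [transport, ← mul_assoc, Unitary.mul_star_self_of_mem
    (reflection_mem_unitaryGroup hw (star_col_dotProduct_col hM j) hMw), one_mul]

/-- `c` contracts the set `C` of unit vectors to its point `p`, which is kept fixed at time `1`. -/
structure IsSphericalContraction (C : Set (ι → 𝕜)) (p : ι → 𝕜) (c : ℝ × (ι → 𝕜) → ι → 𝕜) :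
    Prop where
  unit : ∀ v ∈ C, star v ⬝ᵥ v = 1
  mem : p ∈ C
  continuousOn : ContinuousOn c (Set.Icc 0 1 ×ˢ C)
  mapsTo : Set.MapsTo c (Set.Icc 0 1 ×ˢ C) C
  zero : ∀ v ∈ C, c (0, v) = v
  one : ∀ v ∈ C, c (1, v) = p

namespace IsSphericalContraction

variable {c : ℝ × (ι → 𝕜) → ι → 𝕜}

lemma continuousOn_transport (hc : IsSphericalContraction C p c)
    (hCw : ∀ v ∈ C, star v ⬝ᵥ w ≠ 1) :
    ContinuousOn (fun q : ℝ × Matrix ι ι 𝕜 => transport j w (c (q.1, q.2.col j)) q.2)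
      (Set.Icc 0 1 ×ˢ unitaryOver j C) := by
  have hcol : Continuous fun q : ℝ × Matrix ι ι 𝕜 => q.2.col j :=
    (continuous_col j).comp continuous_snd
  have hpath : ContinuousOn (fun q : ℝ × Matrix ι ι 𝕜 => c (q.1, q.2.col j))
      (Set.Icc 0 1 ×ˢ unitaryOver j C) :=
    hc.continuousOn.comp (continuous_fst.prodMk hcol).continuousOn fun q hq => ⟨hq.1, hq.2.2⟩
  have hleft := (continuousOn_reflection w).comp hpath fun q hq =>
    hCw _ (hc.mapsTo ⟨hq.1, hq.2.2⟩)
  have hright := (continuousOn_reflection w).comp hcol.continuousOn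
    (s := Set.Icc 0 1 ×ˢ unitaryOver j C) fun q hq => hCw _ hq.2.2
  exact hleft.mul (hright.star.mul continuousOn_snd)

lemma transport_mem_unitaryOver (hc : IsSphericalContraction C p c) (hw : star w ⬝ᵥ w = 1)
    (hCw : ∀ v ∈ C, star v ⬝ᵥ w ≠ 1) {v : ι → 𝕜} {B : Set (ι → 𝕜)} (hv : v ∈ C) (hvB : v ∈ B)
    (hM : M ∈ unitaryOver j C) : transport j w v M ∈ unitaryOver j B :=
  ⟨transport_mem_unitaryGroup hw (hc.unit v hv) (hCw v hv) hM.1 (hCw _ hM.2), by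
    rwa [Set.mem_ofPred_eq, col_transport hw (hCw v hv) hM.1 (hCw _ hM.2)]⟩

lemma restrictionInjective_unitaryOver (hc : IsSphericalContraction C p c) (hC : IsClosed C)
    (hw : star w ⬝ᵥ w = 1) (hCw : ∀ v ∈ C, star v ⬝ᵥ w ≠ 1) (m : ℕ) :
    RestrictionInjective (unitaryOver j C) (unitaryOver j {p}) m := by
  have hmem {t : ℝ} (ht : t ∈ Set.Icc (0 : ℝ) 1) {M : Matrix ι ι 𝕜} (hM : M ∈ unitaryOver j C) :
      c (t, M.col j) ∈ C := hc.mapsTo ⟨ht, hM.2⟩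
  refine restrictionInjective_of_homotopy (isCompact_unitaryOver hC)
    (hc.continuousOn_transport hCw) ?_ ?_ ?_ m
  · exact fun q hq => hc.transport_mem_unitaryOver hw hCw (hmem hq.1 hq.2) (hmem hq.1 hq.2) hq.2
  · intro M hM
    simp only [hc.zero _ hM.2]
    exact transport_col hw hM.1 (hCw _ hM.2)
  · exact fun M hM => hc.transport_mem_unitaryOver hw hCw (hmem (by simp) hM)
      (hc.one _ hM.2) hM

lemma restrictionSurjective_unitaryOver (hc : IsSphericalContraction C p c) (hC : IsClosed C)
    (hw : star w ⬝ᵥ w = 1) (hCw : ∀ v ∈ C, star v ⬝ᵥ w ≠ 1) (m : ℕ) :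
    RestrictionSurjective (unitaryOver j C) (unitaryOver j {p}) m := by
  have hmem {M : Matrix ι ι 𝕜} (hM : M ∈ unitaryOver j C) : c (1, M.col j) ∈ C :=
    hc.mapsTo ⟨by simp, hM.2⟩
  refine restrictionSurjective_of_retraction (r := fun M => transport j w (c (1, M.col j)) M)
    (isCompact_unitaryOver hC) ?_ ?_ ?_ ?_ m
  · exact Set.inter_subset_inter_right _
      (Set.preimage_mono (f := fun M : Matrix ι ι 𝕜 => M.col j) (Set.singleton_subset_iff.2 hc.mem))
  · have hpair : Continuous fun M : Matrix ι ι 𝕜 => ((1 : ℝ), M) := by fun_prop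
    have hmaps : Set.MapsTo (fun M : Matrix ι ι 𝕜 => ((1 : ℝ), M)) (unitaryOver j C)
        (Set.Icc 0 1 ×ˢ unitaryOver j C) := fun M hM => ⟨by simp, hM⟩
    have hcont := (hc.continuousOn_transport (j := j) hCw).comp hpair.continuousOn hmaps
    exact hcont
  · exact fun M hM => hc.transport_mem_unitaryOver hw hCw (hmem hM) (hc.one _ hM.2) hM
  · rintro M ⟨hM, hp : M.col j = p⟩
    have hMC : M.col j ∈ C := hp ▸ hc.mem
    simp only [hc.one _ hMC]
    conv_lhs => rw [← hp]
    exact transport_col hw hM (hCw _ hMC)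

end IsSphericalContraction

end UnitaryOver

/-! ### Hemispheres in the space of columns -/

section Coordinates

variable {n : ℕ}

/-- The real orthonormal basis `e₀, i e₀, e₁, i e₁, …` of `ℂⁿ⁺¹`, extended by zero. -/
noncomputable def basisVec (k : ℕ) : Fin (n + 1) → ℂ :=
  if h : k / 2 < n + 1 then Pi.single ⟨k / 2, h⟩ (Complex.I ^ (k % 2)) else 0

lemma basisVec_two_mul (j : Fin (n + 1)) :
    (basisVec (2 * j) : Fin (n + 1) → ℂ) = Pi.single j 1 := by
  have h : 2 * (j : ℕ) / 2 = j := by omega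
  simp [basisVec, h, j.is_lt]

lemma basisVec_two_mul_add_one (j : Fin (n + 1)) :
    (basisVec (2 * j + 1) : Fin (n + 1) → ℂ) = Pi.single j Complex.I := by
  have h : (2 * (j : ℕ) + 1) / 2 = j := by omega
  have h' : (2 * (j : ℕ) + 1) % 2 = 1 := by omega
  simp [basisVec, h, h', j.is_lt]

lemma basisVec_of_lt {k : ℕ} (hk : 2 * n + 1 < k) : (basisVec k : Fin (n + 1) → ℂ) = 0 :=
  dif_neg (by omega)

lemma exists_eq_two_mul_or {k : ℕ} (hk : k ≤ 2 * n + 1) :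
    ∃ j : Fin (n + 1), k = 2 * j ∨ k = 2 * j + 1 :=
  ⟨⟨k / 2, by omega⟩, by dsimp only; omega⟩

/-- The `k`-th real coordinate on `ℂⁿ⁺¹`, with respect to `basisVec`. -/
noncomputable def coord (k : ℕ) : (Fin (n + 1) → ℂ) →ₗ[ℝ] ℝ where
  toFun v := (star v ⬝ᵥ basisVec k).re
  map_add' v w := by rw [star_add, add_dotProduct, Complex.add_re]
  map_smul' c v := by
    rw [star_smul, smul_dotProduct, star_trivial, Complex.smul_re, RingHom.id_apply]

lemma coord_apply (k : ℕ) (v : Fin (n + 1) → ℂ) : coord k v = (star v ⬝ᵥ basisVec k).re := rfl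

lemma coord_two_mul (j : Fin (n + 1)) (v : Fin (n + 1) → ℂ) : coord (2 * j) v = (v j).re := by
  simp [coord_apply, basisVec_two_mul]

lemma coord_two_mul_add_one (j : Fin (n + 1)) (v : Fin (n + 1) → ℂ) :
    coord (2 * j + 1) v = (v j).im := by
  simp [coord_apply, basisVec_two_mul_add_one]

lemma coord_of_lt {k : ℕ} (hk : 2 * n + 1 < k) (v : Fin (n + 1) → ℂ) : coord k v = 0 := by
  simp [coord_apply, basisVec_of_lt hk]

lemma coord_injective {v w : Fin (n + 1) → ℂ} (h : ∀ i, coord i v = coord i w) : v = w :=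
  funext fun j => Complex.ext (by simpa only [coord_two_mul] using h (2 * j))
    (by simpa only [coord_two_mul_add_one] using h (2 * j + 1))

lemma coord_basisVec {k : ℕ} (hk : k ≤ 2 * n + 1) (i : ℕ) :
    coord i (basisVec k : Fin (n + 1) → ℂ) = if i = k then 1 else 0 := by
  rcases lt_or_ge (2 * n + 1) i with hi | hi
  · rw [coord_of_lt hi, if_neg (by omega)]
  obtain ⟨j, rfl | rfl⟩ := exists_eq_two_mul_or hk <;>
    obtain ⟨l, rfl | rfl⟩ := exists_eq_two_mul_or hi <;>
    simp only [basisVec_two_mul, basisVec_two_mul_add_one, coord_two_mul, coord_two_mul_add_one,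
      Pi.single_apply, Fin.ext_iff] <;> split_ifs <;> first | omega | simp

lemma star_basisVec_dotProduct_self {k : ℕ} (hk : k ≤ 2 * n + 1) :
    star (basisVec k : Fin (n + 1) → ℂ) ⬝ᵥ basisVec k = 1 := by
  obtain ⟨j, rfl | rfl⟩ := exists_eq_two_mul_or hk <;>
    simp [basisVec_two_mul, basisVec_two_mul_add_one]

lemma star_units_smul_basisVec_dotProduct_self (s : ℤˣ) {k : ℕ} (hk : k ≤ 2 * n + 1) :
    star (s • basisVec k : Fin (n + 1) → ℂ) ⬝ᵥ (s • basisVec k) = 1 := by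
  obtain rfl | rfl := Int.units_eq_one_or s <;> simp [star_basisVec_dotProduct_self hk]

lemma coord_units_smul (k : ℕ) (s : ℤˣ) (v : Fin (n + 1) → ℂ) :
    coord k (s • v) = s • coord k v := by
  simp only [Units.smul_def, map_zsmul]

end Coordinates

section Normalized

variable {ι : Type*} [Fintype ι]

lemma star_dotProduct_self (v : ι → ℂ) : star v ⬝ᵥ v = (‖WithLp.toLp 2 v‖ : ℂ) ^ 2 := by
  have := inner_self_eq_norm_sq_to_K (𝕜 := ℂ) (WithLp.toLp 2 v)
  rwa [EuclideanSpace.inner_toLp_toLp, dotProduct_comm] at this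

/-- The unit vector in the direction of `v`, for the Euclidean norm rather than the supremum norm
that `ι → ℂ` carries. -/
noncomputable def normalized (v : ι → ℂ) : ι → ℂ := ‖WithLp.toLp 2 v‖⁻¹ • v

lemma star_normalized_dotProduct_self {v : ι → ℂ} (h : v ≠ 0) :
    star (normalized v) ⬝ᵥ normalized v = 1 := by
  have hne : ‖WithLp.toLp 2 v‖ ≠ 0 := by simpa using h
  rw [star_dotProduct_self, normalized, WithLp.toLp_smul, norm_smul, norm_inv, norm_norm,
    inv_mul_cancel₀ hne, Complex.ofReal_one, one_pow]

lemma normalized_of_unit {v : ι → ℂ} (h : star v ⬝ᵥ v = 1) : normalized v = v := by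
  rw [star_dotProduct_self] at h
  have hsq : ‖WithLp.toLp 2 v‖ ^ 2 = 1 := by exact_mod_cast h
  rw [normalized, (pow_eq_one_iff_of_nonneg (norm_nonneg _) two_ne_zero).1 hsq, inv_one, one_smul]

lemma continuousOn_normalized : ContinuousOn (normalized : (ι → ℂ) → ι → ℂ) {0}ᶜ := by
  have hnorm : Continuous fun v : ι → ℂ => ‖WithLp.toLp 2 v‖ := by fun_prop
  exact (hnorm.continuousOn.inv₀ fun v hv => by simpa using hv).smul continuousOn_id

end Normalized

section Hemisphere

variable {n k : ℕ} {v : Fin (n + 1) → ℂ}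

/-- The closed hemisphere of sign `s` of the unit sphere in the span of the first `k + 1` vectors
`basisVec i`; the two of them meet in the sphere one dimension lower. -/
def hemisphere (s : ℤˣ) (k : ℕ) : Set (Fin (n + 1) → ℂ) :=
  {v | star v ⬝ᵥ v = 1 ∧ (∀ i > k, coord i v = 0) ∧ 0 ≤ s • coord k v}

lemma isClosed_hemisphere (s : ℤˣ) (k : ℕ) :
    IsClosed (hemisphere s k : Set (Fin (n + 1) → ℂ)) := by
  simp only [hemisphere, Set.ofPred_and, Set.ofPred_forall]
  refine (isClosed_eq (by fun_prop) continuous_const).inter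
    ((isClosed_iInter fun i => isClosed_iInter fun _ =>
      isClosed_eq (by fun_prop) continuous_const).inter (isClosed_le continuous_const ?_))
  simp only [Units.smul_def]
  fun_prop

lemma hemisphere_zero (s : ℤˣ) :
    (hemisphere s 0 : Set (Fin (n + 1) → ℂ)) = {s • basisVec 0} := by
  ext v
  rw [Set.mem_singleton_iff]
  constructor
  · rintro ⟨hunit, hv, hs⟩
    have hspan : v = coord 0 v • basisVec 0 := coord_injective fun i => by
      rcases Nat.eq_zero_or_pos i with rfl | hi
      · simp [coord_basisVec]
      · simp [coord_basisVec, hv i hi, hi.ne']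
    have hsq : coord 0 v * coord 0 v = 1 := by
      rw [hspan, star_smul, smul_dotProduct, dotProduct_smul,
        star_basisVec_dotProduct_self (by omega)] at hunit
      have := congrArg Complex.re hunit
      simpa using this
    rw [hspan]
    obtain rfl | rfl := Int.units_eq_one_or s <;>
      rcases mul_self_eq_one_iff.1 hsq with h | h <;> simp [h] at hs ⊢ <;> linarith
  · rintro rfl
    refine ⟨?_, fun i hi => ?_, ?_⟩
    · rw [star_units_smul_basisVec_dotProduct_self s (by omega)]
    · rw [coord_units_smul, coord_basisVec (by omega), if_neg (by omega), smul_zero]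
    · rw [coord_units_smul, coord_basisVec (by omega), if_pos rfl, smul_smul, Int.units_mul_self,
        one_smul]
      exact zero_le_one

/-- A path from `v` to the pole `s • basisVec 0`, bent towards `σ • basisVec k` so that it stays
away from `0` when `v` lies in the hemisphere `hemisphere σ k`. -/
noncomputable def arc (σ s : ℤˣ) (k : ℕ) (t : ℝ) (v : Fin (n + 1) → ℂ) : Fin (n + 1) → ℂ :=
  (1 - t) • v + (t * (1 - t)) • σ • basisVec k + t • s • basisVec 0

lemma arc_zero (σ s : ℤˣ) (k : ℕ) (v : Fin (n + 1) → ℂ) : arc σ s k 0 v = v := by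
  simp [arc]

lemma arc_one (σ s : ℤˣ) (k : ℕ) (v : Fin (n + 1) → ℂ) : arc σ s k 1 v = s • basisVec 0 := by
  simp [arc]

lemma coord_arc (σ s : ℤˣ) (hk : k ≤ 2 * n + 1) (t : ℝ) (v : Fin (n + 1) → ℂ) (i : ℕ) :
    coord i (arc σ s k t v) = (1 - t) * coord i v + t * (1 - t) * σ • (if i = k then 1 else 0) +
      t * s • (if i = 0 then 1 else 0) := by
  simp only [arc, map_add, map_smul, coord_units_smul, coord_basisVec hk,
    coord_basisVec (Nat.zero_le _), smul_eq_mul]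

lemma units_smul_coord_arc (σ s : ℤˣ) (hk : k < 2 * n + 1) (t : ℝ) (v : Fin (n + 1) → ℂ) :
    σ • coord (k + 1) (arc σ s (k + 1) t v) = (1 - t) * (σ • coord (k + 1) v + t) := by
  rw [coord_arc _ _ hk]
  obtain rfl | rfl := Int.units_eq_one_or σ <;> simp <;> ring

lemma arc_ne_zero (σ s : ℤˣ) (hk : k < 2 * n + 1) {t : ℝ} (ht : t ∈ Set.Icc (0 : ℝ) 1)
    (hv : v ∈ hemisphere σ (k + 1)) : arc σ s (k + 1) t v ≠ 0 := by
  intro h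
  have hcoord := units_smul_coord_arc σ s hk t v
  rw [h, map_zero, smul_zero, eq_comm, mul_eq_zero, sub_eq_zero] at hcoord
  rcases hcoord with rfl | hcoord
  · have := star_units_smul_basisVec_dotProduct_self s (Nat.zero_le (2 * n + 1))
    rw [← arc_one σ s (k + 1) v, h] at this
    simp at this
  · have ht0 : t = 0 := by linarith [ht.1, hv.2.2]
    have := hv.1
    rw [← arc_zero σ s (k + 1) v, ← ht0, h] at this
    simp at this

lemma normalized_arc_mem_hemisphere (σ s : ℤˣ) (hk : k < 2 * n + 1) {t : ℝ}
    (ht : t ∈ Set.Icc (0 : ℝ) 1) (hv : v ∈ hemisphere σ (k + 1)) :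
    normalized (arc σ s (k + 1) t v) ∈ hemisphere σ (k + 1) := by
  refine ⟨star_normalized_dotProduct_self (arc_ne_zero σ s hk ht hv), fun i hi => ?_, ?_⟩
  · rw [normalized, map_smul, coord_arc _ _ hk, hv.2.1 i hi, if_neg (by omega), if_neg (by omega)]
    simp
  · rw [normalized, map_smul, smul_comm, units_smul_coord_arc _ _ hk]
    exact mul_nonneg (inv_nonneg.2 (norm_nonneg _))
      (mul_nonneg (sub_nonneg.2 ht.2) (add_nonneg hv.2.2 ht.1))

lemma isSphericalContraction_arc (σ s : ℤˣ) (hk : k < 2 * n + 1) :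
    IsSphericalContraction (hemisphere σ (k + 1)) (s • basisVec 0 : Fin (n + 1) → ℂ)
      fun q => normalized (arc σ s (k + 1) q.1 q.2) where
  unit v hv := hv.1
  mem := by
    refine ⟨?_, fun i hi => ?_, ?_⟩
    · rw [star_units_smul_basisVec_dotProduct_self s (by omega)]
    · rw [coord_units_smul, coord_basisVec (by omega), if_neg (by omega), smul_zero]
    · rw [coord_units_smul, coord_basisVec (by omega), if_neg (by omega), smul_zero, smul_zero]
  continuousOn := by
    have harc : Continuous fun q : ℝ × (Fin (n + 1) → ℂ) => arc σ s (k + 1) q.1 q.2 := by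
      unfold arc; fun_prop
    exact continuousOn_normalized.comp harc.continuousOn fun q hq => arc_ne_zero σ s hk hq.1 hq.2
  mapsTo q hq := normalized_arc_mem_hemisphere σ s hk hq.1 hq.2
  zero v hv := by rw [arc_zero, normalized_of_unit hv.1]
  one v _ := by
    rw [arc_one, normalized_of_unit (star_units_smul_basisVec_dotProduct_self s (by omega))]

lemma star_dotProduct_neg_smul_basisVec_ne_one {σ : ℤˣ} (hv : v ∈ hemisphere σ k) :
    star v ⬝ᵥ (-σ) • basisVec k ≠ 1 := by
  intro h
  have hre : (star v ⬝ᵥ (-σ) • basisVec k).re = -(σ • coord k v) := by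
    rw [coord_apply]
    obtain rfl | rfl := Int.units_eq_one_or σ <;> simp
  rw [h, Complex.one_re] at hre
  linarith [hv.2.2]

end Hemisphere

/-! ### The cohomology of the unitary groups -/

section ColumnFiltration

variable {n : ℕ}

/-- The unitary matrices whose first column lies in the hemisphere `hemisphere s k`: the filtration
used on the bundle `U(n) → U(n+1) → S^(2n+1)`. -/
def columnCap (n : ℕ) (s : ℤˣ) (k : ℕ) : Set (Matrix (Fin (n + 1)) (Fin (n + 1)) ℂ) :=
  unitaryOver 0 (hemisphere s k)

lemma isCompact_columnCap (n : ℕ) (s : ℤˣ) (k : ℕ) : IsCompact (columnCap n s k) :=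
  isCompact_unitaryOver (isClosed_hemisphere s k)

lemma sphere_columnCap (n k : ℕ) :
    sphere (columnCap n) k =
      (unitaryGroup (Fin (n + 1)) ℂ : Set _) ∩ {M | ∀ i > k, coord i (M.col 0) = 0} := by
  ext M
  constructor
  · rintro (⟨hM, h⟩ | ⟨hM, h⟩) <;> exact ⟨hM, h.2.1⟩
  · rintro ⟨hM, h⟩
    have hunit := star_col_dotProduct_col hM 0
    rcases le_total 0 (coord k (M.col 0)) with hk | hk
    · exact .inl ⟨hM, hunit, h, by simpa using hk⟩
    · exact .inr ⟨hM, hunit, h, by simpa using hk⟩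

lemma sphere_columnCap_top (n : ℕ) :
    sphere (columnCap n) (2 * n + 1) = (unitaryGroup (Fin (n + 1)) ℂ : Set _) := by
  rw [sphere_columnCap, Set.inter_eq_left]
  exact fun M _ i hi => coord_of_lt hi _

lemma hemisphereFiltration_columnCap (n : ℕ) :
    HemisphereFiltration (columnCap n) (2 * n + 1) where
  isCompact := isCompact_columnCap n
  inter_zero := by
    rw [columnCap, columnCap, hemisphere_zero, hemisphere_zero, Set.eq_empty_iff_forall_notMem]
    rintro M ⟨⟨-, h : M.col 0 = _⟩, -, h' : M.col 0 = _⟩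
    have hcoord := congrArg (coord 0) (h.symm.trans h')
    rw [coord_units_smul, coord_units_smul, coord_basisVec (Nat.zero_le _), if_pos rfl] at hcoord
    norm_num at hcoord
  inter_succ k := by
    rw [sphere_columnCap]
    ext M
    constructor
    · rintro ⟨⟨hM, -, h, hpos⟩, -, -, -, hneg⟩
      refine ⟨hM, fun i hi => ?_⟩
      rcases (Nat.succ_le_of_lt hi).eq_or_lt with rfl | hi
      · rw [Units.neg_smul, one_smul, neg_nonneg] at hneg
        rw [one_smul] at hpos
        exact hneg.antisymm hpos
      · exact h i hi
    · rintro ⟨hM, h⟩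
      have hunit := star_col_dotProduct_col hM 0
      have hmem (s : ℤˣ) : M ∈ columnCap n s (k + 1) :=
        ⟨hM, hunit, fun i hi => h i (by omega), by rw [h (k + 1) (by omega), smul_zero]⟩
      exact ⟨hmem 1, hmem (-1)⟩
  injective k hk s t m := by
    rw [columnCap, columnCap, hemisphere_zero]
    exact (isSphericalContraction_arc s t hk).restrictionInjective_unitaryOver
      (isClosed_hemisphere _ _) (star_units_smul_basisVec_dotProduct_self _ hk)
      (fun _ => star_dotProduct_neg_smul_basisVec_ne_one) m
  surjective k hk s t m := by
    rw [columnCap, columnCap, hemisphere_zero]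
    exact (isSphericalContraction_arc s t hk).restrictionSurjective_unitaryOver
      (isClosed_hemisphere _ _) (star_units_smul_basisVec_dotProduct_self _ hk)
      (fun _ => star_dotProduct_neg_smul_basisVec_ne_one) m

end ColumnFiltration

section Fibre

variable {n : ℕ} {s : ℤˣ}

lemma mem_columnCap_zero {M : Matrix (Fin (n + 1)) (Fin (n + 1)) ℂ} :
    M ∈ columnCap n s 0 ↔
      M ∈ unitaryGroup (Fin (n + 1)) ℂ ∧ M 0 0 = (s : ℤ) ∧ ∀ i : Fin n, M i.succ 0 = 0 := by
  have hbasis : (basisVec 0 : Fin (n + 1) → ℂ) = Pi.single 0 1 := basisVec_two_mul 0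
  have hcol : M.col 0 = s • basisVec 0 ↔ M 0 0 = (s : ℤ) ∧ ∀ i : Fin n, M i.succ 0 = 0 := by
    rw [hbasis, funext_iff, Fin.forall_fin_succ]
    simp [Units.smul_def]
  rw [columnCap, hemisphere_zero, ← hcol]
  rfl

lemma apply_zero_succ_of_mem_columnCap {M : Matrix (Fin (n + 1)) (Fin (n + 1)) ℂ}
    (hM : M ∈ columnCap n s 0) (j : Fin n) : M 0 j.succ = 0 := by
  obtain ⟨hU, h0, hsucc⟩ := mem_columnCap_zero.1 hM
  have hentry := congrFun (congrFun (mem_unitaryGroup_iff'.1 hU) 0) j.succ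
  rw [star_eq_conjTranspose, mul_apply, Fin.sum_univ_succ,
    one_apply_ne (Fin.succ_ne_zero j).symm] at hentry
  simpa [h0, hsucc] using hentry

/-- The block matrix with the scalar `s` in the upper left corner and `N` in the lower right one. -/
def cornerBlock (s : ℤˣ) (N : Matrix (Fin n) (Fin n) ℂ) : Matrix (Fin (n + 1)) (Fin (n + 1)) ℂ :=
  .of (Fin.cons (Fin.cons ((s : ℤ) : ℂ) 0) fun i => Fin.cons 0 (N i))

lemma continuous_cornerBlock (s : ℤˣ) :
    Continuous (cornerBlock s : Matrix (Fin n) (Fin n) ℂ → _) := by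
  refine continuous_matrix fun i j => ?_
  cases i using Fin.cases <;> cases j using Fin.cases <;>
    simp only [cornerBlock, of_apply, Fin.cons_zero, Fin.cons_succ] <;> fun_prop

lemma cornerBlock_mem_columnCap {N : Matrix (Fin n) (Fin n) ℂ} (hN : N ∈ unitaryGroup (Fin n) ℂ) :
    cornerBlock s N ∈ columnCap n s 0 := by
  refine mem_columnCap_zero.2 ⟨mem_unitaryGroup_iff'.2 ?_, rfl, fun i => rfl⟩
  have hN' (i j : Fin n) : ∑ k, starRingEnd ℂ (N k i) * N k j = (1 : Matrix _ _ ℂ) i j :=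
    congrFun (congrFun (mem_unitaryGroup_iff'.1 hN) i) j
  have hs : ((s : ℤ) : ℂ) * (s : ℤ) = 1 := by exact_mod_cast Int.units_coe_mul_self s
  ext i j
  rw [star_eq_conjTranspose, mul_apply, Fin.sum_univ_succ]
  cases i using Fin.cases <;> cases j using Fin.cases <;>
    simp [cornerBlock, hs, hN', one_apply, (Fin.succ_ne_zero _).symm]

lemma submatrix_succ_mem_unitaryGroup {M : Matrix (Fin (n + 1)) (Fin (n + 1)) ℂ}
    (hM : M ∈ columnCap n s 0) : M.submatrix Fin.succ Fin.succ ∈ unitaryGroup (Fin n) ℂ := by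
  refine mem_unitaryGroup_iff'.2 ?_
  ext i j
  have hU := mem_unitaryGroup_iff'.1 (mem_columnCap_zero.1 hM).1
  have hentry := congrFun (congrFun hU i.succ) j.succ
  rw [star_eq_conjTranspose, mul_apply, Fin.sum_univ_succ] at hentry
  rw [star_eq_conjTranspose, mul_apply]
  simpa [apply_zero_succ_of_mem_columnCap hM, one_apply] using hentry

/-- The fibre of `U(n+1) → S^(2n+1)` over the pole `s • basisVec 0` is `U(n)`. -/
def fibreHomeomorph (n : ℕ) (s : ℤˣ) :
    columnCap n s 0 ≃ₜ (unitaryGroup (Fin n) ℂ : Set (Matrix (Fin n) (Fin n) ℂ)) where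
  toFun M := ⟨M.1.submatrix Fin.succ Fin.succ, submatrix_succ_mem_unitaryGroup M.2⟩
  invFun N := ⟨cornerBlock s N.1, cornerBlock_mem_columnCap N.2⟩
  left_inv M := by
    obtain ⟨-, h0, hsucc⟩ := mem_columnCap_zero.1 M.2
    ext i j
    cases i using Fin.cases <;> cases j using Fin.cases <;>
      simp [cornerBlock, h0, hsucc, apply_zero_succ_of_mem_columnCap M.2]
  right_inv N := by ext i j; rfl
  continuous_toFun := by fun_prop
  continuous_invFun :=
    ((continuous_cornerBlock s).comp continuous_subtype_val).subtype_mk _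

lemma nonempty_columnCap_zero (n : ℕ) (s : ℤˣ) : (columnCap n s 0).Nonempty :=
  ⟨_, cornerBlock_mem_columnCap (one_mem _)⟩

lemma acyclic_columnCap_zero {m : ℕ}
    (h : Acyclic (unitaryGroup (Fin n) ℂ : Set (Matrix (Fin n) (Fin n) ℂ)) m) (s : ℤˣ) :
    Acyclic (columnCap n s 0) m :=
  let ⟨_, hF⟩ := exists_injectiveOnCohomology_of_homeomorph isCompact_unitaryGroup
    (isCompact_columnCap n s 0) (nonempty_columnCap_zero n s) (fibreHomeomorph n s).symm
  hF.acyclic h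

lemma columnCap_zero_zero (s : ℤˣ) : columnCap 0 s 0 = {cornerBlock s 1} :=
  have : Subsingleton (columnCap 0 s 0) := (fibreHomeomorph 0 s).toEquiv.subsingleton
  ((Set.subsingleton_coe _).1 this).eq_singleton_of_mem (cornerBlock_mem_columnCap (one_mem _))

end Fibre

section UnitaryGroup

theorem acyclic_unitaryGroup (n : ℕ) : ∀ m > n ^ 2 + 1,
    Acyclic (unitaryGroup (Fin n) ℂ : Set (Matrix (Fin n) (Fin n) ℂ)) m := by
  induction n with
  | zero =>
    intro m _
    rw [Set.subsingleton_of_subsingleton.eq_singleton_of_mem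
      (one_mem (unitaryGroup (Fin 0) ℂ))]
    exact acyclic_singleton _ _
  | succ n ih =>
    intro m hm
    rw [← sphere_columnCap_top]
    refine (hemisphereFiltration_columnCap n).acyclic_sphere (D := n ^ 2) le_rfl
      (fun s m hm => acyclic_columnCap_zero (ih m hm) s) m ?_
    linarith

lemma exists_cupProd_notMem_coboundaries_columnCap {n b : ℕ} {d : ℕ → ℕ}
    {φ : ℕ → Cochain (Matrix (Fin n) (Fin n) ℂ)} (hd : ∀ i ≤ b, d i < 2 * n)
    (hφ : ∀ i ≤ b, φ i ∈ cocycles (unitaryGroup (Fin n) ℂ) (d i + 1))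
    (hne : cupProd d φ b ∉ coboundaries (unitaryGroup (Fin n) ℂ)
      (∑ i ∈ range (b + 1), d i + 1)) :
    ∃ ψ : ℕ → Cochain (Matrix (Fin (n + 1)) (Fin (n + 1)) ℂ),
      (∀ i ≤ b, ψ i ∈ cocycles (unitaryGroup (Fin (n + 1)) ℂ) (d i + 1)) ∧
      cupProd d ψ b ∉ coboundaries (columnCap n 1 0) (∑ i ∈ range (b + 1), d i + 1) := by
  obtain ⟨F, hF⟩ := exists_injectiveOnCohomology_of_homeomorph (isCompact_columnCap n 1 0)
    isCompact_unitaryGroup ⟨1, one_mem (unitaryGroup (Fin n) ℂ)⟩ (fibreHomeomorph n 1)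
  have hext (i : ℕ) : ∃ ψ, i ≤ b → ψ ∈ cocycles (unitaryGroup (Fin (n + 1)) ℂ) (d i + 1) ∧
      ψ =ᶠ[smallLists (columnCap n 1 0) (d i + 1)] pullback F (φ i) := by
    by_cases hi : i ≤ b
    · obtain ⟨ψ, hψ⟩ := (hemisphereFiltration_columnCap n).exists_mem_cocycles_sphere
        (k := 2 * n) (by omega) (hd i hi) (hF.contiguous.pullback_mem_cocycles (hφ i hi))
      rw [sphere_columnCap_top] at hψ
      exact ⟨ψ, fun _ => hψ⟩
    · exact ⟨0, fun h => absurd h hi⟩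
  choose ψ hψ using hext
  refine ⟨ψ, fun i hi => (hψ i hi).1, fun hB => hF.cupProd_notMem_coboundaries hφ hne ?_⟩
  exact (mem_coboundaries_congr (cupProd_congr fun i hi => (hψ i hi).2)).1 hB

lemma sum_range_odd_add_sq {n k : ℕ} (hk : k ≤ n + 1) :
    ∑ i ∈ range k, (2 * (n - i) + 1) + (n + 1 - k) ^ 2 = (n + 1) ^ 2 := by
  induction k with
  | zero => simp
  | succ k ih =>
    obtain ⟨j, rfl⟩ := Nat.exists_eq_add_of_le (Nat.le_of_succ_le_succ hk)
    rw [← ih (by omega), sum_range_succ, Nat.add_sub_cancel_left, Nat.add_sub_add_right,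
      Nat.add_sub_cancel_left, Nat.add_right_comm, add_assoc k, Nat.add_sub_cancel_left]
    ring

theorem exists_cupProd_notMem_coboundaries_unitaryGroup (n : ℕ) :
    ∃ φ : ℕ → Cochain (Matrix (Fin (n + 1)) (Fin (n + 1)) ℂ),
      (∀ i ≤ n, φ i ∈ cocycles (unitaryGroup (Fin (n + 1)) ℂ) (2 * (n - i) + 1 + 1)) ∧
      cupProd (fun i => 2 * (n - i) + 1) φ n ∉ coboundaries (unitaryGroup (Fin (n + 1)) ℂ)
        (∑ i ∈ range (n + 1), (2 * (n - i) + 1) + 1) := by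
  induction n with
  | zero =>
    have hcircle := (hemisphereFiltration_columnCap 0).not_acyclic_circle Nat.one_pos
      (columnCap_zero_zero 1) (columnCap_zero_zero (-1))
    rw [show sphere (columnCap 0) 1 = _ from sphere_columnCap_top 0] at hcircle
    obtain ⟨φ, hφ, hne⟩ := SetLike.not_le_iff_exists.1 hcircle
    exact ⟨fun _ => φ, fun i _ => by simpa using hφ, hne⟩
  | succ n ih =>
    obtain ⟨φ, hφ, hne⟩ := ih
    obtain ⟨ψ, hψ, hneψ⟩ :=
      exists_cupProd_notMem_coboundaries_columnCap (fun i hi => by omega) hφ hne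
    have hdeg : ∑ i ∈ range (n + 1), (2 * (n - i) + 1) = (n + 1) ^ 2 := by
      simpa using sum_range_odd_add_sq (le_refl (n + 1))
    have hψn := cupProd_mem_cocycles hψ
    have F := hemisphereFiltration_columnCap (n + 1)
    rw [← sphere_columnCap_top] at hψn
    obtain ⟨τ, hτ, hneτ⟩ := F.exists_cup_notMem_coboundaries (by omega)
      (fun s m hm => acyclic_columnCap_zero (acyclic_unitaryGroup (n + 1) m (by rwa [← hdeg])) s)
      hψn hneψ (k := 2 * (n + 1)) (by omega)
    rw [sphere_columnCap_top] at hτ hneτ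
    refine ⟨fun i => Nat.casesOn i τ ψ, ?_, ?_⟩
    · rintro (_ | i) hi
      · exact hτ
      · simpa using hψ i (by omega)
    · rw [cupProd_succ', sum_range_succ', add_comm _ (2 * _ + 1)]
      simpa using hneτ

end UnitaryGroup

end Unitary

/-! ### Good closed families -/

lemma biInter_inter_eq_biInter_insert {X V : Type*} [DecidableEq V] {T : Finset V}
    (hT : T.Nonempty) (G : V → Set X) (v : V) : ⋂ i ∈ T, G i ∩ G v = ⋂ i ∈ insert v T, G i := by
  rw [Finset.set_biInter_insert, Set.inter_comm]
  exact Set.biInter_inter (s := (T : Set V)) hT G (G v)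

section GoodFamily

variable {X V : Type*} [MetricSpace X] {G : V → Set X} {S T : Finset V} {v : V} {m : ℕ}

/-- A family of compact sets, indexed by `S`, all of whose nonempty intersections are acyclic:
the cohomological analogue of a good cover. -/
structure IsGoodFamily (G : V → Set X) (S : Finset V) : Prop where
  isCompact : ∀ i ∈ S, IsCompact (G i)
  acyclic_biInter : ∀ T ⊆ S, T.Nonempty → (⋂ i ∈ T, G i).Nonempty →
    ∀ m, Acyclic (⋂ i ∈ T, G i) m

namespace IsGoodFamily

lemma mono (h : IsGoodFamily G S) (hT : T ⊆ S) : IsGoodFamily G T :=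
  ⟨fun i hi => h.isCompact i (hT hi), fun T' hT' => h.acyclic_biInter T' (hT'.trans hT)⟩

lemma isCompact_biUnion (h : IsGoodFamily G S) : IsCompact (⋃ i ∈ S, G i) :=
  S.isCompact_biUnion h.isCompact

lemma link [DecidableEq V] (h : IsGoodFamily G (insert v S)) :
    IsGoodFamily (fun i => G i ∩ G v) S where
  isCompact i hi :=
    (h.isCompact i (mem_insert_of_mem hi)).inter (h.isCompact v (mem_insert_self v S))
  acyclic_biInter T hT hne := by
    rw [biInter_inter_eq_biInter_insert hne]
    exact h.acyclic_biInter _ (insert_subset_insert v hT) (insert_nonempty v T)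

lemma acyclic_succ (h : IsGoodFamily G S) (hv : v ∈ S) (m : ℕ) : Acyclic (G v) (m + 1) := by
  obtain he | hne := (G v).eq_empty_or_nonempty
  · exact he ▸ acyclic_empty m
  · simpa only [mem_singleton, Set.iInter_iInter_eq_left] using
      h.acyclic_biInter {v} (singleton_subset_iff.2 hv) (singleton_nonempty v) (by simpa using hne)
        (m + 1)

lemma acyclic_biUnion_insert [DecidableEq V] (h : IsGoodFamily G (insert v S))
    (hS : Acyclic (⋃ i ∈ S, G i) (m + 1)) (hlink : Acyclic (⋃ i ∈ S, G i ∩ G v) m) :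
    Acyclic (⋃ i ∈ insert v S, G i) (m + 1) := by
  rw [Finset.set_biUnion_insert, Set.union_comm]
  refine hS.union (h.mono (subset_insert v S)).isCompact_biUnion
    (h.isCompact v (mem_insert_self v S)) (h.acyclic_succ (mem_insert_self v S) m) ?_
  rwa [Set.iUnion₂_inter]

lemma acyclic_biUnion (h : IsGoodFamily G S) (hS : S.Nonempty) (hI : (⋂ i ∈ S, G i).Nonempty)
    (m : ℕ) : Acyclic (⋃ i ∈ S, G i) m := by
  classical
  induction hS using Finset.Nonempty.cons_induction generalizing G m with
  | singleton v => simpa using h.acyclic_biInter {v} subset_rfl (singleton_nonempty v) hI m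
  | cons v S hv hS ih =>
    rw [cons_eq_insert] at h hI ⊢
    cases m with
    | zero =>
      obtain ⟨x, hx⟩ := hI
      exact acyclic_zero ⟨x, Set.mem_biUnion (mem_insert_self v S)
        (Set.mem_iInter₂.1 hx v (mem_insert_self v S))⟩
    | succ m =>
      refine h.acyclic_biUnion_insert (ih (h.mono (subset_insert v S)) (hI.mono ?_) _)
        (ih h.link (by rwa [biInter_inter_eq_biInter_insert hS]) _)
      exact Set.biInter_subset_biInter_left (subset_insert v S)

lemma exists_nonempty_biInter (h : IsGoodFamily G S) (hS : ¬ Acyclic (⋃ i ∈ S, G i) (m + 1)) :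
    ∃ T ⊆ S, #T = m + 1 ∧ (⋂ i ∈ T, G i).Nonempty := by
  classical
  induction S using Finset.induction_on generalizing G m with
  | empty => exact absurd (by simpa using acyclic_empty m) hS
  | insert v S hv ih =>
    by_cases hacyc : Acyclic (⋃ i ∈ S, G i) (m + 1)
    · cases m with
      | zero =>
        obtain he | ⟨x, hx⟩ := (⋃ i ∈ insert v S, G i).eq_empty_or_nonempty
        · exact absurd (he ▸ acyclic_empty 0) hS
        · obtain ⟨i, hi, hxi⟩ := Set.mem_iUnion₂.1 hx
          exact ⟨{i}, singleton_subset_iff.2 hi, card_singleton i, x, by simpa using hxi⟩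
      | succ m =>
        obtain ⟨T, hT, hcard, hI⟩ := ih h.link fun hl => hS (h.acyclic_biUnion_insert hacyc hl)
        refine ⟨insert v T, insert_subset_insert v hT, ?_, ?_⟩
        · rw [card_insert_of_notMem fun hvT => hv (hT hvT), hcard]
        · rwa [← biInter_inter_eq_biInter_insert (card_pos.1 (by omega))]
    · obtain ⟨T, hT, hcard⟩ := ih (h.mono (subset_insert v S)) hacyc
      exact ⟨T, hT.trans (subset_insert v S), hcard⟩

lemma acyclic_of_card_le (h : IsGoodFamily G S) (hS : #S ≤ m + 1) :
    Acyclic (⋃ i ∈ S, G i) (m + 1) := by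
  by_contra hn
  obtain ⟨T, hT, hcard, hI⟩ := h.exists_nonempty_biInter hn
  obtain rfl : T = S := eq_of_subset_of_card_le hT (by omega)
  exact hn (h.acyclic_biUnion (card_pos.1 (by omega)) hI _)

lemma acyclic_of_card_eq (h : IsGoodFamily G S) (hS : #S = m + 1)
    (hn : ¬ Acyclic (⋃ i ∈ S, G i) m) {j : ℕ} (hj : j ≠ m) : Acyclic (⋃ i ∈ S, G i) j := by
  classical
  induction m generalizing G S j with
  | zero =>
    obtain he | hne := (⋃ i ∈ S, G i).eq_empty_or_nonempty
    · obtain ⟨k, rfl⟩ := Nat.exists_eq_succ_of_ne_zero hj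
      exact he ▸ acyclic_empty k
    · exact absurd (acyclic_zero hne) hn
  | succ m ih =>
    obtain ⟨T, hT, hcard, hI⟩ := h.exists_nonempty_biInter hn
    have hne : T.Nonempty := card_pos.1 (by omega)
    obtain ⟨v, -, rfl⟩ : ∃ v, v ∉ T ∧ insert v T = S :=
      (exists_eq_insert_iff (s := T)).2 ⟨hT, by omega⟩
    have hT := (h.mono hT).acyclic_biUnion hne hI
    cases j with
    | zero =>
      obtain ⟨x, hx⟩ := hI
      obtain ⟨i, hi⟩ := hne
      exact acyclic_zero
        ⟨x, Set.mem_biUnion (mem_insert_of_mem hi) (Set.mem_iInter₂.1 hx i hi)⟩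
    | succ j =>
      exact h.acyclic_biUnion_insert (hT _) (ih h.link hcard
        (fun hl => hn (h.acyclic_biUnion_insert (hT _) hl)) (by omega))

lemma exists_subset_of_cup {p q : ℕ} {φ ψ : Cochain X} (h : IsGoodFamily G S) (hp : 0 < p)
    (hq : 0 < q) (hφ : φ ∈ cocycles (⋃ i ∈ S, G i) (p + 1))
    (hψ : ψ ∈ cocycles (⋃ i ∈ S, G i) (q + 1))
    (hne : cup p φ ψ ∉ coboundaries (⋃ i ∈ S, G i) (p + q + 1)) :
    ∃ T ⊆ S, #T + (p + q + 1) = #S ∧ φ ∉ coboundaries (⋃ i ∈ T, G i) (p + 1) ∧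
      ψ ∉ coboundaries (⋃ i ∈ T, G i) (q + 1) := by
  classical
  obtain ⟨p, rfl⟩ := Nat.exists_eq_succ_of_ne_zero hp.ne'
  obtain ⟨q, rfl⟩ := Nat.exists_eq_succ_of_ne_zero hq.ne'
  obtain ⟨T, hT, hcard, hI⟩ :=
    h.exists_nonempty_biInter fun ha => hne (ha (cup_mem_cocycles hφ hψ (by omega)))
  have hacyc := (h.mono hT).acyclic_biUnion (card_pos.1 (by omega)) hI
  have hsub : ⋃ i ∈ T, G i ⊆ ⋃ i ∈ S, G i := Set.biUnion_mono hT fun _ _ => le_rfl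
  have hU : ⋃ i ∈ S, G i = (⋃ i ∈ S \ T, G i) ∪ ⋃ i ∈ T, G i := by
    rw [← Finset.set_biUnion_union, sdiff_union_of_subset hT]
  have hφT := hacyc _ (cocycles_anti hsub hφ)
  have hψT := hacyc _ (cocycles_anti hsub hψ)
  refine ⟨S \ T, sdiff_subset, ?_, fun hB => hne ?_, fun hB => hne ?_⟩
  · rw [card_sdiff_of_subset hT]
    have := card_le_card hT
    omega
  · rw [hU] at hφ hψ ⊢
    exact cup_mem_coboundaries_union hφ hψ hB hψT
  · rw [hU, Set.union_comm] at hφ hψ ⊢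
    exact cup_mem_coboundaries_union hφ hψ hφT hB

lemma exists_subset_of_cupProd {d : ℕ → ℕ} {φ : ℕ → Cochain X} {b : ℕ} (h : IsGoodFamily G S)
    (hd : ∀ i ≤ b + 1, 0 < d i) (hφ : ∀ i ≤ b + 1, φ i ∈ cocycles (⋃ i ∈ S, G i) (d i + 1))
    (hne : cupProd d φ (b + 1) ∉
      coboundaries (⋃ i ∈ S, G i) (∑ i ∈ range (b + 2), d i + 1)) :
    ∃ T ⊆ S, #T + ∑ c ∈ range (b + 1), (∑ i ∈ range (c + 2), d i + 1) ≤ #S ∧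
      φ 0 ∉ coboundaries (⋃ i ∈ T, G i) (d 0 + 1) ∧
      φ 1 ∉ coboundaries (⋃ i ∈ T, G i) (d 1 + 1) := by
  induction b generalizing S with
  | zero =>
    obtain ⟨T, hT, hcard, hne⟩ :=
      h.exists_subset_of_cup (p := d 0) (hd 0 (by omega)) (hd 1 le_rfl) (hφ 0 (by omega))
        (hφ 1 le_rfl) (by simpa [cupProd, sum_range_succ] using hne)
    exact ⟨T, hT, by simpa [sum_range_succ] using hcard.le, hne⟩
  | succ b ih =>
    rw [sum_range_succ] at hne
    obtain ⟨T, hT, hcard, hneT, -⟩ :=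
      h.exists_subset_of_cup (sum_pos (fun i hi => hd i (by grind)) nonempty_range_add_one)
        (hd _ le_rfl) (cupProd_mem_cocycles fun i hi => hφ i (by omega)) (hφ _ le_rfl) hne
    have hsub : ⋃ i ∈ T, G i ⊆ ⋃ i ∈ S, G i := Set.biUnion_mono hT fun _ _ => le_rfl
    obtain ⟨T', hT', hcard', hne'⟩ := ih (h.mono hT) (fun i hi => hd i (by omega))
      (fun i hi => cocycles_anti hsub (hφ i (by omega))) hneT
    refine ⟨T', hT'.trans hT, ?_, hne'⟩
    rw [sum_range_succ, sum_range_succ _ (b + 2)]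
    replace hcard : #T + (∑ i ∈ range (b + 2), d i + d (b + 2) + 1) = #S := hcard
    omega

theorem le_card_of_cupProd {d : ℕ → ℕ} {φ : ℕ → Cochain X} {b : ℕ} (h : IsGoodFamily G S)
    (hd : ∀ i ≤ b + 1, 0 < d i) (hd01 : d 1 ≠ d 0)
    (hφ : ∀ i ≤ b + 1, φ i ∈ cocycles (⋃ i ∈ S, G i) (d i + 1))
    (hne : cupProd d φ (b + 1) ∉
      coboundaries (⋃ i ∈ S, G i) (∑ i ∈ range (b + 2), d i + 1)) :
    d 0 + 3 + ∑ c ∈ range (b + 1), (∑ i ∈ range (c + 2), d i + 1) ≤ #S := by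
  obtain ⟨T, hT, hcard, hne0, hne1⟩ := h.exists_subset_of_cupProd hd hφ hne
  have hsub : ⋃ i ∈ T, G i ⊆ ⋃ i ∈ S, G i := Set.biUnion_mono hT fun _ _ => le_rfl
  have hnot {i : ℕ} (hi : i ≤ b + 1) (hnei : φ i ∉ coboundaries (⋃ i ∈ T, G i) (d i + 1)) :
      ¬ Acyclic (⋃ i ∈ T, G i) (d i + 1) := fun ha => hnei (ha (cocycles_anti hsub (hφ i hi)))
  have hacyc0 := hnot (by omega) hne0
  have hlt : d 0 + 1 < #T := by
    by_contra hle
    exact hacyc0 ((h.mono hT).acyclic_of_card_le (by omega))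
  have hneq : #T ≠ d 0 + 1 + 1 := fun heq =>
    hnot (by omega) hne1 ((h.mono hT).acyclic_of_card_eq heq hacyc0 (by omega))
  omega

end IsGoodFamily

end GoodFamily

lemma sum_range_sub_sq (n : ℕ) : 6 * ∑ i ∈ range n, (n - (i + 1)) ^ 2 + 3 * n ^ 2 =
    2 * n ^ 3 + n := by
  induction n with
  | zero => simp
  | succ n ih =>
    rw [sum_range_succ', show ∑ i ∈ range n, (n + 1 - (i + 1 + 1)) ^ 2 = _ from
      sum_congr rfl fun i _ => by rw [Nat.add_sub_add_right], Nat.zero_add, Nat.add_sub_cancel]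
    linarith

lemma coveringTypeBound_eq (n : ℕ) :
    (4 * (n + 2) ^ 3 + 3 * (n + 2) ^ 2 + 5 * (n + 2) + 12) / 6 =
      2 * (n + 1) + 1 + 3 +
        ∑ c ∈ range (n + 1), (∑ i ∈ range (c + 2), (2 * (n + 1 - i) + 1) + 1) := by
  have hpartial : ∑ c ∈ range (n + 1), (∑ i ∈ range (c + 2), (2 * (n + 1 - i) + 1) + 1) +
      ∑ c ∈ range (n + 1), (n + 1 - (c + 1)) ^ 2 = (n + 1) * ((n + 2) ^ 2 + 1) := by
    rw [← sum_add_distrib, sum_congr rfl (g := fun _ => (n + 2) ^ 2 + 1)]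
    · simp
    · intro c hc
      rw [← sum_range_odd_add_sq (k := c + 2) (n := n + 1) (by grind)]
      grind
  have hsquares := sum_range_sub_sq (n + 1)
  apply Nat.div_eq_of_eq_mul_right (by norm_num)
  linarith

/-! ### Maps carried by contractible sets -/

section Carrier

variable {ι X Y : Type*} [TopologicalSpace X] [TopologicalSpace Y]

/-- The contraction `F` of `A` onto `b`, extended to all times `t` and all points of `Y`. Off `A` it
is the identity for `t ≠ 1`; only its continuity on `A` is ever used. -/
noncomputable def contract {A : Set Y} {b : A}
    (F : (ContinuousMap.id A).Homotopy (.const A b)) (t : ℝ) (y : Y) : Y :=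
  open Classical in
  if h : y ∈ A then F (Set.projIcc 0 1 zero_le_one t, ⟨y, h⟩) else if t = 1 then b else y

section Contract

variable {A : Set Y} {b : A} (F : (ContinuousMap.id A).Homotopy (.const A b))

@[simp]
lemma contract_zero (y : Y) : contract F 0 y = y := by
  unfold contract
  split_ifs with h h' <;> simp_all

@[simp]
lemma contract_one (y : Y) : contract F 1 y = b := by
  unfold contract
  split_ifs <;> simp_all

variable {F}

lemma contract_of_mem {y : Y} (h : y ∈ A) (t : ℝ) :
    contract F t y = F (Set.projIcc 0 1 zero_le_one t, ⟨y, h⟩) :=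
  dif_pos h

lemma contract_mem {y : Y} (h : y ∈ A) (t : ℝ) : contract F t y ∈ A :=
  contract_of_mem h t ▸ Subtype.coe_prop _

lemma continuousOn_contract :
    ContinuousOn (fun z : ℝ × Y => contract F z.1 z.2) (Set.univ ×ˢ A) := by
  rw [continuousOn_iff_continuous_domRestrict]
  have hcont : Continuous fun z : ↥(Set.univ ×ˢ A : Set (ℝ × Y)) =>
      (F (Set.projIcc 0 1 zero_le_one z.1.1, ⟨z.1.2, z.2.2⟩) : Y) := by
    fun_prop
  exact hcont.congr fun z => (contract_of_mem z.2.2 _).symm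

end Contract

/-- Apply the contractions `F σ`, for `σ` in the list `L` from left to right, up to the respective
times `u σ`. -/
noncomputable def contractAll {A : ι → Set Y} {b : ∀ σ, A σ}
    (F : ∀ σ, (ContinuousMap.id (A σ)).Homotopy (.const (A σ) (b σ))) (L : List ι) (u : ι → ℝ)
    (y : Y) : Y :=
  L.foldl (fun y σ => contract (F σ) (u σ) y) y

/-- Continuous times `u σ`, vanishing off closed sets `C σ`, such that any two of the `C σ` that
meet have comparable indices. -/
structure IsSchedule [LE ι] (C : ι → Set X) (u : ι → X → ℝ) : Prop where
  continuous : ∀ σ, Continuous (u σ)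
  isClosed : ∀ σ, IsClosed (C σ)
  eq_zero : ∀ ⦃σ x⦄, x ∉ C σ → u σ x = 0
  le_or_le : ∀ ⦃σ τ x⦄, x ∈ C σ → x ∈ C τ → σ ≤ τ ∨ τ ≤ σ

section ContractAll

variable {A : ι → Set Y} {b : ∀ σ, A σ}
  {F : ∀ σ, (ContinuousMap.id (A σ)).Homotopy (.const (A σ) (b σ))} {L : List ι} {u : ι → ℝ} {σ : ι}

lemma contractAll_of_eq_zero (hu : ∀ σ, u σ = 0) (y : Y) : contractAll F L u y = y := by
  simp [contractAll, hu]

lemma contractAll_append_of_eq_one (hu : u σ = 1) (L L' : List ι) (y : Y) :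
    contractAll F (L ++ σ :: L') u y = contractAll F L' u (b σ) := by
  simp [contractAll, hu]

lemma contractAll_eq_of_eq_one (hσ : σ ∈ L) (hu : u σ = 1) (y y' : Y) :
    contractAll F L u y = contractAll F L u y' := by
  obtain ⟨L₁, L₂, rfl⟩ := List.append_of_mem hσ
  simp only [contractAll_append_of_eq_one hu]

variable [PartialOrder ι] {C : ι → Set X} {u : ι → X → ℝ} {x₀ : X}

lemma IsSchedule.le_of_not_lt {τ : ι} {x : X} (hu : IsSchedule C u) (hσ : x ∈ C σ) (hτ : x ∈ C τ)
    (h : ¬ σ < τ) : τ ≤ σ :=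
  (hu.le_or_le hσ hτ).elim (fun hle => (eq_of_le_of_not_lt hle h).ge) id

lemma IsSchedule.mem_of_eq_one (hu : IsSchedule C u) (h : u σ x₀ = 1) : x₀ ∈ C σ := by
  by_contra hx
  exact zero_ne_one ((hu.eq_zero hx).symm.trans h)

lemma IsSchedule.continuousAt_contractAll (hu : IsSchedule C u) (hopen : ∀ σ, IsOpen (A σ))
    (hA : Antitone A) (hL : L.Pairwise fun σ τ => ¬ σ < τ) {y : X → Y} (hy : ContinuousAt y x₀)
    (hmem : ∀ σ ∈ L, ∀ᶠ x in 𝓝 x₀, x ∈ C σ → y x ∈ A σ) :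
    ContinuousAt (fun x => contractAll F L (u · x) (y x)) x₀ := by
  induction L generalizing y with
  | nil => exact hy
  | cons σ L ih =>
    obtain ⟨hσL, hL⟩ := List.pairwise_cons.1 hL
    obtain ⟨hmemσ, hmem⟩ := List.forall_mem_cons.1 hmem
    refine ih hL (y := fun x => contract (F σ) (u σ x) (y x)) ?_ fun τ hτ => ?_
    · by_cases hx₀ : x₀ ∈ C σ
      · have hopen' := (isOpen_univ.prod (hopen σ)).mem_nhds
          (⟨Set.mem_univ (u σ x₀), hmemσ.self_of_nhds hx₀⟩ : (u σ x₀, y x₀) ∈ Set.univ ×ˢ A σ)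
        exact (continuousOn_contract.continuousAt hopen').comp
          (f := fun x => (u σ x, y x)) ((hu.continuous σ).continuousAt.prodMk hy)
      · refine hy.congr ?_
        filter_upwards [(hu.isClosed σ).isOpen_compl.mem_nhds hx₀] with x hx
        rw [hu.eq_zero hx, contract_zero]
    · filter_upwards [hmemσ, hmem τ hτ] with x hxσ hxτ hx
      by_cases hσ : x ∈ C σ
      · exact hA (hu.le_of_not_lt hσ hx (hσL τ hτ)) (contract_mem (hxσ hσ) _)
      · rw [hu.eq_zero hσ, contract_zero]
        exact hxτ hx

lemma IsSchedule.continuousAt_contractAll_const (hu : IsSchedule C u) (hopen : ∀ σ, IsOpen (A σ))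
    (hA : Antitone A) (hL : L.Pairwise fun σ τ => ¬ σ < τ) (hσ : σ ∈ L)
    (hone : ∀ᶠ x in 𝓝 x₀, u σ x = 1) (y : Y) :
    ContinuousAt (fun x => contractAll F L (u · x) y) x₀ := by
  obtain ⟨L₁, L₂, rfl⟩ := List.append_of_mem hσ
  obtain ⟨hσL, hL⟩ := List.pairwise_cons.1 (List.pairwise_append.1 hL).2.1
  refine (hu.continuousAt_contractAll (F := F) hopen hA hL (y := fun _ => (b σ : Y))
    continuousAt_const fun τ hτ => ?_).congr ?_
  · filter_upwards [hone] with x hx hxτ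
    exact hA (hu.le_of_not_lt (hu.mem_of_eq_one hx) hxτ (hσL τ hτ)) (b σ).2
  · filter_upwards [hone] with x hx
    exact (contractAll_append_of_eq_one (u := (u · x)) hx _ _ _).symm

end ContractAll

lemma exists_list_pairwise_not_lt (ι : Type*) [PartialOrder ι] [Finite ι] :
    ∃ L : List ι, (∀ σ, σ ∈ L) ∧ L.Pairwise fun σ τ => ¬ σ < τ := by
  have : Fintype (LinearExtension ι) := Fintype.ofFinite ι
  refine ⟨(univ : Finset (LinearExtension ι)).sort (· ≥ ·), fun σ => ?_, ?_⟩
  · exact (mem_sort (α := LinearExtension ι) _).2 (mem_univ _)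
  · refine (pairwise_sort (α := LinearExtension ι) univ (· ≥ ·)).imp fun {σ τ} h hlt => hlt.ne ?_
    have hle : toLinearExtension (α := ι) σ ≤ toLinearExtension τ :=
      (toLinearExtension (α := ι)).monotone hlt.le
    exact le_antisymm (α := LinearExtension ι) hle h

theorem exists_comp_homotopic {K : Type*} [TopologicalSpace K] [NormalSpace X] [Nonempty Y]
    [PartialOrder ι] [Finite ι] {U : ι → Set X} (hUopen : ∀ σ, IsOpen (U σ))
    (hUcover : ⋃ σ, U σ = Set.univ)
    (hU : ∀ ⦃σ τ x⦄, x ∈ U σ → x ∈ U τ → σ ≤ τ ∨ τ ≤ σ)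
    {A : ι → Set Y} (hAopen : ∀ σ, IsOpen (A σ)) (hA : Antitone A)
    (hcontr : ∀ σ, ContractibleSpace (A σ)) (p : C(K, X)) (f : C(K, Y))
    (hpf : ∀ ⦃x σ⦄, p x ∈ U σ → f x ∈ A σ) : ∃ q : C(X, Y), (q.comp p).Homotopic f := by
  choose b hb using fun σ => id_nullhomotopic (A σ)
  have F (σ : ι) : (ContinuousMap.id (A σ)).Homotopy (.const (A σ) (b σ)) := (hb σ).some
  obtain ⟨L, hmem, hL⟩ := exists_list_pairwise_not_lt ι
  obtain ⟨s, hs⟩ := BumpCovering.exists_isSubordinate_of_locallyFinite isClosed_univ U hUopen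
    (locallyFinite_of_finite U) hUcover.ge
  have hsched : IsSchedule (fun σ => tsupport (s σ)) (fun σ => s σ) :=
    { continuous := fun σ => (s σ).continuous
      isClosed := fun σ => isClosed_tsupport _
      eq_zero := fun σ x hx => image_eq_zero_of_notMem_tsupport hx
      le_or_le := fun σ τ x hσ hτ => hU (hs σ hσ) (hs τ hτ) }
  have hsched' : IsSchedule (fun σ => {z : unitInterval × K | p z.2 ∈ tsupport (s σ)})
      (fun σ z => z.1 * s σ (p z.2)) :=
    { continuous := fun σ => by fun_prop
      isClosed := fun σ => (isClosed_tsupport _).preimage (by fun_prop)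
      eq_zero := fun σ z hz => by rw [hsched.eq_zero hz, mul_zero]
      le_or_le := fun σ τ z hσ hτ => hsched.le_or_le hσ hτ }
  have y₀ : Y := Classical.arbitrary Y
  let q : C(X, Y) := ⟨fun x => contractAll F L (s · x) y₀, continuous_iff_continuousAt.2 fun x =>
    hsched.continuousAt_contractAll_const hAopen hA hL (hmem _)
      (s.eventuallyEq_one x (Set.mem_univ x)) y₀⟩
  refine ⟨q, .symm ⟨⟨⟨fun z => contractAll F L (fun σ => z.1 * s σ (p z.2)) (f z.2), ?_⟩,
    fun x => ?_, fun x => ?_⟩⟩⟩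
  · exact continuous_iff_continuousAt.2 fun z => hsched'.continuousAt_contractAll hAopen hA hL
      (by fun_prop) fun σ _ => Eventually.of_forall fun z' hz' => hpf (hs σ hz')
  · exact contractAll_of_eq_zero (by simp) _
  · have hone := (s.eventuallyEq_one (p x) (Set.mem_univ _)).self_of_nhds
    calc contractAll F L (fun σ => (1 : unitInterval) * s σ (p x)) (f x)
        = contractAll F L (fun σ => s σ (p x)) (f x) := by simp only [Set.Icc.coe_one, one_mul]
      _ = contractAll F L (fun σ => s σ (p x)) y₀ := contractAll_eq_of_eq_one (hmem _) hone _ _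

end Carrier

/-! ### Nerves -/

lemma acyclic_of_starConvex {E : Type*} [NormedAddCommGroup E] [NormedSpace ℝ E] {A : Set E} {b : E}
    (hA : IsCompact A) (hb : b ∈ A) (hstar : StarConvex ℝ b A) (m : ℕ) : Acyclic A m := by
  refine (restrictionInjective_of_homotopy hA (A' := {b})
    (H := fun z : ℝ × E => z.1 • b + (1 - z.1) • z.2) (by fun_prop) ?_ (by simp) (by simp)
    m).acyclic (by simpa using hb) (acyclic_singleton b m)
  rintro ⟨s, a⟩ ⟨⟨hs0, hs1⟩, ha⟩
  exact hstar ha hs0 (sub_nonneg.2 hs1) (add_sub_cancel _ _)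

section Polyhedron

variable {V : Type*} {σ τ T : Finset V} {t : V → ℝ} {v : V}

/-- The barycenter of the face spanned by `T`. -/
noncomputable def barycenter (T : Finset V) : V → ℝ :=
  (T : Set V).indicator fun _ => (#T : ℝ)⁻¹

lemma barycenter_of_mem (hv : v ∈ T) : barycenter T v = (#T : ℝ)⁻¹ :=
  Set.indicator_of_mem hv _

lemma barycenter_of_notMem (hv : v ∉ T) : barycenter T v = 0 :=
  Set.indicator_of_notMem hv _

lemma barycenter_le_of_mem (hv : v ∈ T) (j : V) : barycenter T j ≤ barycenter T v := by
  rw [barycenter_of_mem hv]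
  exact Set.indicator_le_self' (fun _ _ => by positivity) j

lemma convex_iInter_setOf_apply_le (v : V) : Convex ℝ (⋂ j, {t : V → ℝ | t j ≤ t v}) :=
  convex_iInter fun _ _ hx _ hy _ _ ha hb _ =>
    add_le_add (mul_le_mul_of_nonneg_left hx ha) (mul_le_mul_of_nonneg_left hy hb)

/-- The points at which the barycentric coordinates of the vertices of `σ` are positive and larger
than all the other ones. In the polyhedron of a complex this is the open star of the barycenter
of `σ` in the barycentric subdivision. -/
def barycentricStar (σ : Finset V) : Set (V → ℝ) :=
  {t | ∀ i ∈ σ, 0 < t i ∧ ∀ j ∉ σ, t j < t i}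

lemma isOpen_barycentricStar [Finite V] (σ : Finset V) : IsOpen (barycentricStar σ) := by
  simp only [barycentricStar, Set.ofPred_forall, Set.ofPred_and]
  refine isOpen_biInter_finset fun i _ =>
    (isOpen_lt continuous_const (continuous_apply i)).inter ?_
  exact isOpen_iInter_of_finite fun j => isOpen_iInter_of_finite fun _ =>
    isOpen_lt (continuous_apply j) (continuous_apply i)

lemma subset_or_subset_of_mem_barycentricStar (hσ : t ∈ barycentricStar σ)
    (hτ : t ∈ barycentricStar τ) : σ ⊆ τ ∨ τ ⊆ σ := by
  by_contra! h
  obtain ⟨i, hi, hi'⟩ := not_subset.1 h.1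
  obtain ⟨j, hj, hj'⟩ := not_subset.1 h.2
  exact lt_asymm ((hσ i hi).2 j hj') ((hτ j hj).2 i hi')

variable [Fintype V] {K : PreAbstractSimplicialComplex V}

/-- The closed face of the standard simplex spanned by the vertices in `σ`. -/
def closedSimplex (σ : Finset V) : Set (V → ℝ) :=
  stdSimplex ℝ V ∩ ⋂ i ∉ σ, {t | t i = 0}

/-- The underlying polyhedron of a finite simplicial complex, in barycentric coordinates. -/
def polyhedron (K : PreAbstractSimplicialComplex V) : Set (V → ℝ) :=
  ⋃ σ ∈ K, closedSimplex σ

/-- The part of the polyhedron on which the barycentric coordinate of the vertex `v` is maximal. -/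
def maximalCell (K : PreAbstractSimplicialComplex V) (v : V) : Set (V → ℝ) :=
  polyhedron K ∩ ⋂ j, {t | t j ≤ t v}

lemma mem_closedSimplex : t ∈ closedSimplex σ ↔ t ∈ stdSimplex ℝ V ∧ ∀ i ∉ σ, t i = 0 := by
  simp [closedSimplex]

lemma mem_polyhedron : t ∈ polyhedron K ↔ ∃ σ ∈ K, t ∈ closedSimplex σ := by
  simp [polyhedron]

lemma mem_maximalCell : t ∈ maximalCell K v ↔ t ∈ polyhedron K ∧ ∀ j, t j ≤ t v := by
  simp [maximalCell]

lemma convex_closedSimplex (σ : Finset V) : Convex ℝ (closedSimplex σ) :=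
  (convex_stdSimplex ℝ V).inter <| convex_iInter₂ fun i _ =>
    convex_hyperplane (LinearMap.proj i : (V → ℝ) →ₗ[ℝ] ℝ).isLinear 0

lemma isCompact_polyhedron (K : PreAbstractSimplicialComplex V) : IsCompact (polyhedron K) :=
  (Set.toFinite {σ | σ ∈ K}).isCompact_biUnion fun _ _ => (isCompact_stdSimplex ℝ V).inter_right <|
    isClosed_biInter fun i _ => isClosed_eq (continuous_apply i) continuous_const

lemma isCompact_maximalCell (K : PreAbstractSimplicialComplex V) (v : V) :
    IsCompact (maximalCell K v) :=
  (isCompact_polyhedron K).inter_right <| isClosed_iInter fun j =>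
    isClosed_le (continuous_apply j) (continuous_apply v)

lemma exists_pos_of_mem_stdSimplex (h : t ∈ stdSimplex ℝ V) : ∃ i, 0 < t i := by
  obtain ⟨i, -, hi⟩ := exists_lt_of_sum_lt (s := univ) (f := 0) (g := t) (by simp [h.2])
  exact ⟨i, hi⟩

lemma mem_stdSimplex_of_mem_polyhedron (h : t ∈ polyhedron K) : t ∈ stdSimplex ℝ V := by
  obtain ⟨σ, -, hσ⟩ := mem_polyhedron.1 h
  exact hσ.1

lemma iUnion_maximalCell (K : PreAbstractSimplicialComplex V) :
    ⋃ v, maximalCell K v = polyhedron K := by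
  refine (Set.iUnion_subset fun v => Set.inter_subset_left).antisymm fun t ht => ?_
  obtain ⟨i, -⟩ := exists_pos_of_mem_stdSimplex (mem_stdSimplex_of_mem_polyhedron ht)
  have : Nonempty V := ⟨i⟩
  obtain ⟨v, hv⟩ := Finite.exists_max t
  exact Set.mem_iUnion.2 ⟨v, mem_maximalCell.2 ⟨ht, hv⟩⟩

lemma barycenter_mem_closedSimplex (hT : T.Nonempty) (h : T ⊆ σ) :
    barycenter T ∈ closedSimplex σ := by
  refine mem_closedSimplex.2 ⟨⟨Set.indicator_nonneg fun _ _ => by positivity, ?_⟩,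
    fun i hi => barycenter_of_notMem fun hiT => hi (h hiT)⟩
  have hcard : (#T : ℝ) ≠ 0 := Nat.cast_ne_zero.2 hT.card_ne_zero
  simp [barycenter, sum_indicator_subset _ (subset_univ T), hcard]

lemma subset_of_mem_maximalCell (hT : ∀ v ∈ T, t ∈ maximalCell K v) (hσ : t ∈ closedSimplex σ) :
    T ⊆ σ := by
  intro v hv
  by_contra hvσ
  obtain ⟨j, hj⟩ := exists_pos_of_mem_stdSimplex hσ.1
  have hle := (mem_maximalCell.1 (hT v hv)).2 j
  rw [(mem_closedSimplex.1 hσ).2 v hvσ] at hle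
  exact hj.not_ge hle

lemma isGoodFamily_maximalCell (K : PreAbstractSimplicialComplex V) :
    IsGoodFamily (maximalCell K) univ := by
  refine ⟨fun v _ => isCompact_maximalCell K v, fun T _ hT ⟨t₀, ht₀⟩ m => ?_⟩
  have hbary : ∀ t ∈ ⋂ v ∈ T, maximalCell K v, ∀ σ, t ∈ closedSimplex σ →
      barycenter T ∈ closedSimplex σ := fun t ht σ hσ =>
    barycenter_mem_closedSimplex hT (subset_of_mem_maximalCell (Set.mem_iInter₂.1 ht) hσ)
  have hmax : ∀ v ∈ T, barycenter T ∈ ⋂ j, {t : V → ℝ | t j ≤ t v} := fun v hv =>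
    Set.mem_iInter.2 (barycenter_le_of_mem hv)
  obtain ⟨v₀, hv₀⟩ := hT
  obtain ⟨σ₀, hσ₀, htσ₀⟩ := mem_polyhedron.1 (Set.mem_iInter₂.1 ht₀ v₀ hv₀).1
  refine acyclic_of_starConvex (b := barycenter T) ?_ ?_ ?_ m
  · exact (isCompact_maximalCell K v₀).of_isClosed_subset
      (isClosed_biInter fun v _ => (isCompact_maximalCell K v).isClosed)
      (Set.biInter_subset_of_mem hv₀)
  · exact Set.mem_iInter₂.2 fun v hv =>
      ⟨mem_polyhedron.2 ⟨σ₀, hσ₀, hbary _ ht₀ _ htσ₀⟩, hmax v hv⟩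
  · intro t ht r s hr hs hrs
    obtain ⟨σ, hσ, htσ⟩ := mem_polyhedron.1 (Set.mem_iInter₂.1 ht v₀ hv₀).1
    refine Set.mem_iInter₂.2 fun v hv => ⟨mem_polyhedron.2 ⟨σ, hσ, ?_⟩, ?_⟩
    · exact convex_closedSimplex σ (hbary t ht σ htσ) htσ hr hs hrs
    · exact convex_iInter_setOf_apply_le v (hmax v hv) (Set.mem_iInter₂.1 ht v hv).2 hr hs hrs

lemma exists_mem_barycentricStar (ht : t ∈ polyhedron K) : ∃ σ ∈ K, t ∈ barycentricStar σ := by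
  classical
  obtain ⟨τ, hτ, htτ⟩ := mem_polyhedron.1 ht
  obtain ⟨i, hi⟩ := exists_pos_of_mem_stdSimplex htτ.1
  refine ⟨univ.filter (0 < t ·),
    K.isRelLowerSet_faces.mem_of_le hτ (fun j hj => ?_) ⟨i, by simpa⟩, ?_⟩
  · by_contra hjτ
    simp [(mem_closedSimplex.1 htτ).2 j hjτ] at hj
  · intro j hj
    simp only [mem_filter_univ, not_lt] at hj ⊢
    exact ⟨hj, fun k hk => hk.trans_lt hj⟩

end Polyhedron

section Nerve

variable {V K Y : Type*} {W : V → Set Y}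

/-- The nerve of a family of sets. -/
def nerve (W : V → Set Y) : PreAbstractSimplicialComplex V where
  faces := {σ | σ.Nonempty ∧ (⋂ i ∈ σ, W i).Nonempty}
  isRelLowerSet_faces _ hσ := ⟨hσ.1, fun _ hτσ hτ =>
    ⟨hτ, hσ.2.mono (Set.biInter_subset_biInter_left hτσ)⟩⟩

lemma mem_nerve {σ : Finset V} : σ ∈ nerve W ↔ σ.Nonempty ∧ (⋂ i ∈ σ, W i).Nonempty :=
  Iff.rfl

variable [Fintype V] [TopologicalSpace K] [TopologicalSpace Y]

lemma exists_map_polyhedron_nerve [NormalSpace K] (hopen : ∀ i, IsOpen (W i))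
    (hcover : ⋃ i, W i = Set.univ) (f : C(K, Y)) :
    ∃ p : C(K, polyhedron (nerve W)), ∀ x i, 0 < (p x : V → ℝ) i → f x ∈ W i := by
  classical
  obtain ⟨ρ, hρ⟩ := PartitionOfUnity.exists_isSubordinate_of_locallyFinite isClosed_univ
    (fun i => f ⁻¹' W i) (fun i => (hopen i).preimage f.continuous) (locallyFinite_of_finite _)
    (by rw [← Set.preimage_iUnion, hcover, Set.preimage_univ])
  have hpos : ∀ x i, 0 < ρ i x → f x ∈ W i := fun x i hi =>
    hρ i (subset_tsupport _ hi.ne')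
  have hsimplex (x : K) : (ρ · x) ∈ stdSimplex ℝ V :=
    ⟨(ρ.nonneg · x), (finsum_eq_sum_of_fintype _).symm.trans (ρ.sum_eq_one (Set.mem_univ x))⟩
  have hmem (x : K) : (ρ · x) ∈ polyhedron (nerve W) := by
    obtain ⟨i, hi⟩ := exists_pos_of_mem_stdSimplex (hsimplex x)
    refine mem_polyhedron.2 ⟨univ.filter (0 < ρ · x), mem_nerve.2 ⟨⟨i, by simpa⟩, f x, ?_⟩,
      mem_closedSimplex.2 ⟨hsimplex x, fun i hi => ?_⟩⟩
    · simpa using hpos x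
    · exact le_antisymm (by simpa using hi) (ρ.nonneg i x)
  exact ⟨⟨fun x => ⟨_, hmem x⟩, by fun_prop⟩, hpos⟩

theorem exists_comp_polyhedron_nerve_homotopic [NormalSpace K] [Nonempty Y]
    (hopen : ∀ i, IsOpen (W i)) (hcover : ⋃ i, W i = Set.univ)
    (hcontr : ∀ σ ∈ nerve W, ContractibleSpace ↥(⋂ i ∈ σ, W i)) (f : C(K, Y)) :
    ∃ (p : C(K, polyhedron (nerve W))) (q : C(polyhedron (nerve W), Y)),
      (q.comp p).Homotopic f := by
  obtain ⟨p, hp⟩ := exists_map_polyhedron_nerve hopen hcover f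
  refine ⟨p, exists_comp_homotopic (ι := {σ // σ ∈ nerve W})
    (U := fun σ => (↑) ⁻¹' barycentricStar (σ : Finset V))
    (A := fun σ => ⋂ i ∈ (σ : Finset V), W i)
    (fun σ => (isOpen_barycentricStar σ.1).preimage continuous_subtype_val) ?_
    (fun σ τ t => subset_or_subset_of_mem_barycentricStar)
    (fun σ => isOpen_biInter_finset fun i _ => hopen i)
    (fun σ τ h => Set.biInter_subset_biInter_left h) (fun σ => hcontr σ σ.2) p f
    fun x σ hx => Set.mem_iInter₂.2 fun i hi => hp x i (hx _ hi).1⟩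
  refine Set.eq_univ_of_forall fun t => Set.mem_iUnion.2 ?_
  obtain ⟨σ, hσ, ht⟩ := exists_mem_barycentricStar t.2
  exact ⟨⟨σ, hσ⟩, ht⟩

lemma contractibleSpace_of_mem_nerve {U : Finset (Set Y)} (hU : IsGoodCover U) {σ : Finset U}
    (hσ : σ ∈ nerve fun s : U => (s : Set Y)) : ContractibleSpace ↥(⋂ s ∈ σ, (s : Set Y)) := by
  classical
  have hinter : ⋂ s ∈ σ, (s : Set Y) = ⋂₀ (σ.image Subtype.val : Finset (Set Y)) := by
    simp
  obtain ⟨hne, hσ⟩ := mem_nerve.1 hσ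
  rw [hinter] at hσ ⊢
  exact hU.2.2 _ (image_subset_iff.2 fun s _ => s.2) (hne.image _) hσ

theorem le_card_of_isGoodCover {X : Type*} [MetricSpace X] {A : Set X} {U : Finset (Set Y)}
    (hU : IsGoodCover U) (hA : IsCompact A) (hAne : A.Nonempty) (f : C(A, Y)) (g : C(Y, A))
    (hgf : (g.comp f).Homotopic (.id A)) {d : ℕ → ℕ} {φ : ℕ → Cochain X} {b : ℕ}
    (hd : ∀ i ≤ b + 1, 0 < d i) (hd01 : d 1 ≠ d 0) (hφ : ∀ i ≤ b + 1, φ i ∈ cocycles A (d i + 1))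
    (hne : cupProd d φ (b + 1) ∉ coboundaries A (∑ i ∈ range (b + 2), d i + 1)) :
    d 0 + 3 + ∑ c ∈ range (b + 1), (∑ i ∈ range (c + 2), d i + 1) ≤ #U := by
  have : CompactSpace A := isCompact_iff_compactSpace.1 hA
  have : Nonempty Y := hAne.to_subtype.map f
  let W (s : U) : Set Y := s
  have hcover : ⋃ s, W s = Set.univ := by rw [← hU.2.1, Set.sUnion_eq_iUnion]; rfl
  obtain ⟨p, q, hqp⟩ := exists_comp_polyhedron_nerve_homotopic (fun s : U => hU.1 s s.2) hcover
    (fun _ => contractibleSpace_of_mem_nerve hU) f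
  obtain ⟨F, hF⟩ := exists_injectiveOnCohomology (isCompact_polyhedron (nerve W)) hA hAne p
    (g.comp q) (((ContinuousMap.Homotopic.refl g).comp hqp).trans hgf)
  have hunion : ⋃ s ∈ (univ : Finset U), maximalCell (nerve W) s = polyhedron (nerve W) := by
    simp only [mem_univ, Set.iUnion_true, iUnion_maximalCell]
  have hcard := (isGoodFamily_maximalCell (nerve W)).le_card_of_cupProd hd hd01
    (hunion ▸ fun i hi => hF.contiguous.pullback_mem_cocycles (hφ i hi))
    (hunion ▸ hF.cupProd_notMem_coboundaries hφ hne)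
  simpa using hcard

end Nerve

end CoveringType

/-- The covering type of the unitary group `U(n)` is at least `(4n³+3n²+5n+12)/6`:
every good cover of any space homotopy equivalent to `U(n)` has at least that many
members.  (The numerator is divisible by 6, so `/` is exact.) -/
theorem stmt9 (n : ℕ) (hn : 2 ≤ n) (Y : Type*) [TopologicalSpace Y]
    (h : Nonempty (ContinuousMap.HomotopyEquiv ↥(Matrix.unitaryGroup (Fin n) ℂ) Y))
    (U : Finset (Set Y)) (hU : IsGoodCover U) :
    (4 * n ^ 3 + 3 * n ^ 2 + 5 * n + 12) / 6 ≤ U.card := by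
  obtain ⟨k, rfl⟩ := Nat.exists_eq_add_of_le' hn
  obtain ⟨e⟩ := h
  obtain ⟨φ, hφ, hne⟩ := CoveringType.exists_cupProd_notMem_coboundaries_unitaryGroup (k + 1)
  let _ : NormedAddCommGroup (Matrix (Fin (k + 2)) (Fin (k + 2)) ℂ) := Matrix.normedAddCommGroup
  rw [CoveringType.coveringTypeBound_eq]
  exact CoveringType.le_card_of_isGoodCover hU CoveringType.isCompact_unitaryGroup
    ⟨1, one_mem _⟩ e.toFun e.invFun e.left_inv (fun i _ => by omega) (by omega) hφ hne
end
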